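/- arXiv:0910.1897 — 3 statements merged into one kernel-verified Lean document; each statement's English description precedes it below -/
import Mathlib

section
/- Let n ≥ 2 and let ℱ be a foliation of dimension one on a connected n-manifold M. Then the set of leaves of ℱ has cardinality exactly 𝔠 = 2^ℵ₀, the cardinality of the continuum. -/
noncomputable section

open Set Topology Filter

universe u

/-! ### The long ray and the long line -/

/-- The first uncountable ordinal `ω₁`, viewed as the linearly ordered set of all
countable ordinals. -/
def Omega1 : Type 1 := {o : Ordinal.{0} // o < (Cardinal.aleph 1).ord}

instance : LinearOrder Omega1 :=
  inferInstanceAs (LinearOrder {o : Ordinal.{0} // o < (Cardinal.aleph 1).ord})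

/-- `ω₁` carries the order topology. -/
instance : TopologicalSpace Omega1 := Preorder.topology Omega1

instance : OrderTopology Omega1 := ⟨rfl⟩

/-- The underlying countable ordinal of an element of `ω₁`. -/
def Omega1.toOrdinal : Omega1 → Ordinal.{0} := Subtype.val

/-- The closed long ray `𝕃≥0`: the set `ω₁ × [0,1)` with the lexicographic order and the
order topology. -/
def ClosedLongRay : Type 1 := Omega1 ×ₗ (Set.Ico (0:ℝ) 1)

instance : LinearOrder ClosedLongRay :=
  inferInstanceAs (LinearOrder (Omega1 ×ₗ (Set.Ico (0:ℝ) 1)))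

instance : TopologicalSpace ClosedLongRay := Preorder.topology ClosedLongRay

instance : OrderTopology ClosedLongRay := ⟨rfl⟩

/-- The long ray `𝕃₊`: the closed long ray with its least element removed, with the
subspace topology (an element is non-minimal iff something is below it). -/
def LongRay : Type 1 := {x : ClosedLongRay // ∃ y, y < x}

instance : LinearOrder LongRay :=
  inferInstanceAs (LinearOrder {x : ClosedLongRay // ∃ y, y < x})

instance : TopologicalSpace LongRay :=
  inferInstanceAs (TopologicalSpace {x : ClosedLongRay // ∃ y, y < x})

/-- The inclusion of the long ray into the closed long ray. -/
def LongRay.toCLR : LongRay → ClosedLongRay := Subtype.val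

/-- The long line `𝕃`: an order-reversed copy of `𝕃₊` placed below the closed long ray
`𝕃≥0`, with the order topology. -/
def LongLine : Type 1 := (OrderDual LongRay) ⊕ₗ ClosedLongRay

instance : LinearOrder LongLine :=
  inferInstanceAs (LinearOrder ((OrderDual LongRay) ⊕ₗ ClosedLongRay))

instance : TopologicalSpace LongLine := Preorder.topology LongLine

instance : OrderTopology LongLine := ⟨rfl⟩

/-- The identification of `𝕃₊` with the set of positive elements of `𝕃`. -/
def LongRay.inL (a : LongRay) : LongLine := toLex (Sum.inr a.toCLR)

/-- The natural order-reversing involution `x ↦ -x` of the long line, exchanging the two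
copies of `𝕃₊` and fixing the least element `0` of `𝕃≥0`. -/
noncomputable def LongLine.neg (x : LongLine) : LongLine :=
  match ofLex x with
  | Sum.inl a => toLex (Sum.inr (OrderDual.ofDual a).toCLR)
  | Sum.inr b =>
      @dite _ (∃ y, y < b) (Classical.dec _)
        (fun h => toLex (Sum.inl (OrderDual.toDual (⟨b, h⟩ : LongRay))))
        (fun _ => x)

/-- A subset of the long ray is a *club* if it is closed (in the topology of `𝕃₊`) and
unbounded (i.e. cofinal). -/
def ClubInLongRay (C : Set LongRay) : Prop :=
  IsClosed C ∧ ∀ β : LongRay, ∃ α ∈ C, β ≤ α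

/-- A topological space `X` is *squat* if every continuous map `𝕃₊ → X` is eventually
constant. -/
def Squat (X : Type*) [TopologicalSpace X] : Prop :=
  ∀ f : LongRay → X, Continuous f → ∃ (β : LongRay) (x : X), ∀ α, β ≤ α → f α = x

/-! ### Manifolds and foliations -/

/-- A (topological) `n`-manifold: a nonempty Hausdorff space in which every point has an
open neighbourhood homeomorphic to `ℝⁿ`. -/
def IsTopManifold (M : Type u) [TopologicalSpace M] (n : ℕ) : Prop :=
  Nonempty M ∧ T2Space M ∧
    ∀ x : M, ∃ U : Set M, x ∈ U ∧ IsOpen U ∧ Nonempty (U ≃ₜ (Fin n → ℝ))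

/-- A foliation of dimension `p` and codimension `q` on a space `M`: a family of charts
`φᵢ : Uᵢ ≃ₜ ℝᵖ × ℝ^q` on open sets covering `M` such that all coordinate transformations
have the form `(x, y) ↦ (g (x, y), h y)`, i.e. the last `q` coordinates of the image
depend only on the last `q` coordinates of the argument. -/
structure Foliation (M : Type u) [TopologicalSpace M] (p q : ℕ) where
  /-- index type of the atlas -/
  ι : Type u
  /-- chart domains -/
  U : ι → Set M
  /-- the charts -/
  chart : (i : ι) → ((U i) ≃ₜ ((Fin p → ℝ) × (Fin q → ℝ)))
  isOpen : ∀ i, IsOpen (U i)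
  covers : ∀ x : M, ∃ i, x ∈ U i
  compat : ∀ i j (x y : M) (hxi : x ∈ U i) (hxj : x ∈ U j) (hyi : y ∈ U i) (hyj : y ∈ U j),
    (chart i ⟨x, hxi⟩).2 = (chart i ⟨y, hyi⟩).2 → (chart j ⟨x, hxj⟩).2 = (chart j ⟨y, hyj⟩).2

namespace Foliation

variable {M : Type u} [TopologicalSpace M] {p q : ℕ}

/-- The set `φᵢ⁻¹ (ℝᵖ × {y})` in the chart domain `Uᵢ`. -/
def plaqueFibre (F : Foliation M p q) (i : F.ι) (y : Fin q → ℝ) : Set M :=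
  {w : M | ∃ hw : w ∈ F.U i, (F.chart i ⟨w, hw⟩).2 = y}

/-- A *plaque* of the foliation: a connected component of a set of the form
`φᵢ⁻¹ (ℝᵖ × {y})`. -/
def IsPlaque (F : Foliation M p q) (P : Set M) : Prop :=
  ∃ (i : F.ι) (y : Fin q → ℝ) (z : M), z ∈ F.plaqueFibre i y ∧
    P = connectedComponentIn (F.plaqueFibre i y) z

/-- Two points lie in a common plaque. -/
def samePlaque (F : Foliation M p q) (x y : M) : Prop :=
  ∃ P, F.IsPlaque P ∧ x ∈ P ∧ y ∈ P

/-- The leaf relation: the smallest equivalence relation relating any two points that lie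
in a common plaque. -/
def leafRel (F : Foliation M p q) : M → M → Prop := Relation.EqvGen F.samePlaque

/-- The *leaves* of the foliation: equivalence classes of the leaf relation. -/
def IsLeaf (F : Foliation M p q) (L : Set M) : Prop :=
  ∃ x : M, L = {y | F.leafRel x y}

/-- The *leaf topology* on a leaf (or any subset) `L`: the topology generated by the
plaques contained in `L`. -/
def leafTopology (F : Foliation M p q) (L : Set M) : TopologicalSpace L :=
  TopologicalSpace.generateFrom
    {s : Set L | ∃ P, F.IsPlaque P ∧ P ⊆ L ∧ s = Subtype.val ⁻¹' P}

/-- A leaf is *long* if it is not metrisable in its leaf topology. -/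
def IsLongLeaf (F : Foliation M p q) (L : Set M) : Prop :=
  F.IsLeaf L ∧ ¬ @TopologicalSpace.MetrizableSpace L (F.leafTopology L)

/-- A subset of `M` is *saturated* by the foliation if it is a union of leaves. -/
def Saturated (F : Foliation M p q) (S : Set M) : Prop :=
  ∀ x ∈ S, ∀ y, F.leafRel x y → y ∈ S

end Foliation


namespace FolAux

/-! ### Cardinality of connected manifolds -/

theorem firstCountable_of_charts {M : Type} [TopologicalSpace M]
    {Y : Type} [TopologicalSpace Y] [FirstCountableTopology Y]
    (h : ∀ x : M, ∃ e : Y → M, IsOpenEmbedding e ∧ x ∈ range e) :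
    FirstCountableTopology M := by
  refine ⟨fun x => ?_⟩
  obtain ⟨e, he, y, rfl⟩ := h x
  rw [← he.map_nhds_eq]
  infer_instance

/-- arities of the operations -/
def Arity (Y : Type) : Option (Option Y) → Type
  | none => ℕ
  | some none => Empty
  | some (some _) => Unit

open Cardinal in
theorem card_le_continuum {M : Type} [TopologicalSpace M] [T2Space M] [ConnectedSpace M]
    {Y : Type} [TopologicalSpace Y] [FirstCountableTopology Y] (hY : #Y ≤ 𝔠)
    (h : ∀ x : M, ∃ e : Y → M, IsOpenEmbedding e ∧ x ∈ range e) :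
    #M ≤ 𝔠 := by
  classical
  have := firstCountable_of_charts h
  obtain ⟨x0⟩ : Nonempty M := inferInstance
  choose e he hx using h
  let lm : (ℕ → M) → M := fun g =>
    if hg : ∃ l, Tendsto g atTop (𝓝 l) then hg.choose else x0
  have hlm : ∀ g x, Tendsto g atTop (𝓝 x) → lm g = x := by
    intro g x hgx
    have hg : ∃ l, Tendsto g atTop (𝓝 l) := ⟨x, hgx⟩
    have h1 : lm g = hg.choose := dif_pos hg
    rw [h1]
    exact tendsto_nhds_unique hg.choose_spec hgx
  let ev : (Σ a, Arity Y a → M) → M := fun p =>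
    match p with
    | ⟨none, g⟩ => lm g
    | ⟨some none, _⟩ => x0
    | ⟨some (some y), g⟩ => e (g ()) y
  let E : WType (Arity Y) → M := WType.elim M ev
  have hE : ∀ a g, E (WType.mk a g) = ev ⟨a, fun b => E (g b)⟩ := fun a g => rfl
  have hone : (1 : Cardinal) ≤ 𝔠 := one_le_aleph0.trans aleph0_le_continuum
  have hcard : #(WType (Arity Y)) ≤ 𝔠 := by
    apply WType.cardinalMk_le_of_le
    have : ∀ a : Option (Option Y), 𝔠 ^ #(Arity Y a) ≤ 𝔠 := by
      intro a
      match a with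
      | none => simp [Arity]
      | some none => simpa [Arity] using hone
      | some (some y) => simp [Arity]
    calc _ ≤ Cardinal.sum fun _ : Option (Option Y) => 𝔠 := Cardinal.sum_le_sum _ _ this
      _ = #(Option (Option Y)) * 𝔠 := by simp
      _ ≤ 𝔠 * 𝔠 := by
        gcongr
        rw [mk_option, mk_option]
        calc #Y + 1 + 1 ≤ 𝔠 + 𝔠 + 𝔠 := by gcongr
          _ = 𝔠 := by simp
      _ = 𝔠 := by simp
  have hopen : IsOpen (range E) := by
    rw [isOpen_iff_mem_nhds]
    rintro _ ⟨w, rfl⟩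
    filter_upwards [(he (E w)).isOpen_range.mem_nhds (hx (E w))]
    rintro _ ⟨y, rfl⟩
    exact ⟨WType.mk (some (some y)) (fun _ => w), by rw [hE]⟩
  have hclosed : IsClosed (range E) := by
    rw [← closure_eq_iff_isClosed]
    refine subset_antisymm ?_ subset_closure
    intro x hx'
    rw [mem_closure_iff_seq_limit] at hx'
    obtain ⟨s, hs, hlim⟩ := hx'
    choose w hw using hs
    have hws : (fun b => E (w b)) = s := funext hw
    exact ⟨WType.mk (β := Arity Y) none w, (hlm _ _ (hws ▸ hlim) : lm (fun b => E (w b)) = x)⟩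
  have huniv : range E = Set.univ :=
    IsClopen.eq_univ ⟨hclosed, hopen⟩ ⟨_, WType.mk (some none) (fun b => nomatch b), rfl⟩
  exact (mk_le_of_surjective (range_eq_univ.1 huniv)).trans hcard
end FolAux

namespace FolAux

/-! ### One-dimensional manifolds -/

section OneDim

set_option linter.unusedSectionVars false

/-- `S` is open, connected, and linearly ordered by `r` with open rays. -/
structure Good {X : Type*} [TopologicalSpace X] (S : Set X) (r : X → X → Prop) : Prop where
  op : IsOpen S
  conn : IsPreconnected S
  supp : ∀ x y, r x y → x ∈ S ∧ y ∈ S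
  irrefl : ∀ x, ¬ r x x
  trans : ∀ x y z, r x y → r y z → r x z
  tri : ∀ x ∈ S, ∀ y ∈ S, r x y ∨ x = y ∨ r y x
  lo : ∀ x, IsOpen {y | r y x}
  hi : ∀ x, IsOpen {y | r x y}

variable {X : Type*} [TopologicalSpace X] {S : Set X} {r : X → X → Prop}

theorem Good.flip (h : Good S r) : Good S (fun x y => r y x) where
  op := h.op
  conn := h.conn
  supp x y hxy := (h.supp y x hxy).symm
  irrefl := h.irrefl
  trans x y z hxy hyz := h.trans _ _ _ hyz hxy
  tri x hx y hy := by
    rcases h.tri x hx y hy with h | h | h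
    · exact Or.inr (Or.inr h)
    · exact Or.inr (Or.inl h)
    · exact Or.inl h
  lo := h.hi
  hi := h.lo

theorem Good.asymm (h : Good S r) {x y : X} (hxy : r x y) (hyx : r y x) : False :=
  h.irrefl _ (h.trans _ _ _ hxy hyx)

theorem Good.side (h : Good S r) {K : Set X} (hK : IsPreconnected K) (hKS : K ⊆ S) {x : X}
    (hx : x ∈ S) (hxK : x ∉ K) : (∀ y ∈ K, r x y) ∨ (∀ y ∈ K, r y x) := by
  have := IsPreconnected.subset_or_subset (s := K) (h.hi x) (h.lo x) ?_ ?_ hK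
  · exact this
  · rw [Set.disjoint_left]
    intro y hy hy2
    exact h.asymm hy hy2
  · intro y hy
    rcases h.tri x hx y (hKS hy) with h1 | h1 | h1
    · exact Or.inl h1
    · exact absurd (h1 ▸ hy) hxK
    · exact Or.inr h1

theorem Good.convex (h : Good S r) {N : Set X} (hN : IsPreconnected N) (hNS : N ⊆ S) {a b z : X}
    (ha : a ∈ N) (hb : b ∈ N) (haz : r a z) (hzb : r z b) : z ∈ N := by
  by_contra hz
  rcases h.side hN hNS (h.supp _ _ haz).2 hz with h1 | h1
  · exact h.asymm haz (h1 a ha)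
  · exact h.asymm hzb (h1 b hb)

theorem Good.sep (h : Good S r) {N K : Set X} (hN : IsPreconnected N) (hNS : N ⊆ S)
    (hK : IsPreconnected K) (hKS : K ⊆ S) (hNK : Disjoint N K) :
    (∀ x ∈ N, ∀ y ∈ K, r x y) ∨ (∀ x ∈ N, ∀ y ∈ K, r y x) := by
  rw [Set.disjoint_left] at hNK
  have h1 : ∀ x ∈ N, (∀ y ∈ K, r x y) ∨ (∀ y ∈ K, r y x) := fun x hx =>
    h.side hK hKS (hNS hx) (hNK hx)
  have h2 : ∀ y ∈ K, (∀ x ∈ N, r y x) ∨ (∀ x ∈ N, r x y) := fun y hy =>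
    h.side hN hNS (hKS hy) (fun hx => hNK hx hy)
  rcases N.eq_empty_or_nonempty with rfl | ⟨x0, hx0⟩
  · left; simp
  rcases K.eq_empty_or_nonempty with rfl | ⟨y0, hy0⟩
  · left; simp
  rcases h1 x0 hx0 with h3 | h3
  · left
    intro x hx y hy
    rcases h2 y hy with h4 | h4
    · exact (h.asymm (h3 y hy) (h4 x0 hx0)).elim
    · exact h4 x hx
  · right
    intro x hx y hy
    rcases h2 y hy with h4 | h4
    · exact h4 x hx
    · exact (h.asymm (h3 y hy) (h4 x0 hx0)).elim

/-- a one-dimensional manifold, by charts -/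
def OneMan (X : Type*) [TopologicalSpace X] : Prop :=
  ∀ x : X, ∃ e : ℝ → X, IsOpenEmbedding e ∧ e 0 = x

theorem chart_small {e : ℝ → X} (he : IsOpenEmbedding e) {O : Set X} (hO : O ∈ 𝓝 (e 0)) :
    ∃ ε > 0, ∀ t ∈ Ioo (-ε) ε, e t ∈ O := by
  have h1 : e ⁻¹' O ∈ 𝓝 (0 : ℝ) := he.continuous.continuousAt hO
  rw [Metric.mem_nhds_iff] at h1
  obtain ⟨ε, hε, h2⟩ := h1
  refine ⟨ε, hε, fun t ht => h2 ?_⟩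
  rw [Real.ball_eq_Ioo]
  simpa using ht

theorem OneMan.small (hX : OneMan X) {x : X} {O : Set X} (hO : O ∈ 𝓝 x) :
    ∃ N, IsOpen N ∧ IsPreconnected N ∧ x ∈ N ∧ N ⊆ O := by
  obtain ⟨e, he, rfl⟩ := hX x
  obtain ⟨ε, hε, h⟩ := chart_small he hO
  refine ⟨e '' Ioo (-ε) ε, he.isOpenMap _ isOpen_Ioo,
    isPreconnected_Ioo.image _ he.continuous.continuousOn, ⟨0, by simp [hε], rfl⟩, ?_⟩
  rintro _ ⟨t, ht, rfl⟩
  exact h t ht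

variable [T2Space X]

theorem trap {e : ℝ → X} (he : IsOpenEmbedding e) (hS : IsPreconnected S) {a b c : ℝ}
    (hac : a < c) (hcb : c < b) (ha : e a ∉ S) (hb : e b ∉ S) (hc : e c ∈ S) :
    S ⊆ e '' Ioo a b := by
  have hcl : IsClosed (e '' Icc a b) := (isCompact_Icc.image he.continuous).isClosed
  refine IsPreconnected.subset_left_of_subset_union (he.isOpenMap _ isOpen_Ioo)
    hcl.isOpen_compl ?_ ?_ ⟨e c, hc, c, ⟨hac, hcb⟩, rfl⟩ hS
  · rw [Set.disjoint_left]
    rintro _ ⟨t, ht, rfl⟩ h2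
    exact h2 ⟨t, Ioo_subset_Icc_self ht, rfl⟩
  · intro x hx
    by_cases h : x ∈ e '' Icc a b
    · left
      obtain ⟨t, ht, rfl⟩ := h
      refine ⟨t, ⟨lt_of_le_of_ne ht.1 ?_, lt_of_le_of_ne ht.2 ?_⟩, rfl⟩
      · rintro rfl; exact ha hx
      · rintro rfl; exact hb hx
    · exact Or.inr h

theorem half {e : ℝ → X} (he : IsOpenEmbedding e) (hS : IsPreconnected S)
    (hcl : e 0 ∈ closure S) :
    ∃ δ > 0, (∀ t ∈ Ioo 0 δ, e t ∈ S) ∨ (∀ t ∈ Ioo 0 δ, e t ∉ S) := by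
  by_contra! hcon
  obtain ⟨⟨a, ha, haS⟩, ⟨t, ht, htS⟩⟩ := hcon 1 one_pos
  obtain ⟨⟨b, hb, hbS⟩, ⟨c, hc, hcS⟩⟩ := hcon a ha.1
  obtain ⟨⟨d, hd, hdS⟩, _⟩ := hcon c hc.1
  have h1 := trap he hS hd.2 hc.2 hdS haS hcS
  have hclosed : IsClosed (e '' Icc d a) := (isCompact_Icc.image he.continuous).isClosed
  have h2 : closure S ⊆ e '' Icc d a :=
    closure_minimal (h1.trans (image_mono Ioo_subset_Icc_self)) hclosed
  obtain ⟨s, hs, hs0⟩ := h2 hcl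
  have := he.injective hs0
  subst this
  exact absurd hs.1 (not_le.2 hd.1)

/-- `e` goes to the top end of `(S, r)` at `0+`. -/
def Top (S : Set X) (r : X → X → Prop) (e : ℝ → X) : Prop :=
  ∀ x ∈ S, ∃ ε > 0, ∀ t ∈ Ioo 0 ε, r x (e t)

theorem ends (hX : OneMan X) (h : Good S r) {e : ℝ → X} (he : IsOpenEmbedding e)
    (he0 : e 0 ∉ S) {δ : ℝ} (hδ : 0 < δ) (heS : ∀ t ∈ Ioo 0 δ, e t ∈ S) :
    Top S r e ∨ Top S (fun x y => r y x) e := by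
  set C : Set X := {x | x ∈ S ∧ ∃ ε > 0, ∀ t ∈ Ioo 0 ε, r x (e t)} with hC
  set D : Set X := {x | x ∈ S ∧ ∃ ε > 0, ∀ t ∈ Ioo 0 ε, r (e t) x} with hD
  have hCD : Disjoint C D := by
    rw [Set.disjoint_left]
    rintro x ⟨_, ε, hε, h1⟩ ⟨_, ε', hε', h2⟩
    have hm : 0 < min ε ε' := lt_min hε hε'
    have a1 : min ε ε' / 2 ∈ Ioo 0 ε := ⟨by linarith, by linarith [min_le_left ε ε']⟩
    have a2 : min ε ε' / 2 ∈ Ioo 0 ε' := ⟨by linarith, by linarith [min_le_right ε ε']⟩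
    exact h.asymm (h1 _ a1) (h2 _ a2)
  have key : ∀ x ∈ S, ∃ N, IsOpen N ∧ x ∈ N ∧ (N ⊆ C ∨ N ⊆ D) := by
    intro x hx
    have hne : x ≠ e 0 := fun hh => he0 (hh ▸ hx)
    obtain ⟨O, P, hO, hP, hxO, hpP, hOP⟩ := t2_separation hne
    obtain ⟨N, hN, hNc, hxN, hNO⟩ := hX.small (Filter.inter_mem (hO.mem_nhds hxO) (h.op.mem_nhds hx))
    obtain ⟨ε, hε, hεP⟩ := chart_small he (hP.mem_nhds hpP)
    have hm : 0 < min ε δ := lt_min hε hδ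
    set K := e '' Ioo 0 (min ε δ) with hK
    have hKc : IsPreconnected K := isPreconnected_Ioo.image _ he.continuous.continuousOn
    have hKS : K ⊆ S := by
      rintro _ ⟨t, ht, rfl⟩
      exact heS t ⟨ht.1, ht.2.trans_le (min_le_right _ _)⟩
    have hKP : K ⊆ P := by
      rintro _ ⟨t, ht, rfl⟩
      exact hεP t ⟨by linarith [ht.1], ht.2.trans_le (min_le_left _ _)⟩
    have hNS : N ⊆ S := fun y hy => (hNO hy).2
    have hNK : Disjoint N K := hOP.mono (fun y hy => (hNO hy).1) hKP
    refine ⟨N, hN, hxN, ?_⟩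
    rcases h.sep hNc hNS hKc hKS hNK with h1 | h1
    · left
      exact fun y hy => ⟨hNS hy, _, hm, fun t ht => h1 y hy _ ⟨t, ht, rfl⟩⟩
    · right
      exact fun y hy => ⟨hNS hy, _, hm, fun t ht => h1 y hy _ ⟨t, ht, rfl⟩⟩
  have hSCD : S ⊆ C ∪ D := by
    intro x hx
    obtain ⟨N, _, hxN, h1 | h1⟩ := key x hx
    · exact Or.inl (h1 hxN)
    · exact Or.inr (h1 hxN)
  have hCo : IsOpen C := by
    rw [isOpen_iff_mem_nhds]
    intro x hx
    obtain ⟨N, hN, hxN, h1 | h1⟩ := key x hx.1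
    · exact Filter.mem_of_superset (hN.mem_nhds hxN) h1
    · exact (Set.disjoint_left.1 hCD hx (h1 hxN)).elim
  have hDo : IsOpen D := by
    rw [isOpen_iff_mem_nhds]
    intro x hx
    obtain ⟨N, hN, hxN, h1 | h1⟩ := key x hx.1
    · exact (Set.disjoint_left.1 hCD (h1 hxN) hx).elim
    · exact Filter.mem_of_superset (hN.mem_nhds hxN) h1
  rcases IsPreconnected.subset_or_subset hCo hDo hCD hSCD h.conn with h1 | h1
  · exact Or.inl fun x hx => (h1 hx).2
  · exact Or.inr fun x hx => (h1 hx).2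

theorem top_unique (h : Good S r) {e e' : ℝ → X} (he : IsOpenEmbedding e)
    (he' : IsOpenEmbedding e') {δ δ' : ℝ} (hδ : 0 < δ) (hδ' : 0 < δ')
    (heS : ∀ t ∈ Ioo 0 δ, e t ∈ S) (heS' : ∀ t ∈ Ioo 0 δ', e' t ∈ S)
    (ht : Top S r e) (ht' : Top S r e') : e 0 = e' 0 := by
  by_contra hne
  obtain ⟨O, P, hO, hP, hxO, hpP, hOP⟩ := t2_separation hne
  have aux : ∀ (f : ℝ → X) (η : ℝ) (Q : Set X), IsOpenEmbedding f → 0 < η → IsOpen Q → f 0 ∈ Q →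
      (∀ t ∈ Ioo 0 η, f t ∈ S) → Top S r f → ∃ K, K.Nonempty ∧ IsPreconnected K ∧ K ⊆ S ∧ K ⊆ Q ∧
        ∀ x ∈ S, ∃ k ∈ K, r x k := by
    intro f η Q hf hη hQ hfQ hfS hft
    obtain ⟨ε, hε, hεP⟩ := chart_small hf (hQ.mem_nhds hfQ)
    have hm : 0 < min ε η := lt_min hε hη
    refine ⟨f '' Ioo 0 (min ε η), (nonempty_Ioo.2 hm).image _,
      isPreconnected_Ioo.image _ hf.continuous.continuousOn, ?_, ?_, ?_⟩
    · rintro _ ⟨t, ht, rfl⟩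
      exact hfS t ⟨ht.1, ht.2.trans_le (min_le_right _ _)⟩
    · rintro _ ⟨t, ht, rfl⟩
      exact hεP t ⟨by linarith [ht.1], ht.2.trans_le (min_le_left _ _)⟩
    · intro x hx
      obtain ⟨ε', hε', h1⟩ := hft x hx
      have hm' : 0 < min ε' (min ε η) := lt_min hε' hm
      exact ⟨_, ⟨min ε' (min ε η) / 2, ⟨by linarith, by linarith [min_le_right ε' (min ε η)]⟩, rfl⟩,
        h1 _ ⟨by linarith, by linarith [min_le_left ε' (min ε η)]⟩⟩
  obtain ⟨K, ⟨k, hk⟩, hKc, hKS, hKO, hKt⟩ := aux e δ O he hδ hO hxO heS ht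
  obtain ⟨L, ⟨l, hl⟩, hLc, hLS, hLP, hLt⟩ := aux e' δ' P he' hδ' hP hpP heS' ht'
  rcases h.sep hKc hKS hLc hLS (hOP.mono hKO hLP) with h1 | h1
  · obtain ⟨k', hk', hr⟩ := hKt l (hLS hl)
    exact h.asymm (h1 k' hk' l hl) hr
  · obtain ⟨l', hl', hr⟩ := hLt k (hKS hk)
    exact h.asymm (h1 k hk l' hl') hr

theorem extend (h : Good S r) {e : ℝ → X} (he : IsOpenEmbedding e)
    (he0 : e 0 ∉ S) {δ : ℝ} (hδ : 0 < δ) (heS : ∀ t ∈ Ioo 0 δ, e t ∈ S)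
    (heN : ∀ t ∈ Ioo (-δ) 0, e t ∉ S) (ht : Top S r e) :
    ∃ S' r', Good S' r' ∧ S ⊆ S' ∧ (∀ x y, r x y → r' x y) ∧ e 0 ∈ S' := by
  have hQS : ∀ t ∈ Ioc (-δ) 0, e t ∉ S := by
    intro t ht
    rcases ht.2.lt_or_eq with h1 | h1
    · exact heN t ⟨ht.1, h1⟩
    · exact h1 ▸ he0
  set Q : Set X := e '' Ioc (-δ) 0 with hQ
  have hQS' : ∀ x ∈ S, x ∉ Q := by
    rintro _ hx ⟨t, ht, rfl⟩
    exact hQS t ht hx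
  have hI : ∀ t ∈ Ioo (-δ) δ, e t ∈ S ∪ Q := by
    intro t ht
    rcases le_or_gt t 0 with h1 | h1
    · exact Or.inr ⟨t, ⟨ht.1, h1⟩, rfl⟩
    · exact Or.inl (heS t ⟨h1, ht.2⟩)
  have hSQ : S ∪ Q = S ∪ e '' Ioo (-δ) δ := by
    apply subset_antisymm
    · rintro x (hx | ⟨t, ht, rfl⟩)
      · exact Or.inl hx
      · exact Or.inr ⟨t, ⟨ht.1, ht.2.trans_lt hδ⟩, rfl⟩
    · rintro x (hx | ⟨t, ht, rfl⟩)
      · exact Or.inl hx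
      · exact hI t ht
  let r' : X → X → Prop := fun x y => r x y ∨ (x ∈ S ∧ y ∈ Q) ∨
    ∃ s t, -δ < s ∧ s < t ∧ t ≤ 0 ∧ x = e t ∧ y = e s
  have hinj := he.injective
  refine ⟨S ∪ Q, r', ?_, subset_union_left, fun x y hxy => Or.inl hxy,
    Or.inr ⟨0, ⟨by linarith, le_rfl⟩, rfl⟩⟩
  have hxr : ∀ x ∈ S, ∀ y, r' y x ↔ r y x := by
    intro x hx y
    refine ⟨?_, Or.inl⟩
    rintro (h1 | ⟨_, h1⟩ | ⟨s, t, h1, h2, h3, h4, rfl⟩)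
    · exact h1
    · exact (hQS' x hx h1).elim
    · exact (hQS s ⟨h1, h2.le.trans h3⟩ hx).elim
  have hQr : ∀ t ∈ Ioc (-δ) 0, ∀ y, r' (e t) y ↔ ∃ s, -δ < s ∧ s < t ∧ y = e s := by
    intro t ht y
    constructor
    · rintro (h1 | ⟨h1, _⟩ | ⟨s, t', h1, h2, h3, h4, rfl⟩)
      · exact (hQS t ht (h.supp _ _ h1).1).elim
      · exact (hQS t ht h1).elim
      · have := hinj h4
        subst this
        exact ⟨s, h1, h2, rfl⟩
    · rintro ⟨s, h1, h2, rfl⟩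
      exact Or.inr (Or.inr ⟨s, t, h1, h2, ht.2, rfl, rfl⟩)
  have hrQ : ∀ t ∈ Ioc (-δ) 0, ∀ y, r' y (e t) ↔ y ∈ S ∨ ∃ s, t < s ∧ s ≤ 0 ∧ y = e s := by
    intro t ht y
    constructor
    · rintro (h1 | ⟨h1, _⟩ | ⟨t', s, h1, h2, h3, rfl, h4⟩)
      · exact (hQS t ht (h.supp _ _ h1).2).elim
      · exact Or.inl h1
      · have := hinj h4
        subst this
        exact Or.inr ⟨s, h2, h3, rfl⟩
    · rintro (h1 | ⟨s, h1, h2, rfl⟩)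
      · exact Or.inr (Or.inl ⟨h1, ⟨t, ht, rfl⟩⟩)
      · exact Or.inr (Or.inr ⟨t, s, ht.1, h1, h2, rfl, rfl⟩)
  have hSr : ∀ x ∈ S, ∀ y, r' x y ↔ r x y ∨ y ∈ Q := by
    intro x hx y
    constructor
    · rintro (h1 | ⟨_, h1⟩ | ⟨s, t, h1, h2, h3, rfl, h4⟩)
      · exact Or.inl h1
      · exact Or.inr h1
      · exact (hQS t ⟨h1.trans h2, h3⟩ hx).elim
    · rintro (h1 | h1)
      · exact Or.inl h1
      · exact Or.inr (Or.inl ⟨hx, h1⟩)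
  have hsupp : ∀ x y, r' x y → x ∈ S ∪ Q ∧ y ∈ S ∪ Q := by
    rintro x y (h1 | ⟨h1, h2⟩ | ⟨s, t, h1, h2, h3, rfl, rfl⟩)
    · exact ⟨Or.inl (h.supp _ _ h1).1, Or.inl (h.supp _ _ h1).2⟩
    · exact ⟨Or.inl h1, Or.inr h2⟩
    · exact ⟨Or.inr ⟨t, ⟨h1.trans h2, h3⟩, rfl⟩, Or.inr ⟨s, ⟨h1, h2.le.trans h3⟩, rfl⟩⟩
  refine ⟨?_, ?_, hsupp, ?_, ?_, ?_, ?_, ?_⟩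
  · rw [hSQ]
    exact h.op.union (he.isOpenMap _ isOpen_Ioo)
  · rw [hSQ]
    have hm : δ / 2 ∈ Ioo 0 δ := ⟨by linarith, by linarith⟩
    exact IsPreconnected.union (e (δ / 2)) (heS _ hm)
      ⟨δ / 2, ⟨by linarith, by linarith⟩, rfl⟩ h.conn
      (isPreconnected_Ioo.image _ he.continuous.continuousOn)
  · intro x hx
    rcases (hsupp x x hx).1 with h1 | ⟨t, ht, rfl⟩
    · exact h.irrefl x ((hxr x h1 x).1 hx)
    · obtain ⟨s, _, h2, h3⟩ := (hQr t ht _).1 hx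
      exact h2.ne (hinj h3).symm
  · intro x y z hxy hyz
    rcases (hsupp _ _ hyz).1 with h1 | ⟨t, ht, rfl⟩
    · have h2 := (hxr y h1 x).1 hxy
      have hx := (h.supp _ _ h2).1
      rw [hSr x hx]
      rcases (hSr y h1 z).1 hyz with h3 | h3
      · exact Or.inl (h.trans _ _ _ h2 h3)
      · exact Or.inr h3
    · obtain ⟨s, h2, h3, rfl⟩ := (hQr t ht _).1 hyz
      have hs : s ∈ Ioc (-δ) 0 := ⟨h2, h3.le.trans ht.2⟩
      rw [hrQ s hs]
      rcases (hrQ t ht _).1 hxy with h4 | ⟨u, h4, h5, rfl⟩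
      · exact Or.inl h4
      · exact Or.inr ⟨u, h3.trans h4, h5, rfl⟩
  · intro x hx y hy
    rcases hx with hx | ⟨t, ht, rfl⟩
    · rcases hy with hy | hy
      · rcases h.tri x hx y hy with h1 | h1 | h1
        · exact Or.inl (Or.inl h1)
        · exact Or.inr (Or.inl h1)
        · exact Or.inr (Or.inr (Or.inl h1))
      · exact Or.inl (Or.inr (Or.inl ⟨hx, hy⟩))
    · rcases hy with hy | ⟨s, hs, rfl⟩
      · exact Or.inr (Or.inr (Or.inr (Or.inl ⟨hy, ⟨t, ht, rfl⟩⟩)))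
      · rcases lt_trichotomy s t with h1 | h1 | h1
        · exact Or.inl ((hQr t ht _).2 ⟨s, hs.1, h1, rfl⟩)
        · exact Or.inr (Or.inl (by rw [h1]))
        · exact Or.inr (Or.inr ((hQr s hs _).2 ⟨t, ht.1, h1, rfl⟩))
  · intro x
    by_cases hx : x ∈ S ∪ Q
    · rcases hx with hx | ⟨t, ht, rfl⟩
      · simp only [hxr x hx]
        exact h.lo x
      · have : {y | r' y (e t)} = S ∪ e '' Ioo t δ := by
          ext y
          rw [mem_ofPred_eq, hrQ t ht]
          constructor
          · rintro (h1 | ⟨s, h1, h2, rfl⟩)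
            · exact Or.inl h1
            · exact Or.inr ⟨s, ⟨h1, h2.trans_lt hδ⟩, rfl⟩
          · rintro (h1 | ⟨s, h1, rfl⟩)
            · exact Or.inl h1
            · rcases le_or_gt s 0 with h2 | h2
              · exact Or.inr ⟨s, h1.1, h2, rfl⟩
              · exact Or.inl (heS s ⟨h2, h1.2⟩)
        rw [this]
        exact h.op.union (he.isOpenMap _ isOpen_Ioo)
    · have : {y | r' y x} = ∅ := by
        ext y
        simp only [mem_ofPred_eq, mem_empty_iff_false, iff_false]
        exact fun hh => hx (hsupp _ _ hh).2
      rw [this]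
      exact isOpen_empty
  · intro x
    by_cases hx : x ∈ S ∪ Q
    · rcases hx with hx | ⟨t, ht, rfl⟩
      · obtain ⟨ε, hε, h1⟩ := ht x hx
        have : {y | r' x y} = {y | r x y} ∪ e '' Ioo (-δ) ε := by
          ext y
          rw [mem_ofPred_eq, hSr x hx]
          constructor
          · rintro (h2 | ⟨s, h2, rfl⟩)
            · exact Or.inl h2
            · exact Or.inr ⟨s, ⟨h2.1, h2.2.trans_lt hε⟩, rfl⟩
          · rintro (h2 | ⟨s, h2, rfl⟩)
            · exact Or.inl h2
            · rcases le_or_gt s 0 with h3 | h3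
              · exact Or.inr ⟨s, ⟨h2.1, h3⟩, rfl⟩
              · exact Or.inl (h1 s ⟨h3, h2.2⟩)
        rw [this]
        exact (h.hi x).union (he.isOpenMap _ isOpen_Ioo)
      · have : {y | r' (e t) y} = e '' Ioo (-δ) t := by
          ext y
          rw [mem_ofPred_eq, hQr t ht]
          constructor
          · rintro ⟨s, h1, h2, rfl⟩
            exact ⟨s, ⟨h1, h2⟩, rfl⟩
          · rintro ⟨s, h1, rfl⟩
            exact ⟨s, h1.1, h1.2, rfl⟩
        rw [this]
        exact he.isOpenMap _ isOpen_Ioo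
    · have : {y | r' x y} = ∅ := by
        ext y
        simp only [mem_ofPred_eq, mem_empty_iff_false, iff_false]
        exact fun hh => hx (hsupp _ _ hh).1
      rw [this]
      exact isOpen_empty

theorem good_init {e : ℝ → X} (he : IsOpenEmbedding e) :
    Good (range e) (fun x y => ∃ s t, s < t ∧ x = e s ∧ y = e t) := by
  have hinj := he.injective
  refine ⟨he.isOpen_range, isPreconnected_range he.continuous, ?_, ?_, ?_, ?_, ?_, ?_⟩
  · rintro _ _ ⟨s, t, _, rfl, rfl⟩
    exact ⟨⟨s, rfl⟩, ⟨t, rfl⟩⟩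
  · rintro x ⟨s, t, h, rfl, h2⟩
    exact h.ne (hinj h2)
  · rintro _ _ _ ⟨s, t, h, rfl, rfl⟩ ⟨s', t', h', h2, rfl⟩
    have := hinj h2
    subst this
    exact ⟨s, t', h.trans h', rfl, rfl⟩
  · rintro _ ⟨s, rfl⟩ _ ⟨t, rfl⟩
    rcases lt_trichotomy s t with h | h | h
    · exact Or.inl ⟨s, t, h, rfl, rfl⟩
    · exact Or.inr (Or.inl (by rw [h]))
    · exact Or.inr (Or.inr ⟨t, s, h, rfl, rfl⟩)
  · intro x
    have : {y | ∃ s t, s < t ∧ y = e s ∧ x = e t} = e '' {s | ∃ t, s < t ∧ x = e t} := by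
      ext y
      constructor
      · rintro ⟨s, t, h, rfl, rfl⟩
        exact ⟨s, ⟨t, h, rfl⟩, rfl⟩
      · rintro ⟨s, ⟨t, h, rfl⟩, rfl⟩
        exact ⟨s, t, h, rfl, rfl⟩
    rw [this]
    apply he.isOpenMap
    have : {s | ∃ t, s < t ∧ x = e t} = ⋃ t ∈ {t | x = e t}, Iio t := by
      ext s; simp [and_comm]
    rw [this]
    exact isOpen_biUnion fun _ _ => isOpen_Iio
  · intro x
    have : {y | ∃ s t, s < t ∧ x = e s ∧ y = e t} = e '' {t | ∃ s, s < t ∧ x = e s} := by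
      ext y
      constructor
      · rintro ⟨s, t, h, rfl, rfl⟩
        exact ⟨t, ⟨s, h, rfl⟩, rfl⟩
      · rintro ⟨s, ⟨t, h, rfl⟩, rfl⟩
        exact ⟨t, s, h, rfl, rfl⟩
    rw [this]
    apply he.isOpenMap
    have : {t | ∃ s, s < t ∧ x = e s} = ⋃ s ∈ {t | x = e t}, Ioi s := by
      ext s; simp [and_comm]
    rw [this]
    exact isOpen_biUnion fun _ _ => isOpen_Ioi

theorem exists_maximal_good (hX : OneMan X) (x0 : X) :
    ∃ (S : Set X) (r : X → X → Prop), Good S r ∧ x0 ∈ S ∧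
      ∀ S' r', Good S' r' → S ⊆ S' → (∀ x y, r x y → r' x y) → S' ⊆ S := by
  let P := {p : Set X × (X → X → Prop) // Good p.1 p.2 ∧ x0 ∈ p.1}
  let R : P → P → Prop := fun p q => p.1.1 ⊆ q.1.1 ∧ ∀ x y, p.1.2 x y → q.1.2 x y
  obtain ⟨e, he, he0⟩ := hX x0
  let p0 : P := ⟨(range e, _), good_init he, ⟨0, he0⟩⟩
  have := exists_maximal_of_chains_bounded (r := R) ?_ ?_
  · obtain ⟨m, hm⟩ := this
    refine ⟨m.1.1, m.1.2, m.2.1, m.2.2, fun S' r' hg hS hr => ?_⟩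
    exact (hm ⟨(S', r'), hg, hS m.2.2⟩ ⟨hS, hr⟩).1
  · intro c hc
    rcases c.eq_empty_or_nonempty with rfl | ⟨q0, hq0⟩
    · exact ⟨p0, by simp⟩
    have hdir : ∀ p ∈ c, ∀ q ∈ c, ∃ z ∈ c, R p z ∧ R q z := by
      intro p hp q hq
      have hrefl : ∀ z, R z z := fun z => ⟨subset_rfl, fun _ _ h => h⟩
      by_cases hpq : p = q
      · exact ⟨p, hp, hrefl p, hpq ▸ hrefl p⟩
      · rcases hc hp hq hpq with h | h
        · exact ⟨q, hq, h, hrefl q⟩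
        · exact ⟨p, hp, hrefl p, h⟩
    refine ⟨⟨(⋃ p ∈ c, p.1.1, fun x y => ∃ p ∈ c, p.1.2 x y), ?_, ?_⟩, ?_⟩
    · refine ⟨?_, ?_, ?_, ?_, ?_, ?_, ?_, ?_⟩
      · exact isOpen_biUnion fun p _ => p.2.1.op
      · rw [← sUnion_image]
        apply isPreconnected_sUnion x0
        · rintro _ ⟨p, _, rfl⟩
          exact p.2.2
        · rintro _ ⟨p, _, rfl⟩
          exact p.2.1.conn
      · rintro x y ⟨p, hp, h⟩
        have := p.2.1.supp x y h
        exact ⟨mem_biUnion hp this.1, mem_biUnion hp this.2⟩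
      · rintro x ⟨p, hp, h⟩
        exact p.2.1.irrefl x h
      · rintro x y z ⟨p, hp, h⟩ ⟨q, hq, h'⟩
        obtain ⟨w, hw, h1, h2⟩ := hdir p hp q hq
        exact ⟨w, hw, w.2.1.trans _ _ _ (h1.2 _ _ h) (h2.2 _ _ h')⟩
      · intro x hx y hy
        obtain ⟨p, hp, h⟩ := mem_iUnion₂.1 hx
        obtain ⟨q, hq, h'⟩ := mem_iUnion₂.1 hy
        obtain ⟨w, hw, h1, h2⟩ := hdir p hp q hq
        rcases w.2.1.tri x (h1.1 h) y (h2.1 h') with h3 | h3 | h3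
        · exact Or.inl ⟨w, hw, h3⟩
        · exact Or.inr (Or.inl h3)
        · exact Or.inr (Or.inr ⟨w, hw, h3⟩)
      · intro x
        have : {y | ∃ p ∈ c, p.1.2 y x} = ⋃ p ∈ c, {y | p.1.2 y x} := by
          ext y; simp
        rw [this]
        exact isOpen_biUnion fun p _ => p.2.1.lo x
      · intro x
        have : {y | ∃ p ∈ c, p.1.2 x y} = ⋃ p ∈ c, {y | p.1.2 x y} := by
          ext y; simp
        rw [this]
        exact isOpen_biUnion fun p _ => p.2.1.hi x
    · exact mem_biUnion hq0 q0.2.2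
    · intro p hp
      exact ⟨subset_biUnion_of_mem (u := fun p : P => p.1.1) hp, fun x y h => ⟨p, hp, h⟩⟩
  · intro a b c hab hbc
    exact ⟨hab.1.trans hbc.1, fun x y h => hbc.2 _ _ (hab.2 _ _ h)⟩

theorem neg_chart {e : ℝ → X} (he : IsOpenEmbedding e) : IsOpenEmbedding (fun t => e (-t)) :=
  he.comp (Homeomorph.neg ℝ).isOpenEmbedding

/-- the two sides of a boundary point of a maximal piece lie in the piece -/
theorem extend_any (hX : OneMan X) (h : Good S r)
    (hmax : ∀ S' r', Good S' r' → S ⊆ S' → (∀ x y, r x y → r' x y) → S' ⊆ S)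
    {e : ℝ → X} (he : IsOpenEmbedding e) (he0 : e 0 ∉ S) {δ : ℝ} (hδ : 0 < δ)
    (heS : ∀ t ∈ Ioo 0 δ, e t ∈ S) (heN : ∀ t ∈ Ioo (-δ) 0, e t ∉ S) : False := by
  rcases ends hX h he he0 hδ heS with ht | ht
  · obtain ⟨S', r', hg, h1, h2, h3⟩ := extend h he he0 hδ heS heN ht
    exact he0 (hmax S' r' hg h1 h2 h3)
  · obtain ⟨S', r', hg, h1, h2, h3⟩ := extend h.flip he he0 hδ heS heN ht
    exact he0 (hmax S' _ hg.flip h1 (fun x y hxy => h2 _ _ hxy) h3)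

theorem boundary_sides (hX : OneMan X) (h : Good S r)
    (hmax : ∀ S' r', Good S' r' → S ⊆ S' → (∀ x y, r x y → r' x y) → S' ⊆ S)
    {p : X} (hp : p ∈ closure S) (hpS : p ∉ S) :
    ∃ e : ℝ → X, IsOpenEmbedding e ∧ e 0 = p ∧ ∃ δ > 0, (∀ t ∈ Ioo 0 δ, e t ∈ S) ∧
      (∀ t ∈ Ioo (-δ) 0, e t ∈ S) := by
  obtain ⟨e, he, rfl⟩ := hX p
  refine ⟨e, he, rfl, ?_⟩
  have he' := neg_chart he
  obtain ⟨δ, hδ, h1⟩ := half he h.conn hp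
  obtain ⟨δ', hδ', h2⟩ := half he' h.conn (by simpa using hp)
  have hm : 0 < min δ δ' := lt_min hδ hδ'
  have hl := min_le_left δ δ'
  have hr := min_le_right δ δ'
  rcases h1 with h1 | h1 <;> rcases h2 with h2 | h2
  · refine ⟨min δ δ', hm, fun t ht => h1 t ⟨ht.1, ht.2.trans_le hl⟩, fun t ht => ?_⟩
    have := h2 (-t) ⟨by linarith [ht.2], by linarith [ht.1]⟩
    simpa using this
  · exfalso
    refine extend_any hX h hmax he hpS hm (fun t ht => h1 t ⟨ht.1, ht.2.trans_le hl⟩)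
      (fun t ht => ?_)
    have := h2 (-t) ⟨by linarith [ht.2], by linarith [ht.1]⟩
    simpa using this
  · exfalso
    refine extend_any hX h hmax he' (by simpa using hpS) hm
      (fun t ht => h2 t ⟨ht.1, ht.2.trans_le hr⟩) (fun t ht => ?_)
    exact h1 (-t) ⟨by linarith [ht.2], by linarith [ht.1]⟩
  · exfalso
    rw [mem_closure_iff] at hp
    obtain ⟨_, ⟨t, ht, rfl⟩, htS⟩ := hp (e '' Ioo (-min δ δ') (min δ δ'))
      (he.isOpenMap _ isOpen_Ioo) ⟨0, ⟨by linarith, hm⟩, rfl⟩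
    rcases lt_trichotomy t 0 with h3 | h3 | h3
    · have := h2 (-t) ⟨by linarith [ht.2], by linarith [ht.1]⟩
      exact this (by simpa using htS)
    · exact hpS (h3 ▸ htS)
    · exact h1 t ⟨h3, by linarith [ht.2]⟩ htS

/-- A connected component of a one-dimensional manifold is, up to countably (at most two) many
points, a good piece. -/
theorem exists_good_cover (hX : OneMan X) (x0 : X) :
    ∃ (S : Set X) (r : X → X → Prop), Good S r ∧ x0 ∈ S ∧
      (connectedComponent x0 \ S).Countable := by
  obtain ⟨S, r, h, hx0, hmax⟩ := exists_maximal_good hX x0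
  refine ⟨S, r, h, hx0, ?_⟩
  have hb := fun p => boundary_sides hX h hmax (p := p)
  have hop : IsOpen (closure S) := by
    rw [isOpen_iff_mem_nhds]
    intro p hp
    by_cases hpS : p ∈ S
    · exact Filter.mem_of_superset (h.op.mem_nhds hpS) subset_closure
    · obtain ⟨e, he, rfl, δ, hδ, h1, h2⟩ := hb p hp hpS
      refine Filter.mem_of_superset ((he.isOpenMap _ isOpen_Ioo).mem_nhds
        ⟨0, (⟨by linarith, hδ⟩ : (0 : ℝ) ∈ Ioo (-δ) δ), rfl⟩) ?_
      rintro _ ⟨t, ht, rfl⟩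
      rcases lt_trichotomy t 0 with h3 | h3 | h3
      · exact subset_closure (h2 t ⟨ht.1, h3⟩)
      · exact h3 ▸ hp
      · exact subset_closure (h1 t ⟨h3, ht.2⟩)
  have hsub : connectedComponent x0 ⊆ closure S :=
    IsClopen.connectedComponent_subset ⟨isClosed_closure, hop⟩ (subset_closure hx0)
  let E : (X → X → Prop) → Set X := fun r => {p | ∃ e : ℝ → X, IsOpenEmbedding e ∧ e 0 = p ∧
    ∃ δ > 0, (∀ t ∈ Ioo 0 δ, e t ∈ S) ∧ Top S r e}
  have hE : ∀ r, Good S r → (E r).Subsingleton := by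
    rintro r hr _ ⟨e, he, rfl, δ, hδ, h1, h2⟩ _ ⟨e', he', rfl, δ', hδ', h1', h2'⟩
    exact top_unique hr he he' hδ hδ' h1 h1' h2 h2'
  refine ((hE r h).countable.union (hE _ h.flip).countable).mono ?_
  rintro p ⟨hp, hpS⟩
  obtain ⟨e, he, rfl, δ, hδ, h1, h2⟩ := hb p (hsub hp) hpS
  rcases ends hX h he hpS hδ h1 with ht | ht
  · exact Or.inl ⟨e, he, rfl, δ, hδ, h1, ht⟩
  · exact Or.inr ⟨e, he, rfl, δ, hδ, h1, ht⟩

theorem countable_between (hX : OneMan X) (h : Good S r) {B : Set X}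
    (hB : ∀ x : X, ∃ N, IsOpen N ∧ x ∈ N ∧ (N ∩ B).Countable) {x0 : X} (hx0 : x0 ∈ S) {x : X}
    (hx : x ∈ S) : {b | b ∈ B ∧ r x0 b ∧ r b x}.Countable := by
  let I : X → Set X := fun x => {b | b ∈ B ∧ r x0 b ∧ r b x}
  have key : ∀ x ∈ S, ∃ N, IsOpen N ∧ x ∈ N ∧ N ⊆ S ∧
      ∀ y ∈ N, ∀ y' ∈ N, (I y).Countable → (I y').Countable := by
    intro x hx
    obtain ⟨N0, hN0, hxN0, hc⟩ := hB x
    obtain ⟨N, hN, hNc, hxN, hNO⟩ :=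
      hX.small (Filter.inter_mem (hN0.mem_nhds hxN0) (h.op.mem_nhds hx))
    have hNS : N ⊆ S := fun y hy => (hNO hy).2
    refine ⟨N, hN, hxN, hNS, fun y hy y' hy' hcy => ?_⟩
    refine (hcy.union hc).mono ?_
    rintro b ⟨hb, h1, h2⟩
    rcases h.tri b (h.supp _ _ h2).1 y (hNS hy) with h3 | h3 | h3
    · exact Or.inl ⟨hb, h1, h3⟩
    · exact Or.inr ⟨h3 ▸ (hNO hy).1, hb⟩
    · exact Or.inr ⟨(hNO (h.convex hNc hNS hy hy' h3 h2)).1, hb⟩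
  let C : Set X := {x | x ∈ S ∧ (I x).Countable}
  let D : Set X := {x | x ∈ S ∧ ¬ (I x).Countable}
  have hC : IsOpen C := by
    rw [isOpen_iff_mem_nhds]
    rintro x ⟨hx, hc⟩
    obtain ⟨N, hN, hxN, hNS, hk⟩ := key x hx
    exact Filter.mem_of_superset (hN.mem_nhds hxN) fun y hy => ⟨hNS hy, hk x hxN y hy hc⟩
  have hD : IsOpen D := by
    rw [isOpen_iff_mem_nhds]
    rintro x ⟨hx, hc⟩
    obtain ⟨N, hN, hxN, hNS, hk⟩ := key x hx
    exact Filter.mem_of_superset (hN.mem_nhds hxN)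
      fun y hy => ⟨hNS hy, fun hcy => hc (hk y hy x hxN hcy)⟩
  have hsub : S ⊆ C := by
    refine IsPreconnected.subset_left_of_subset_union hC hD ?_ ?_ ⟨x0, hx0, hx0, ?_⟩ h.conn
    · rw [Set.disjoint_left]
      exact fun y hy hy' => hy'.2 hy.2
    · intro y hy
      by_cases hc : (I y).Countable
      · exact Or.inl ⟨hy, hc⟩
      · exact Or.inr ⟨hy, hc⟩
    · have : I x0 = ∅ := by
        ext b
        constructor
        · rintro ⟨_, h1, h2⟩
          exact (h.asymm h1 h2).elim
        · exact fun hb => hb.elim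
      rw [this]
      exact countable_empty
  exact (hsub hx).2

/-- bounded increasing sequences converge -/
theorem seq_conv (hX : OneMan X) (h : Good S r) (z : ℕ → X) (hz : ∀ k, r (z k) (z (k + 1)))
    {u : X} (hu : u ∈ S) (hzu : ∀ k, r (z k) u) :
    ∃ w : X, ∀ N ∈ 𝓝 w, ∃ k, ∀ v, r (z k) v → (∃ m, r v (z m)) → v ∈ N := by
  let V : Set X := ⋃ k, {y | r y (z k)}
  have hV : IsOpen V := isOpen_iUnion fun k => h.lo _
  have hVS : V ⊆ S := fun y hy => by
    obtain ⟨k, hk⟩ := mem_iUnion.1 hy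
    exact (h.supp _ _ hk).1
  have huV : u ∉ V := fun hy => by
    obtain ⟨k, hk⟩ := mem_iUnion.1 hy
    exact h.asymm hk (hzu k)
  have : ∃ w ∈ S, w ∈ closure V ∧ w ∉ V := by
    by_contra! hcon
    have := IsPreconnected.subset_left_of_subset_union (s := S) hV
      (isClosed_closure (s := V)).isOpen_compl ?_ ?_ ⟨z 0, (h.supp _ _ (hz 0)).1,
        mem_iUnion.2 ⟨1, hz 0⟩⟩ h.conn
    · exact huV (this hu)
    · rw [Set.disjoint_left]
      exact fun y hy hy' => hy' (subset_closure hy)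
    · intro y hy
      by_cases hc : y ∈ closure V
      · exact Or.inl (hcon y hy hc)
      · exact Or.inr hc
  obtain ⟨w, hwS, hwc, hwV⟩ := this
  refine ⟨w, fun O hO => ?_⟩
  obtain ⟨N, hN, hNc, hxN, hNO⟩ := hX.small (Filter.inter_mem hO (h.op.mem_nhds hwS))
  have hNS : N ⊆ S := fun y hy => (hNO hy).2
  obtain ⟨y, hyN, hyV⟩ := mem_closure_iff.1 hwc N hN hxN
  obtain ⟨k, hk⟩ := mem_iUnion.1 hyV
  refine ⟨k, fun v hv ⟨m, hm⟩ => (hNO ?_).1⟩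
  refine h.convex hNc hNS hyN hxN (h.trans _ _ _ hk hv) ?_
  rcases h.tri v (h.supp _ _ hv).2 w hwS with h1 | h1 | h1
  · exact h1
  · exact (hwV (mem_iUnion.2 ⟨m, h1 ▸ hm⟩)).elim
  · exact (hwV (mem_iUnion.2 ⟨m, h.trans _ _ _ h1 hm⟩)).elim

theorem countable_above (hX : OneMan X) (h : Good S r) {M : Type*} [TopologicalSpace M] [T2Space M]
    [FirstCountableTopology M] {f : X → M} (hf : Continuous f) (hinj : Function.Injective f)
    {B : Set X} (hB : ∀ x : X, ∃ N, IsOpen N ∧ x ∈ N ∧ (N ∩ B).Countable)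
    {𝓑 : Set (Set M)} (h𝓑 : 𝓑.Countable)
    (hbas : ∀ b ∈ B, ∀ W ∈ 𝓝 (f b), ∃ O ∈ 𝓑, f b ∈ O ∧ O ⊆ W) {x0 : X} (hx0 : x0 ∈ S) :
    {b | b ∈ B ∧ r x0 b}.Countable := by
  by_contra hunc
  set A : Set X := {b | b ∈ B ∧ r x0 b} with hA
  -- uncountable subsets of `A` are cofinal
  have hcof : ∀ A' ⊆ A, ¬ A'.Countable → ∀ x ∈ S, ∃ b ∈ A', r x b := by
    intro A' hA' hunc' x hx
    by_contra! hcon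
    refine hunc' (((countable_between hX h hB hx0 hx).union (countable_singleton x)).mono ?_)
    intro b hb
    rcases h.tri b (h.supp _ _ (hA' hb).2).2 x hx with h1 | h1 | h1
    · exact Or.inl ⟨(hA' hb).1, (hA' hb).2, h1⟩
    · exact Or.inr h1
    · exact (hcon b hb h1).elim
  -- condensation points
  let Bad : Set X := {b | b ∈ A ∧ ∃ W ∈ 𝓝 (f b), {b' | b' ∈ A ∧ f b' ∈ W}.Countable}
  have hBad : Bad.Countable := by
    have : Bad ⊆ ⋃ O ∈ {O | O ∈ 𝓑 ∧ {b' | b' ∈ A ∧ f b' ∈ O}.Countable},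
        {b' | b' ∈ A ∧ f b' ∈ O} := by
      rintro b ⟨hb, W, hW, hc⟩
      obtain ⟨O, hO, hbO, hOW⟩ := hbas b hb.1 W hW
      have hOc : {b' | b' ∈ A ∧ f b' ∈ O}.Countable := by
        refine hc.mono ?_
        rintro b' ⟨h1, h2⟩
        exact ⟨h1, hOW h2⟩
      exact mem_biUnion (s := {O | O ∈ 𝓑 ∧ {b' | b' ∈ A ∧ f b' ∈ O}.Countable})
        (t := fun O => {b' | b' ∈ A ∧ f b' ∈ O}) (x := O) ⟨hO, hOc⟩ ⟨hb, hbO⟩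
    refine Set.Countable.mono this ?_
    exact Set.Countable.biUnion (h𝓑.mono fun O hO => hO.1) fun O hO => hO.2
  have hne : ∃ b₁ ∈ A \ Bad, ∃ b₂ ∈ A \ Bad, b₁ ≠ b₂ := by
    by_contra! hcon
    have hs : (A \ Bad).Subsingleton := fun x hx y hy => hcon x hx y hy
    refine hunc ((hs.countable.union hBad).mono fun b hb => ?_)
    by_cases hbb : b ∈ Bad
    · exact Or.inr hbb
    · exact Or.inl ⟨hb, hbb⟩
  obtain ⟨b₁, hb₁, b₂, hb₂, hb₁₂⟩ := hne
  have hnext : ∀ b ∈ A \ Bad, ∀ W ∈ 𝓝 (f b), ∀ x ∈ S, ∃ b' ∈ A, f b' ∈ W ∧ r x b' := by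
    intro b hb W hW x hx
    obtain ⟨b', hb', h1⟩ := hcof {b' | b' ∈ A ∧ f b' ∈ W} (fun _ hb => hb.1)
      (fun hc => hb.2 ⟨hb.1, W, hW, hc⟩) x hx
    exact ⟨b', hb'.1, hb'.2, h1⟩
  obtain ⟨W₁, hW₁⟩ := (𝓝 (f b₁)).exists_antitone_basis
  obtain ⟨W₂, hW₂⟩ := (𝓝 (f b₂)).exists_antitone_basis
  have hstep : ∀ (x : S) (k : ℕ), ∃ (y z : S), r x y ∧ r y z ∧ f y ∈ W₁ k ∧ f z ∈ W₂ k := by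
    intro x k
    obtain ⟨y, hy, hyW, hxy⟩ := hnext b₁ hb₁ (W₁ k) (hW₁.mem k) x x.2
    have hyS := (h.supp _ _ hxy).2
    obtain ⟨z, hz, hzW, hyz⟩ := hnext b₂ hb₂ (W₂ k) (hW₂.mem k) y hyS
    exact ⟨⟨y, hyS⟩, ⟨z, (h.supp _ _ hyz).2⟩, hxy, hyz, hyW, hzW⟩
  choose Y Z hxY hYZ hYW hZW using hstep
  let s : ℕ → S := fun k => Nat.rec ⟨x0, hx0⟩ (fun k x => Z x k) k
  have hs : ∀ k, s (k + 1) = Z (s k) k := fun k => rfl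
  let y : ℕ → X := fun k => Y (s k) k
  let z : ℕ → X := fun k => (s k).1
  have hzy : ∀ k, r (z k) (y k) := fun k => hxY _ _
  have hyz : ∀ k, r (y k) (z (k + 1)) := fun k => hYZ _ _
  have hzz : ∀ k, r (z k) (z (k + 1)) := fun k => h.trans _ _ _ (hzy k) (hyz k)
  have hmono : ∀ k m, k < m → r (z k) (z m) := by
    intro k m hkm
    induction m, hkm using Nat.le_induction with
    | base => exact hzz k
    | succ m _ ih => exact h.trans _ _ _ ih (hzz m)
  -- the sequence is bounded
  have hbd : ∃ u ∈ S, ∀ k, r (z k) u := by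
    by_contra! hcon
    have : A ⊆ ⋃ k, ({b | b ∈ B ∧ r x0 b ∧ r b (z k)} ∪ {z k}) := by
      intro b hb
      have hbS := (h.supp _ _ hb.2).2
      obtain ⟨k, hk⟩ := hcon b hbS
      refine mem_iUnion.2 ⟨k, ?_⟩
      rcases h.tri b hbS (z k) (s k).2 with h1 | h1 | h1
      · exact Or.inl ⟨hb.1, hb.2, h1⟩
      · exact Or.inr h1
      · exact (hk h1).elim
    refine hunc (Set.Countable.mono this (countable_iUnion fun k => ?_))
    exact (countable_between hX h hB hx0 (s k).2).union (countable_singleton _)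
  obtain ⟨u, hu, hzu⟩ := hbd
  obtain ⟨w, hw⟩ := seq_conv hX h z hzz hu hzu
  have hyw : Tendsto y atTop (𝓝 w) := by
    intro N hN
    obtain ⟨k, hk⟩ := hw N hN
    rw [mem_map, mem_atTop_sets]
    refine ⟨k + 1, fun m hm => hk (y m) ?_ ⟨m + 1, hyz m⟩⟩
    exact h.trans _ _ _ (hmono k m hm) (hzy m)
  have hzw : Tendsto (fun k => z (k + 1)) atTop (𝓝 w) := by
    intro N hN
    obtain ⟨k, hk⟩ := hw N hN
    rw [mem_map, mem_atTop_sets]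
    exact ⟨k + 1, fun m hm => hk (z (m + 1)) (hmono k (m + 1) (by omega)) ⟨m + 2, hzz (m + 1)⟩⟩
  have h1 : f w = f b₁ := tendsto_nhds_unique ((hf.tendsto w).comp hyw)
    (hW₁.tendsto fun k => hYW _ _)
  have h2 : f w = f b₂ := tendsto_nhds_unique ((hf.tendsto w).comp hzw)
    (hW₂.tendsto fun k => hZW _ _)
  exact hb₁₂ (hinj (h1.symm.trans h2))

theorem countable_component (hX : OneMan X) {M : Type*} [TopologicalSpace M] [T2Space M]
    [FirstCountableTopology M] {f : X → M} (hf : Continuous f) (hinj : Function.Injective f)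
    {B : Set X} (hB : ∀ x : X, ∃ N, IsOpen N ∧ x ∈ N ∧ (N ∩ B).Countable)
    {𝓑 : Set (Set M)} (h𝓑 : 𝓑.Countable)
    (hbas : ∀ b ∈ B, ∀ W ∈ 𝓝 (f b), ∃ O ∈ 𝓑, f b ∈ O ∧ O ⊆ W) (x0 : X) :
    (connectedComponent x0 ∩ B).Countable := by
  obtain ⟨S, r, h, hx0, hc⟩ := exists_good_cover hX x0
  have h1 := countable_above hX h hf hinj hB h𝓑 hbas hx0
  have h2 := countable_above hX h.flip hf hinj hB h𝓑 hbas hx0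
  refine (((hc.union h1).union h2).union (countable_singleton x0)).mono ?_
  rintro b ⟨hb, hbB⟩
  by_cases hbS : b ∈ S
  · rcases h.tri x0 hx0 b hbS with h3 | h3 | h3
    · exact Or.inl (Or.inl (Or.inr ⟨hbB, h3⟩))
    · exact Or.inr h3.symm
    · exact Or.inl (Or.inr ⟨hbB, h3⟩)
  · exact Or.inl (Or.inl (Or.inl ⟨hb, hbS⟩))

end OneDim

end FolAux

namespace FolAux

/-! ### The fine topology of a one-dimensional foliation -/

/-- The total space of the foliation, to be equipped with the leaf topology. -/
def FineSpace {M : Type u} [TopologicalSpace M] {q : ℕ} (_F : Foliation M 1 q) : Type u := M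

section Fine

variable {M : Type u} [TopologicalSpace M] {q : ℕ} (F : Foliation M 1 q)

/-- the inverse of a chart -/
def cinv (i : F.ι) (p : (Fin 1 → ℝ) × (Fin q → ℝ)) : M := ((F.chart i).symm p).1

theorem cinv_emb (i : F.ι) : IsOpenEmbedding (cinv F i) :=
  (F.isOpen i).isOpenEmbedding_subtypeVal.comp (F.chart i).symm.isOpenEmbedding

theorem cinv_mem (i : F.ι) (p) : cinv F i p ∈ F.U i := ((F.chart i).symm p).2

theorem chart_cinv (i : F.ι) (p) (h : cinv F i p ∈ F.U i) : F.chart i ⟨cinv F i p, h⟩ = p := by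
  have : (⟨cinv F i p, h⟩ : F.U i) = (F.chart i).symm p := rfl
  rw [this]; simp

theorem cinv_chart (i : F.ι) (x : M) (h : x ∈ F.U i) : cinv F i (F.chart i ⟨x, h⟩) = x := by
  simp [cinv]

/-- parametrisation of a plaque -/
def par (i : F.ι) (y : Fin q → ℝ) (t : ℝ) : M := cinv F i (fun _ => t, y)

theorem par_cont (i : F.ι) (y : Fin q → ℝ) : Continuous (par F i y) :=
  (cinv_emb F i).continuous.comp (by fun_prop)

theorem par_inj (i : F.ι) (y : Fin q → ℝ) : Function.Injective (par F i y) := by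
  intro s t h
  have := (cinv_emb F i).injective h
  have h2 := congrFun (congrArg Prod.fst this) 0
  exact h2

theorem exists_par (x : M) : ∃ i y t, par F i y t = x := by
  obtain ⟨i, hi⟩ := F.covers x
  refine ⟨i, (F.chart i ⟨x, hi⟩).2, (F.chart i ⟨x, hi⟩).1 0, ?_⟩
  have : ((fun _ => (F.chart i ⟨x, hi⟩).1 0, (F.chart i ⟨x, hi⟩).2) :
      (Fin 1 → ℝ) × (Fin q → ℝ)) = F.chart i ⟨x, hi⟩ := by
    ext j
    · rw [Subsingleton.elim j 0]
    · rfl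
  unfold par
  rw [this, cinv_chart]

/-- the identity, as a map to the original space -/
def toM (x : FineSpace F) : M := x

/-- the identity, as a map from the original space -/
def ofM (x : M) : FineSpace F := x

instance : TopologicalSpace (FineSpace F) where
  IsOpen W := ∀ i y, IsOpen ((fun t => ofM F (par F i y t)) ⁻¹' W)
  isOpen_univ i y := by
    rw [preimage_univ]
    exact isOpen_univ
  isOpen_inter s t hs ht i y := (hs i y).inter (ht i y)
  isOpen_sUnion c hc i y := by
    rw [preimage_sUnion]
    exact isOpen_biUnion fun s hs => hc s hs i y

theorem fine_isOpen_iff (W : Set (FineSpace F)) :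
    IsOpen W ↔ ∀ i y, IsOpen ((fun t => ofM F (par F i y t)) ⁻¹' W) := Iff.rfl

theorem toM_cont : Continuous (toM F) := by
  refine ⟨fun W hW => ?_⟩
  rw [fine_isOpen_iff]
  exact fun i y => hW.preimage (par_cont F i y)

theorem toM_inj : Function.Injective (toM F) := fun _ _ h => h

theorem fpar_emb (i : F.ι) (y : Fin q → ℝ) : IsOpenEmbedding (fun t => ofM F (par F i y t)) := by
  refine IsOpenEmbedding.of_continuous_injective_isOpenMap ?_ ?_ ?_
  · exact ⟨fun W hW => hW i y⟩
  · exact fun s t h => par_inj F i y h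
  · intro O hO
    rw [fine_isOpen_iff]
    intro j z
    rw [isOpen_iff_mem_nhds]
    rintro t0 ⟨s0, hs0, hst⟩
    have hst' : par F i y s0 = par F j z t0 := hst
    have ho : IsOpen {t : ℝ | par F j z t ∈ cinv F i '' {p | p.1 0 ∈ O}} := by
      refine IsOpen.preimage (par_cont F j z) ((cinv_emb F i).isOpenMap _ ?_)
      exact hO.preimage (by fun_prop : Continuous
        fun p : (Fin 1 → ℝ) × (Fin q → ℝ) => p.1 0)
    refine Filter.mem_of_superset (ho.mem_nhds ⟨_, hs0, hst'⟩) ?_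
    rintro t ⟨p, hp, hpt⟩
    have hp2 : p.2 = y := by
      have hi1 : par F j z t ∈ F.U i := hpt ▸ cinv_mem F i p
      have hi2 : par F j z t0 ∈ F.U i := hst' ▸ cinv_mem F i _
      have := F.compat j i (par F j z t) (par F j z t0) (cinv_mem F j _) hi1 (cinv_mem F j _) hi2
        (by simp only [par, chart_cinv])
      have e1 : F.chart i ⟨par F j z t, hi1⟩ = p := by
        have : (⟨par F j z t, hi1⟩ : F.U i) = ⟨cinv F i p, cinv_mem F i p⟩ := Subtype.ext hpt.symm
        rw [this, chart_cinv]
      have e2 : F.chart i ⟨par F j z t0, hi2⟩ = (fun _ => s0, y) := by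
        have : (⟨par F j z t0, hi2⟩ : F.U i) = ⟨cinv F i (fun _ => s0, y), cinv_mem F i _⟩ :=
          Subtype.ext hst'.symm
        rw [this, chart_cinv]
      rw [e1, e2] at this
      exact this
    refine ⟨p.1 0, hp, ?_⟩
    have hpe : ((fun _ => p.1 0, y) : (Fin 1 → ℝ) × (Fin q → ℝ)) = p := by
      ext j
      · rw [Subsingleton.elim j 0]
      · rw [hp2]
    change cinv F i (fun _ => p.1 0, y) = par F j z t
    rw [hpe, hpt]

theorem fine_oneMan : OneMan (FineSpace F) := by
  intro x
  obtain ⟨i, y, t, h⟩ := exists_par F x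
  refine ⟨fun s => ofM F (par F i y (s + t)),
    (fpar_emb F i y).comp (Homeomorph.addRight t).isOpenEmbedding, ?_⟩
  change par F i y (0 + t) = x
  rw [zero_add]
  exact h

theorem leafRel_component {x y : M} (h : F.leafRel x y) :
    connectedComponent (ofM F x) = connectedComponent (ofM F y) := by
  induction h with
  | rel x y h =>
    obtain ⟨P, ⟨i, z, w, hw, rfl⟩, hx, hy⟩ := h
    have hx := connectedComponentIn_subset _ _ hx
    have hy := connectedComponentIn_subset _ _ hy
    have hc : IsPreconnected (range fun t => ofM F (par F i z t)) :=
      isPreconnected_range (fpar_emb F i z).continuous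
    have hr : ∀ v ∈ F.plaqueFibre i z, ofM F v ∈ range fun t => ofM F (par F i z t) := by
      rintro v ⟨hv, hv2⟩
      refine ⟨(F.chart i ⟨v, hv⟩).1 0, ?_⟩
      have : ((fun _ => (F.chart i ⟨v, hv⟩).1 0, z) :
          (Fin 1 → ℝ) × (Fin q → ℝ)) = F.chart i ⟨v, hv⟩ := by
        ext j
        · rw [Subsingleton.elim j 0]
        · rw [hv2]
      change cinv F i (fun _ => (F.chart i ⟨v, hv⟩).1 0, z) = v
      rw [this, cinv_chart]
    exact connectedComponent_eq (hc.subset_connectedComponent (hr x hx) (hr y hy))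
  | refl x => rfl
  | symm x y _ ih => exact ih.symm
  | trans x y z _ _ ih1 ih2 => exact ih1.trans ih2

/-- each leaf meets the transversal in a countable set -/
theorem leaf_countable [T2Space M] [FirstCountableTopology M] (i : F.ι) (x : M) :
    {y : Fin q → ℝ | F.leafRel x (par F i y 0)}.Countable := by
  have : T2Space (FineSpace F) := T2Space.of_injective_continuous (toM_inj F) (toM_cont F)
  let B : Set (FineSpace F) := range fun y => ofM F (par F i y 0)
  have hcount : (connectedComponent (ofM F x) ∩ B).Countable := by
    refine countable_component (fine_oneMan F) (toM_cont F) (toM_inj F) (B := B) ?_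
      (𝓑 := (fun O => cinv F i '' O) ''
        TopologicalSpace.countableBasis ((Fin 1 → ℝ) × (Fin q → ℝ)))
      ((TopologicalSpace.countable_countableBasis _).image _) ?_ _
    · intro v
      obtain ⟨j, z, t, h⟩ := exists_par F v
      refine ⟨range fun t => ofM F (par F j z t), (fpar_emb F j z).isOpen_range, ⟨t, h⟩, ?_⟩
      apply Set.Subsingleton.countable
      rintro _ ⟨⟨s, rfl⟩, ⟨y, hy⟩⟩ _ ⟨⟨s', rfl⟩, ⟨y', hy'⟩⟩
      have h1 : cinv F i (fun _ => 0, y) = par F j z s := hy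
      have h2 : cinv F i (fun _ => 0, y') = par F j z s' := hy'
      have hi1 : cinv F j (fun _ => s, z) ∈ F.U i := by
        have := cinv_mem F i (fun _ => 0, y)
        rw [h1] at this
        exact this
      have hi2 : cinv F j (fun _ => s', z) ∈ F.U i := by
        have := cinv_mem F i (fun _ => 0, y')
        rw [h2] at this
        exact this
      have := F.compat j i _ _ (cinv_mem F j _) hi1 (cinv_mem F j _) hi2
        (by simp only [chart_cinv])
      have e1 : F.chart i ⟨_, hi1⟩ = (fun _ => 0, y) := by
        have : (⟨_, hi1⟩ : F.U i) = ⟨_, cinv_mem F i (fun _ => 0, y)⟩ := Subtype.ext h1.symm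
        rw [this, chart_cinv]
      have e2 : F.chart i ⟨_, hi2⟩ = (fun _ => 0, y') := by
        have : (⟨_, hi2⟩ : F.U i) = ⟨_, cinv_mem F i (fun _ => 0, y')⟩ := Subtype.ext h2.symm
        rw [this, chart_cinv]
      rw [e1, e2] at this
      have hyy : y = y' := this
      subst hyy
      exact hy.symm.trans hy'
    · rintro _ ⟨y, rfl⟩ W hW
      have hW' : cinv F i ⁻¹' W ∈ 𝓝 ((fun _ => 0, y) : (Fin 1 → ℝ) × (Fin q → ℝ)) :=
        (cinv_emb F i).continuous.continuousAt hW
      obtain ⟨O, hO, hyO, hOW⟩ :=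
        (TopologicalSpace.isBasis_countableBasis _).mem_nhds_iff.1 hW'
      exact ⟨_, ⟨O, hO, rfl⟩, ⟨_, hyO, rfl⟩, image_subset_iff.2 hOW⟩
  have hinj : Function.Injective fun y => ofM F (par F i y 0) := by
    intro y y' h
    exact congrArg Prod.snd ((cinv_emb F i).injective h)
  refine (hcount.preimage hinj).mono ?_
  intro y hy
  refine ⟨?_, ⟨y, rfl⟩⟩
  rw [leafRel_component F hy]
  exact mem_connectedComponent

end Fine

end FolAux

open Cardinal in
theorem FolAux.main {M : Type} [TopologicalSpace M] [T2Space M] [ConnectedSpace M]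
    {q : ℕ} (hq : 0 < q) (F : Foliation M 1 q) :
    Cardinal.mk {L : Set M // F.IsLeaf L} = Cardinal.continuum := by
  have hch : ∀ x : M, ∃ e : (Fin 1 → ℝ) × (Fin q → ℝ) → M, IsOpenEmbedding e ∧ x ∈ range e := by
    intro x
    obtain ⟨i, y, t, h⟩ := exists_par F x
    exact ⟨cinv F i, cinv_emb F i, ⟨_, h⟩⟩
  have : FirstCountableTopology M := firstCountable_of_charts hch
  have : NeZero q := ⟨hq.ne'⟩
  have hqc : #(Fin q → ℝ) = 𝔠 := by
    rw [← Cardinal.power_def, mk_real, mk_fin]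
    exact power_nat_eq aleph0_le_continuum hq
  apply le_antisymm
  · have h1 : #M ≤ 𝔠 := by
      refine card_le_continuum ?_ hch
      rw [Cardinal.mk_prod, hqc, ← Cardinal.power_def, mk_real]
      simp
    refine le_trans ?_ h1
    refine mk_le_of_surjective (f := fun x : M => ⟨{y | F.leafRel x y}, x, rfl⟩) ?_
    rintro ⟨_, x, rfl⟩
    exact ⟨x, rfl⟩
  · obtain ⟨x0⟩ : Nonempty M := inferInstance
    obtain ⟨i, _⟩ := F.covers x0
    let g : (Fin q → ℝ) → {L : Set M // F.IsLeaf L} :=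
      fun y => ⟨{v | F.leafRel (par F i y 0) v}, _, rfl⟩
    have hfib : ∀ L, #(g ⁻¹' {L}) ≤ ℵ₀ := by
      intro L
      rw [mk_le_aleph0_iff]
      obtain ⟨_, x, rfl⟩ := L
      refine Set.Countable.mono ?_ (leaf_countable F i x)
      intro y hy
      have h1 : g y = _ := hy
      have h2 : {v | F.leafRel (par F i y 0) v} = {v | F.leafRel x v} := congrArg Subtype.val h1
      have h3 : par F i y 0 ∈ {v | F.leafRel (par F i y 0) v} := Relation.EqvGen.refl _
      rw [h2] at h3
      exact h3
    by_contra hlt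
    rw [not_le] at hlt
    have hle : 𝔠 ≤ #{L : Set M // F.IsLeaf L} * ℵ₀ := by
      rw [← hqc, Cardinal.mk_congr (Equiv.sigmaFiberEquiv g).symm, Cardinal.mk_sigma]
      refine (Cardinal.sum_le_sum _ (fun _ => ℵ₀) fun L => hfib L).trans ?_
      simp
    exact absurd hle (not_le.2 (mul_lt_of_lt aleph0_le_continuum hlt aleph0_lt_continuum))

/-- A dimension-one foliation on a connected `n`-manifold (`n ≥ 2`) has
exactly `𝔠 = 2^ℵ₀` many leaves. -/
theorem statement0 (n : ℕ) (hn : 2 ≤ n) (M : Type) [TopologicalSpace M]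
    (hM : IsTopManifold M n) (hconn : ConnectedSpace M)
    (F : Foliation M 1 (n - 1)) :
    Cardinal.mk {L : Set M // F.IsLeaf L} = Cardinal.continuum := by
  have := hM.2.1
  exact FolAux.main (by omega) F
end
end

section
/- Let 𝕊¹ be the unit circle in ℝ² and let ℱ be a dimension-one foliation on the 2-manifold 𝕊¹ × 𝕃₊. Then exactly one of the following holds: (i) the set C = {α ∈ 𝕃₊ : 𝕊¹ × {α} is a leaf of ℱ} is a closed unbounded subset of 𝕃₊; (ii) ℱ is ultimately vertical, i.e. there is α ∈ 𝕃₊ such that for every z ∈ 𝕊¹ the set {z} × (α,→) is contained in a single leaf of ℱ (the restriction of ℱ to 𝕊¹ × (α,→) is the trivial product foliation by long rays). -/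
noncomputable section

open Set Topology Filter

universe u

/-! ### Order and topology of the long ray -/

theorem omega1_exists_gt (f : ℕ → Omega1) : ∃ b : Omega1, ∀ n, f n < b := by
  have h : Ordinal.lsub.{0,0} (fun n => (f n).1) < (Cardinal.aleph 1).ord := by
    apply Ordinal.lsub_lt_ord
    · rw [Cardinal.isRegular_aleph_one.cof_ord]
      simp
    · intro n; exact (f n).2
  exact ⟨⟨_, h⟩, fun n => Ordinal.lt_lsub.{0,0} (fun n => (f n).1) n⟩

theorem omega1_wf : WellFounded (fun a b : Omega1 => a < b) :=
  InvImage.wf Subtype.val Ordinal.lt_wf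

/-- Constructor of points in the closed long ray. -/
def clrMk (o : Omega1) (r : Set.Ico (0:ℝ) 1) : ClosedLongRay := toLex (o, r)

theorem clr_surj (x : ClosedLongRay) : ∃ o r, x = clrMk o r :=
  ⟨(ofLex (α := Omega1 × Set.Ico (0:ℝ) 1) x).1, (ofLex (α := Omega1 × Set.Ico (0:ℝ) 1) x).2, rfl⟩

theorem clr_lt {o o' : Omega1} {r r' : Set.Ico (0:ℝ) 1} :
    clrMk o r < clrMk o' r' ↔ o < o' ∨ o = o' ∧ r < r' := Prod.Lex.toLex_lt_toLex

theorem clr_le {o o' : Omega1} {r r' : Set.Ico (0:ℝ) 1} :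
    clrMk o r ≤ clrMk o' r' ↔ o < o' ∨ o = o' ∧ r ≤ r' := Prod.Lex.toLex_le_toLex

def ico0 : Set.Ico (0:ℝ) 1 := ⟨0, by norm_num, by norm_num⟩

theorem clr_exists_gt (f : ℕ → ClosedLongRay) : ∃ b : ClosedLongRay, ∀ n, f n < b := by
  choose o r h using fun n => clr_surj (f n)
  obtain ⟨b, hb⟩ := omega1_exists_gt o
  refine ⟨clrMk b ico0, fun n => ?_⟩
  rw [h n, clr_lt]
  exact Or.inl (hb n)

theorem clr_exists_isLUB (T : Set ClosedLongRay) (hT : BddAbove T) : ∃ b, IsLUB T b := by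
  have hne : {o : Omega1 | ∃ r, clrMk o r ∈ upperBounds T}.Nonempty := by
    obtain ⟨b, hb⟩ := hT
    obtain ⟨o, r, rfl⟩ := clr_surj b
    exact ⟨o, r, hb⟩
  obtain ⟨o, ⟨r1, hr1⟩, hmin⟩ := omega1_wf.has_min _ hne
  have hmin' : ∀ o' r', clrMk o' r' ∈ upperBounds T → o ≤ o' := fun o' r' h =>
    not_lt.1 (hmin o' ⟨r', h⟩)
  set A : Set ℝ := {x | ∃ r : Set.Ico (0:ℝ) 1, clrMk o r ∈ upperBounds T ∧ (r : ℝ) = x} with hA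
  have hA0 : ∀ x ∈ A, 0 ≤ x := by rintro x ⟨r, -, rfl⟩; exact r.2.1
  have hAb : BddBelow A := ⟨0, hA0⟩
  have hr1A : (r1 : ℝ) ∈ A := ⟨r1, hr1, rfl⟩
  have h0 : 0 ≤ sInf A := le_csInf ⟨_, hr1A⟩ hA0
  have h1 : sInf A < 1 := lt_of_le_of_lt (csInf_le hAb hr1A) r1.2.2
  refine ⟨clrMk o ⟨sInf A, h0, h1⟩, ?_, ?_⟩
  · intro t ht
    obtain ⟨o', r', rfl⟩ := clr_surj t
    have := hr1 ht
    rw [clr_le] at this ⊢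
    rcases this with h | ⟨h, -⟩
    · exact Or.inl h
    · refine Or.inr ⟨h, ?_⟩
      change (r' : ℝ) ≤ sInf A
      apply le_csInf ⟨_, hr1A⟩
      rintro x ⟨r, hr, rfl⟩
      have := hr ht
      rw [clr_le] at this
      rcases this with h' | ⟨-, h'⟩
      · exact absurd h' (by rw [h]; exact lt_irrefl _)
      · exact h'
  · intro u hu
    obtain ⟨o', r', rfl⟩ := clr_surj u
    rw [clr_le]
    rcases (hmin' o' r' hu).lt_or_eq with h | h
    · exact Or.inl h
    · refine Or.inr ⟨h, ?_⟩
      subst h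
      change sInf A ≤ (r' : ℝ)
      exact csInf_le hAb ⟨r', hu, rfl⟩

theorem clr_dense {x y : ClosedLongRay} (h : x < y) : ∃ z, x < z ∧ z < y := by
  obtain ⟨o, r, rfl⟩ := clr_surj x
  obtain ⟨o', r', rfl⟩ := clr_surj y
  rcases clr_lt.1 h with h | ⟨h, h'⟩
  · have hr := r.2.2
    have hr0 := r.2.1
    refine ⟨clrMk o ⟨((r:ℝ) + 1) / 2, by linarith, by linarith⟩, ?_, ?_⟩
    · rw [clr_lt]; right; refine ⟨rfl, ?_⟩
      change (r : ℝ) < ((r:ℝ) + 1) / 2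
      linarith
    · rw [clr_lt]; exact Or.inl h
  · have h'' : (r : ℝ) < r' := h'
    have hr0 := r.2.1
    have hr1 := r'.2.2
    refine ⟨clrMk o ⟨((r:ℝ) + r') / 2, by linarith, by linarith⟩, ?_, ?_⟩
    · rw [clr_lt]; right; refine ⟨rfl, ?_⟩
      change (r : ℝ) < ((r:ℝ) + r') / 2
      linarith
    · rw [clr_lt]; right; refine ⟨h, ?_⟩
      change ((r:ℝ) + r') / 2 < (r' : ℝ)
      linarith

instance : DenselyOrdered LongRay := ⟨fun a b h => by
  obtain ⟨z, hz1, hz2⟩ := clr_dense (x := a.1) (y := b.1) h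
  exact ⟨⟨z, a.1, hz1⟩, hz1, hz2⟩⟩

instance : NoMinOrder LongRay := ⟨fun a => by
  obtain ⟨y, hy⟩ := a.2
  obtain ⟨z, hz1, hz2⟩ := clr_dense hy
  exact ⟨⟨z, y, hz1⟩, hz2⟩⟩

theorem lr_exists_gt (f : ℕ → LongRay) : ∃ b : LongRay, ∀ n, f n < b := by
  obtain ⟨b, hb⟩ := clr_exists_gt (fun n => (f n).1)
  exact ⟨⟨b, _, hb 0⟩, hb⟩

instance : NoMaxOrder LongRay := ⟨fun a => by
  obtain ⟨b, hb⟩ := lr_exists_gt (fun _ => a)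
  exact ⟨b, hb 0⟩⟩

instance : Nonempty LongRay := by
  obtain ⟨b, hb⟩ := clr_exists_gt (fun _ => clrMk ⟨0, by simpa using Ordinal.omega_pos 1⟩ ico0)
  exact ⟨⟨b, _, hb 0⟩⟩

instance : OrderTopology LongRay := by
  have : Set.OrdConnected {x : ClosedLongRay | ∃ y, y < x} :=
    ⟨by rintro a ⟨y, hy⟩ b - c hc; exact ⟨y, hy.trans_le hc.1⟩⟩
  exact orderTopology_of_ordConnected (t := {x : ClosedLongRay | ∃ y, y < x})

theorem lr_exists_isLUB (T : Set LongRay) (hne : T.Nonempty) (hT : BddAbove T) :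
    ∃ b, IsLUB T b := by
  obtain ⟨u, hu⟩ := hT
  obtain ⟨b, hb⟩ := clr_exists_isLUB (Subtype.val '' T)
    ⟨u.1, by rintro _ ⟨t, ht, rfl⟩; exact hu ht⟩
  obtain ⟨t, ht⟩ := hne
  obtain ⟨y, hy⟩ := t.2
  refine ⟨⟨b, y, hy.trans_le (hb.1 ⟨t, ht, rfl⟩)⟩, ?_, ?_⟩
  · intro s hs; exact hb.1 ⟨s, hs, rfl⟩
  · intro v hv
    exact hb.2 (by rintro _ ⟨s, hs, rfl⟩; exact hv hs)

open Classical in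
/-- The conditionally complete linear order structure on the long ray. -/
@[reducible] def lrCCLO : ConditionallyCompleteLinearOrder LongRay :=
  let S : Set LongRay → LongRay := fun T =>
    if h : ∃ b, IsLUB T b then h.choose else Classical.arbitrary _
  let I : Set LongRay → LongRay := fun T =>
    if h : ∃ b, IsGLB T b then h.choose else Classical.arbitrary _
  have hS : ∀ T : Set LongRay, T.Nonempty → BddAbove T → IsLUB T (S T) := fun T h1 h2 => by
    have h := lr_exists_isLUB T h1 h2
    simp only [S, dif_pos h]
    exact h.choose_spec
  have hI : ∀ T : Set LongRay, T.Nonempty → BddBelow T → IsGLB T (I T) := fun T h1 h2 => by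
    have h : ∃ b, IsGLB T b := by
      obtain ⟨b, hb⟩ := lr_exists_isLUB (lowerBounds T) h2
        (by obtain ⟨t, ht⟩ := h1; exact ⟨t, fun x hx => hx ht⟩)
      exact ⟨b, isLUB_lowerBounds.1 hb⟩
    simp only [I, dif_pos h]
    exact h.choose_spec
  { (inferInstance : LinearOrder LongRay),
    (LinearOrder.toLattice : Lattice LongRay) with
    sSup := S
    sInf := I
    isLUB_csSup := hS
    isGLB_csInf := hI
    csSup_of_not_bddAbove := fun T hT => by
      have h1 : ¬ ∃ b, IsLUB T b := fun ⟨b, hb⟩ => hT ⟨b, hb.1⟩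
      have h2 : ¬ ∃ b, IsLUB (∅ : Set LongRay) b := fun ⟨b, hb⟩ => by
        obtain ⟨c, hc⟩ := exists_lt b
        exact absurd (hb.2 (show c ∈ _ by simp)) (not_le.2 hc)
      simp only [S, dif_neg h1, dif_neg h2]
    csInf_of_not_bddBelow := fun T hT => by
      have h1 : ¬ ∃ b, IsGLB T b := fun ⟨b, hb⟩ => hT ⟨b, hb.1⟩
      have h2 : ¬ ∃ b, IsGLB (∅ : Set LongRay) b := fun ⟨b, hb⟩ => by
        obtain ⟨c, hc⟩ := exists_gt b
        exact absurd (hb.2 (show c ∈ _ by simp)) (not_le.2 hc)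
      simp only [I, dif_neg h1, dif_neg h2] }

theorem lr_isPreconnected_Icc (a b : LongRay) : IsPreconnected (Icc a b) := by
  let := lrCCLO
  exact isPreconnected_Icc

/-- Countably many points of the long ray are bounded (indexed version). -/
theorem lr_bdd {κ : Type*} [Countable κ] (f : κ → LongRay) (b0 : LongRay) :
    ∃ b : LongRay, b0 ≤ b ∧ ∀ n, f n ≤ b := by
  rcases isEmpty_or_nonempty κ with h | h
  · exact ⟨b0, le_rfl, fun n => h.elim n⟩
  · obtain ⟨g, hg⟩ := exists_surjective_nat κ
    obtain ⟨b, hb⟩ := lr_exists_gt (fun n => f (g n))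
    refine ⟨max b0 b, le_max_left _ _, fun n => ?_⟩
    obtain ⟨m, rfl⟩ := hg n
    exact (hb m).le.trans (le_max_right _ _)

/-- A pressing-down lemma on the long ray. -/
theorem pressing {κ : Type*} [Countable κ] (α₀ : LongRay) (P : κ → LongRay → LongRay → Prop)
    (h : ∀ α, α₀ < α → ∃ k, ∃ l, l < α ∧ P k l α)
    (hmono : ∀ k l l' α, l ≤ l' → l' < α → P k l α → P k l' α) :
    ∃ k γ, α₀ ≤ γ ∧ ∀ δ, ∃ α, δ < α ∧ γ < α ∧ P k γ α := by
  by_contra hcon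
  push Not at hcon
  have key : ∀ γ, ∃ δ, γ < δ ∧ (α₀ ≤ γ → ∀ k α, δ < α → ¬ P k γ α) := by
    intro γ
    by_cases hγ : α₀ ≤ γ
    · choose d hd using fun k => hcon k γ hγ
      obtain ⟨b, hb0, hb⟩ := lr_bdd d γ
      obtain ⟨b', hb'⟩ := exists_gt b
      refine ⟨b', hb0.trans_lt hb', fun _ k α hα => ?_⟩
      exact hd k α ((hb k).trans_lt (hb'.trans hα)) (hb0.trans_lt (hb'.trans hα))
    · obtain ⟨b', hb'⟩ := exists_gt γ
      exact ⟨b', hb', fun h => absurd h hγ⟩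
  choose d hd1 hd2 using key
  let g : ℕ → LongRay := fun n => Nat.rec α₀ (fun _ x => d x) n
  have hg0 : g 0 = α₀ := rfl
  have hgs : ∀ n, g (n+1) = d (g n) := fun n => rfl
  have hlt : ∀ n, g n < g (n+1) := fun n => by rw [hgs]; exact hd1 _
  have hmon : StrictMono g := strictMono_nat_of_lt_succ hlt
  obtain ⟨b, hb⟩ := lr_exists_gt g
  obtain ⟨s, hs⟩ := lr_exists_isLUB (range g) ⟨_, mem_range_self 0⟩
    ⟨b, by rintro _ ⟨n, rfl⟩; exact (hb n).le⟩
  have hs' : ∀ n, g n < s := fun n => (hlt n).trans_le (hs.1 (mem_range_self (n+1)))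
  obtain ⟨k, l, hl, hP⟩ := h s (hg0 ▸ hs' 0)
  obtain ⟨_, ⟨n, rfl⟩, hn⟩ := (lt_isLUB_iff hs).1 hl
  have := hmono k l (g n) s hn.le (hs' n) hP
  exact hd2 (g n) (hg0 ▸ hmon.monotone (Nat.zero_le n)) k s (hgs n ▸ hs' (n+1)) this

/-- Real continuous functions on the long ray are eventually constant. -/
theorem eventually_const (g : LongRay → ℝ) (γ : LongRay) (hg : ContinuousOn g (Ici γ)) :
    ∃ γ', γ ≤ γ' ∧ ∀ s t, γ' ≤ s → γ' ≤ t → g s = g t := by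
  have h1 : ∀ n : ℕ, ∃ γ', ∀ s t, γ' < s → γ' < t → |g s - g t| < 2 * (1 / ((n:ℝ) + 1)) := by
    intro n
    have hpos : 0 < 1 / ((n:ℝ) + 1) := Nat.one_div_pos_of_nat
    obtain ⟨-, γ', hγ', h⟩ := pressing (κ := Unit) γ
      (fun _ l α => ∀ s, l < s → s ≤ α → |g s - g α| < 1 / ((n:ℝ) + 1))
      (by
        intro α hα
        refine ⟨(), ?_⟩
        have hc : ContinuousAt g α := hg.continuousAt (Ici_mem_nhds hα)
        have := Metric.continuousAt_iff'.1 hc _ hpos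
        obtain ⟨l, hl, hl'⟩ := exists_Ioc_subset_of_mem_nhds this (exists_lt α)
        refine ⟨l, hl, fun s h1 h2 => ?_⟩
        exact hl' ⟨h1, h2⟩)
      (by
        intro _ l l' α h1 h2 h3 s hs1 hs2
        exact h3 s (h1.trans_lt hs1) hs2)
    refine ⟨γ', fun s t hs ht => ?_⟩
    obtain ⟨α, hα, -, hP⟩ := h (max s t)
    have a1 := hP s hs ((le_max_left _ _).trans hα.le)
    have a2 := hP t ht ((le_max_right _ _).trans hα.le)
    rw [abs_lt] at *
    constructor <;> linarith [a1.1, a1.2, a2.1, a2.2]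
  choose d hd using h1
  obtain ⟨b, hb0, hb⟩ := lr_bdd d γ
  obtain ⟨b', hb'⟩ := exists_gt b
  refine ⟨b', hb0.trans hb'.le, fun s t hs ht => ?_⟩
  by_contra hne
  have hpos : 0 < |g s - g t| := abs_pos.2 (sub_ne_zero.2 hne)
  obtain ⟨n, hn⟩ := exists_nat_one_div_lt (half_pos hpos)
  have := hd n s t ((hb n).trans_lt (hb'.trans_le hs)) ((hb n).trans_lt (hb'.trans_le ht))
  linarith

/-! ### Real analysis lemmas -/

theorem factor_cont {K : Type*} [TopologicalSpace K] {S : Set K} (hS : IsCompact S) (f g : K → ℝ)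
    (hf : ContinuousOn f S) (hg : ContinuousOn g S)
    (hfg : ∀ p ∈ S, ∀ q ∈ S, f p = f q → g p = g q) :
    ∃ h : ℝ → ℝ, ContinuousOn h (f '' S) ∧ ∀ p ∈ S, h (f p) = g p := by
  classical
  have hex : ∀ y : ℝ, ∃ z : ℝ, ∀ p ∈ S, f p = y → g p = z := by
    intro y
    by_cases hy : ∃ p ∈ S, f p = y
    · obtain ⟨p, hp, rfl⟩ := hy
      exact ⟨g p, fun q hq hqp => hfg q hq p hp hqp⟩
    · exact ⟨0, fun p hp hpy => absurd ⟨p, hp, hpy⟩ hy⟩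
  choose h hh using hex
  have hh' : ∀ p ∈ S, h (f p) = g p := fun p hp => (hh _ p hp rfl).symm
  refine ⟨h, ?_, hh'⟩
  rw [continuousOn_iff_isClosed]
  intro T hT
  obtain ⟨u, hu, hu'⟩ := continuousOn_iff_isClosed.1 hg T hT
  have hc : IsCompact (S ∩ u) := hS.inter_right hu
  refine ⟨f '' (S ∩ u), (hc.image_of_continuousOn (hf.mono inter_subset_left)).isClosed, ?_⟩
  ext y
  constructor
  · rintro ⟨hy, p, hp, rfl⟩
    have hy' : g p ∈ T := by rw [← hh' p hp]; exact hy
    have : p ∈ u ∩ S := hu' ▸ ⟨hy', hp⟩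
    exact ⟨⟨p, ⟨hp, this.1⟩, rfl⟩, p, hp, rfl⟩
  · rintro ⟨⟨p, ⟨hp, hpu⟩, rfl⟩, -⟩
    have : p ∈ g ⁻¹' T ∩ S := hu' ▸ ⟨hpu, hp⟩
    refine ⟨?_, p, hp, rfl⟩
    change h (f p) ∈ T
    rw [hh' p hp]; exact this.1

theorem exists_rat_mem {u w : ℝ} (huw : u < w) {f : ℝ → ℝ} (hf : ContinuousOn f (Icc u w))
    {O : Set ℝ} (hO : IsOpen O) {x : ℝ} (hx : x ∈ Icc u w) (hxO : f x ∈ O) :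
    ∃ q : ℚ, (q : ℝ) ∈ Ioo u w ∧ f q ∈ O := by
  obtain ⟨V, hV, hV'⟩ := continuousOn_iff'.1 hf O hO
  have hxV : x ∈ V := by
    have : x ∈ f ⁻¹' O ∩ Icc u w := ⟨hxO, hx⟩
    rw [hV'] at this; exact this.1
  have hcl : x ∈ closure (Ioo u w) := by rw [closure_Ioo huw.ne]; exact hx
  obtain ⟨z, hz⟩ := mem_closure_iff.1 hcl V hV hxV
  obtain ⟨_, hq, ⟨q, rfl⟩⟩ := (Rat.denseRange_cast (𝕜 := ℝ)).inter_open_nonempty (V ∩ Ioo u w)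
    (hV.inter isOpen_Ioo) ⟨z, hz⟩
  refine ⟨q, hq.2, ?_⟩
  have : (q : ℝ) ∈ V ∩ Icc u w := ⟨hq.1, Ioo_subset_Icc_self hq.2⟩
  rw [← hV'] at this; exact this.1

/-- There is no triod in the real line. -/
theorem no_triod {A B C : Set ℝ} (hA : IsPreconnected A) (hB : IsPreconnected B)
    (hC : IsPreconnected C) {p a b c : ℝ} (hpA : p ∈ A) (hpB : p ∈ B) (hpC : p ∈ C)
    (ha : a ∈ A) (hb : b ∈ B) (hc : c ∈ C) (hap : a ≠ p) (hbp : b ≠ p) (hcp : c ≠ p)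
    (hAB : ∀ x, x ∈ A → x ∈ B → x = p) (hAC : ∀ x, x ∈ A → x ∈ C → x = p)
    (hBC : ∀ x, x ∈ B → x ∈ C → x = p) : False := by
  have oA := hA.ordConnected
  have oB := hB.ordConnected
  have oC := hC.ordConnected
  have two_pos : ∀ {A B : Set ℝ} (_ : A.OrdConnected) (_ : B.OrdConnected) {a b : ℝ}, p ∈ A →
      p ∈ B → a ∈ A → b ∈ B → p < a → p < b → (∀ x, x ∈ A → x ∈ B → x = p) → False := by
    intro A B oA oB a b h1 h2 h3 h4 h5 h6 h7
    have hm : p < min a b := lt_min h5 h6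
    exact hm.ne' (h7 _ (oA.out h1 h3 ⟨hm.le, min_le_left _ _⟩)
      (oB.out h2 h4 ⟨hm.le, min_le_right _ _⟩))
  have two_neg : ∀ {A B : Set ℝ} (_ : A.OrdConnected) (_ : B.OrdConnected) {a b : ℝ}, p ∈ A →
      p ∈ B → a ∈ A → b ∈ B → a < p → b < p → (∀ x, x ∈ A → x ∈ B → x = p) → False := by
    intro A B oA oB a b h1 h2 h3 h4 h5 h6 h7
    have hm : max a b < p := max_lt h5 h6
    exact hm.ne (h7 _ (oA.out h3 h1 ⟨le_max_left _ _, hm.le⟩)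
      (oB.out h4 h2 ⟨le_max_right _ _, hm.le⟩))
  rcases lt_or_gt_of_ne hap with h1 | h1 <;> rcases lt_or_gt_of_ne hbp with h2 | h2 <;>
    rcases lt_or_gt_of_ne hcp with h3 | h3
  · exact two_neg oA oB hpA hpB ha hb h1 h2 hAB
  · exact two_neg oA oB hpA hpB ha hb h1 h2 hAB
  · exact two_neg oA oC hpA hpC ha hc h1 h3 hAC
  · exact two_pos oB oC hpB hpC hb hc h2 h3 hBC
  · exact two_neg oB oC hpB hpC hb hc h2 h3 hBC
  · exact two_pos oA oC hpA hpC ha hc h1 h3 hAC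
  · exact two_pos oA oB hpA hpB ha hb h1 h2 hAB
  · exact two_pos oA oB hpA hpB ha hb h1 h2 hAB

/-- One-dimensional invariance of domain. -/
theorem image_mem_nhds_of_inj {f : ℝ → ℝ} {x δ : ℝ} (hδ : 0 < δ)
    (hf : ContinuousOn f (Icc (x - δ) (x + δ))) (hi : InjOn f (Icc (x - δ) (x + δ))) :
    f '' (Icc (x - δ) (x + δ)) ∈ 𝓝 (f x) := by
  have hle : x - δ ≤ x + δ := by linarith
  have m1 : x - δ ∈ Icc (x - δ) (x + δ) := ⟨le_rfl, hle⟩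
  have m2 : x ∈ Icc (x - δ) (x + δ) := ⟨by linarith, by linarith⟩
  have m3 : x + δ ∈ Icc (x - δ) (x + δ) := ⟨hle, le_rfl⟩
  rcases hf.strictMonoOn_of_injOn_Icc' hle hi with h | h
  · have h1 := h m1 m2 (by linarith)
    have h2 := h m2 m3 (by linarith)
    exact mem_of_superset (Icc_mem_nhds h1 h2) (intermediate_value_Icc hle hf)
  · have h1 := h m1 m2 (by linarith)
    have h2 := h m2 m3 (by linarith)
    exact mem_of_superset (Icc_mem_nhds h2 h1) (intermediate_value_Icc' hle hf)

/-! ### The circle -/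

abbrev Sph : Type := Metric.sphere (0 : EuclideanSpace ℝ (Fin 2)) 1

/-- Angle parametrisation of the circle. -/
def ang (θ : ℝ) : Sph := ⟨!₂[Real.cos θ, Real.sin θ], by
  simp [EuclideanSpace.norm_eq, Fin.sum_univ_two]⟩

theorem ang_continuous : Continuous ang := by
  unfold ang
  refine Continuous.subtype_mk ?_ _
  refine (PiLp.continuous_toLp 2 _).comp ?_
  refine continuous_pi fun i => ?_
  fin_cases i <;> simp <;> fun_prop

theorem ang_zero (θ : ℝ) : (ang θ).1 0 = Real.cos θ := by simp [ang]
theorem ang_one (θ : ℝ) : (ang θ).1 1 = Real.sin θ := by simp [ang]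

theorem sph_eq (z : Sph) : z.1 0 ^ 2 + z.1 1 ^ 2 = 1 := by
  have := z.2
  rw [mem_sphere_zero_iff_norm, EuclideanSpace.norm_eq, Real.sqrt_eq_one, Fin.sum_univ_two] at this
  simpa using this

theorem ang_surj (z : Sph) : ∃ θ, ang θ = z := by
  have h := sph_eq z
  have hn : ‖(⟨z.1 0, z.1 1⟩ : ℂ)‖ = 1 := by
    rw [← sq_eq_sq₀ (norm_nonneg _) zero_le_one, Complex.sq_norm, Complex.normSq_mk]
    linarith
  refine ⟨Complex.arg ⟨z.1 0, z.1 1⟩, ?_⟩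
  apply Subtype.ext
  ext i
  fin_cases i
  · change (ang _).1 0 = z.1 0
    rw [ang_zero]
    have := Complex.norm_mul_cos_arg (⟨z.1 0, z.1 1⟩ : ℂ)
    rw [hn, one_mul] at this
    exact this
  · change (ang _).1 1 = z.1 1
    rw [ang_one]
    have := Complex.norm_mul_sin_arg (⟨z.1 0, z.1 1⟩ : ℂ)
    rw [hn, one_mul] at this
    exact this

theorem ang_inj {x y : ℝ} (h : ang x = ang y) (h1 : -(2 * Real.pi) < x - y)
    (h2 : x - y < 2 * Real.pi) : x = y := by
  have c := congrArg (fun z : Sph => z.1 0) h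
  have s := congrArg (fun z : Sph => z.1 1) h
  simp only [ang_zero, ang_one] at c s
  have : Real.cos (x - y) = 1 := by
    rw [Real.cos_sub, c, s]; nlinarith [Real.sin_sq_add_cos_sq y]
  have := (Real.cos_eq_one_iff_of_lt_of_lt h1 h2).1 this
  linarith

/-- local linear coordinates on the circle -/
def cC (θ : ℝ) (z : Sph) : ℝ := z.1 0 * Real.cos θ + z.1 1 * Real.sin θ
def sC (θ : ℝ) (z : Sph) : ℝ := z.1 1 * Real.cos θ - z.1 0 * Real.sin θ

theorem cC_continuous (θ : ℝ) : Continuous (cC θ) := by unfold cC; fun_prop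
theorem sC_continuous (θ : ℝ) : Continuous (sC θ) := by unfold sC; fun_prop

theorem sC_inj {θ : ℝ} {z w : Sph} (hz : 0 < cC θ z) (hw : 0 < cC θ w) (h : sC θ z = sC θ w) :
    z = w := by
  have hs := Real.sin_sq_add_cos_sq θ
  have e1 : cC θ z ^ 2 + sC θ z ^ 2 = 1 := by
    have : cC θ z ^ 2 + sC θ z ^ 2 = (z.1 0 ^ 2 + z.1 1 ^ 2) * (Real.sin θ ^ 2 + Real.cos θ ^ 2) := by
      unfold cC sC; ring
    rw [this, sph_eq, hs]; ring
  have e2 : cC θ w ^ 2 + sC θ w ^ 2 = 1 := by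
    have : cC θ w ^ 2 + sC θ w ^ 2 = (w.1 0 ^ 2 + w.1 1 ^ 2) * (Real.sin θ ^ 2 + Real.cos θ ^ 2) := by
      unfold cC sC; ring
    rw [this, sph_eq, hs]; ring
  have hc : cC θ z = cC θ w := by
    rw [← sq_eq_sq₀ hz.le hw.le]; rw [h] at e1; linarith
  have r0 : ∀ v : Sph, v.1 0 = cC θ v * Real.cos θ - sC θ v * Real.sin θ := by
    intro v
    have : cC θ v * Real.cos θ - sC θ v * Real.sin θ = v.1 0 * (Real.sin θ ^ 2 + Real.cos θ ^ 2) := by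
      unfold cC sC; ring
    rw [this, hs, mul_one]
  have r1 : ∀ v : Sph, v.1 1 = cC θ v * Real.sin θ + sC θ v * Real.cos θ := by
    intro v
    have : cC θ v * Real.sin θ + sC θ v * Real.cos θ = v.1 1 * (Real.sin θ ^ 2 + Real.cos θ ^ 2) := by
      unfold cC sC; ring
    rw [this, hs, mul_one]
  apply Subtype.ext
  ext i
  fin_cases i
  · change z.1 0 = w.1 0
    rw [r0 z, r0 w, h, hc]
  · change z.1 1 = w.1 1
    rw [r1 z, r1 w, h, hc]

theorem cC_self (θ : ℝ) : 0 < cC θ (ang θ) := by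
  unfold cC; rw [ang_zero, ang_one]; nlinarith [Real.sin_sq_add_cos_sq θ]

/-- An injective path in the circle covers a neighbourhood. -/
theorem circle_domain {ρ : ℝ → Sph} (hρ : Continuous ρ) (hi : Function.Injective ρ) {t θ : ℝ}
    (ht : ρ t = ang θ) : ∀ᶠ x in 𝓝 θ, ang x ∈ range ρ := by
  have h1 : ∀ᶠ s in 𝓝 t, 0 < cC θ (ρ s) :=
    ((cC_continuous θ).comp hρ).continuousAt.eventually
      (lt_mem_nhds (by simp only [Function.comp, ht]; exact cC_self θ))
  obtain ⟨δ, hδ, hb⟩ := Metric.nhds_basis_closedBall.mem_iff.1 h1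
  rw [Real.closedBall_eq_Icc] at hb
  have hn := image_mem_nhds_of_inj (f := fun s => sC θ (ρ s)) hδ
    (((sC_continuous θ).comp hρ).continuousOn)
    (fun s hs s' hs' he => hi (sC_inj (hb hs) (hb hs') he))
  simp only [ht] at hn
  have h2 : ∀ᶠ x in 𝓝 θ, 0 < cC θ (ang x) :=
    ((cC_continuous θ).comp ang_continuous).continuousAt.eventually (lt_mem_nhds (cC_self θ))
  have h3 := ((sC_continuous θ).comp ang_continuous).continuousAt (x := θ) hn
  filter_upwards [h2, h3] with x hx hx'
  obtain ⟨s, hs, hs'⟩ := hx'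
  exact ⟨s, sC_inj (hb hs) hx hs'⟩

/-! ### Charts of a foliation by curves on a surface -/

section charts

variable {M : Type u} [TopologicalSpace M] (F : Foliation M 1 1)

open Classical in
/-- transverse coordinate -/
def fY (i : F.ι) (p : M) : ℝ := if h : p ∈ F.U i then (F.chart i ⟨p, h⟩).2 0 else 0

open Classical in
/-- coordinate along the leaves -/
def fT (i : F.ι) (p : M) : ℝ := if h : p ∈ F.U i then (F.chart i ⟨p, h⟩).1 0 else 0

/-- inverse chart -/
def fG (i : F.ι) (t y : ℝ) : M := ((F.chart i).symm (fun _ => t, fun _ => y)).1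

theorem fY_of {i : F.ι} {p : M} (h : p ∈ F.U i) : fY F i p = (F.chart i ⟨p, h⟩).2 0 := dif_pos h
theorem fT_of {i : F.ι} {p : M} (h : p ∈ F.U i) : fT F i p = (F.chart i ⟨p, h⟩).1 0 := dif_pos h

theorem fY_cont (i : F.ι) : ContinuousOn (fY F i) (F.U i) := by
  rw [continuousOn_iff_continuous_restrict]
  have : (F.U i).domRestrict (fY F i) = fun p => (F.chart i p).2 0 := by
    ext p; exact fY_of F p.2
  rw [this]
  exact (continuous_apply 0).comp (continuous_snd.comp (F.chart i).continuous)

theorem fT_cont (i : F.ι) : ContinuousOn (fT F i) (F.U i) := by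
  rw [continuousOn_iff_continuous_restrict]
  have : (F.U i).domRestrict (fT F i) = fun p => (F.chart i p).1 0 := by
    ext p; exact fT_of F p.2
  rw [this]
  exact (continuous_apply 0).comp (continuous_fst.comp (F.chart i).continuous)

theorem fG_mem (i : F.ι) (t y : ℝ) : fG F i t y ∈ F.U i := ((F.chart i).symm _).2

theorem fY_fG (i : F.ι) (t y : ℝ) : fY F i (fG F i t y) = y := by
  rw [fY_of F (fG_mem F i t y)]; simp [fG]

theorem fT_fG (i : F.ι) (t y : ℝ) : fT F i (fG F i t y) = t := by
  rw [fT_of F (fG_mem F i t y)]; simp [fG]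

theorem fG_eq {i : F.ι} {p : M} (h : p ∈ F.U i) : fG F i (fT F i p) (fY F i p) = p := by
  rw [fT_of F h, fY_of F h]
  have h1 : (fun _ : Fin 1 => (F.chart i ⟨p, h⟩).1 0) = (F.chart i ⟨p, h⟩).1 := by
    ext j; rw [Subsingleton.elim j 0]
  have h2 : (fun _ : Fin 1 => (F.chart i ⟨p, h⟩).2 0) = (F.chart i ⟨p, h⟩).2 := by
    ext j; rw [Subsingleton.elim j 0]
  unfold fG
  rw [h1, h2]
  simp

theorem fG_cont (i : F.ι) (y : ℝ) : Continuous (fun t => fG F i t y) := by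
  unfold fG
  refine continuous_subtype_val.comp ((F.chart i).symm.continuous.comp ?_)
  fun_prop

theorem f_inj {i : F.ι} {p q : M} (hp : p ∈ F.U i) (hq : q ∈ F.U i) (hT : fT F i p = fT F i q)
    (hY : fY F i p = fY F i q) : p = q := by
  rw [← fG_eq F hp, ← fG_eq F hq, hT, hY]

/-- Being on the same level in some chart. -/
def SL (p q : M) : Prop := ∃ i, p ∈ F.U i ∧ q ∈ F.U i ∧ fY F i p = fY F i q

variable {F}

theorem SL.symm {p q : M} (h : SL F p q) : SL F q p := by
  obtain ⟨i, h1, h2, h3⟩ := h; exact ⟨i, h2, h1, h3.symm⟩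

theorem SL.level {p q : M} (h : SL F p q) {j : F.ι} (hp : p ∈ F.U j) (hq : q ∈ F.U j) :
    fY F j p = fY F j q := by
  obtain ⟨i, h1, h2, h3⟩ := h
  rw [fY_of F hp, fY_of F hq]
  refine congrFun (F.compat i j p q h1 hp h2 hq ?_) 0
  rw [fY_of F h1, fY_of F h2] at h3
  ext k; rw [Subsingleton.elim k 0]; exact h3

theorem plaqueFibre_eq (i : F.ι) (y : Fin 1 → ℝ) :
    F.plaqueFibre i y = range (fun t => fG F i t (y 0)) := by
  ext w
  constructor
  · rintro ⟨hw, h⟩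
    refine ⟨fT F i w, ?_⟩
    have : y 0 = fY F i w := by rw [fY_of F hw, h]
    simp only [this]
    exact fG_eq F hw
  · rintro ⟨t, rfl⟩
    refine ⟨fG_mem F i t _, ?_⟩
    have := fY_fG F i t (y 0)
    rw [fY_of F (fG_mem F i t _)] at this
    ext k; rw [Subsingleton.elim k 0]; exact this

theorem samePlaque_iff (p q : M) : F.samePlaque p q ↔ SL F p q := by
  constructor
  · rintro ⟨P, ⟨i, y, z, hz, rfl⟩, hp, hq⟩
    obtain ⟨hp1, hp2⟩ := connectedComponentIn_subset _ _ hp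
    obtain ⟨hq1, hq2⟩ := connectedComponentIn_subset _ _ hq
    exact ⟨i, hp1, hq1, by rw [fY_of F hp1, fY_of F hq1, hp2, hq2]⟩
  · rintro ⟨i, hp, hq, h⟩
    have hpf : p ∈ F.plaqueFibre i (F.chart i ⟨p, hp⟩).2 := ⟨hp, rfl⟩
    have hqf : q ∈ F.plaqueFibre i (F.chart i ⟨p, hp⟩).2 := by
      refine ⟨hq, ?_⟩
      rw [fY_of F hp, fY_of F hq] at h
      ext k; rw [Subsingleton.elim k 0]; exact h.symm
    have hpre : IsPreconnected (F.plaqueFibre i (F.chart i ⟨p, hp⟩).2) := by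
      rw [plaqueFibre_eq]
      exact isPreconnected_range (fG_cont F i _)
    refine ⟨_, ⟨i, _, p, hpf, rfl⟩, mem_connectedComponentIn hpf, ?_⟩
    exact hpre.subset_connectedComponentIn hpf subset_rfl hqf

theorem SL.leafRel {p q : M} (h : SL F p q) : F.leafRel p q :=
  Relation.EqvGen.rel _ _ ((samePlaque_iff p q).2 h)

theorem leafRel_closed {S : Set M} (hS : ∀ p q, p ∈ S → SL F p q → q ∈ S) {p q : M}
    (h : F.leafRel p q) : p ∈ S ↔ q ∈ S := by
  induction h with
  | rel x y h =>
    rw [samePlaque_iff] at h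
    exact ⟨fun hx => hS x y hx h, fun hy => hS y x hy h.symm⟩
  | refl x => rfl
  | symm x y _ ih => exact ih.symm
  | trans x y z _ _ ih1 ih2 => exact ih1.trans ih2

theorem leaf_SL {L : Set M} (hL : F.IsLeaf L) {p q : M} (hp : p ∈ L) (h : SL F p q) : q ∈ L := by
  obtain ⟨x, rfl⟩ := hL
  exact Relation.EqvGen.trans _ _ _ hp h.leafRel

theorem leaf_leafRel {L : Set M} (hL : F.IsLeaf L) {p q : M} (hp : p ∈ L) (hq : q ∈ L) :
    F.leafRel p q := by
  obtain ⟨x, rfl⟩ := hL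
  exact Relation.EqvGen.trans _ _ _ (Relation.EqvGen.symm _ _ hp) hq

theorem leaf_mem {L : Set M} (hL : F.IsLeaf L) {p q : M} (hp : p ∈ L) (h : F.leafRel p q) :
    q ∈ L := by
  obtain ⟨x, rfl⟩ := hL
  exact Relation.EqvGen.trans _ _ _ hp h

end charts

/-! ### Horizontal circles -/

section main

variable (F : Foliation (Sph × LongRay) 1 1)

/-- points of the cylinder -/
abbrev pt (x : ℝ) (s : LongRay) : Sph × LongRay := (ang x, s)

theorem pt_cont : Continuous (fun q : ℝ × LongRay => pt q.1 q.2) :=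
  (ang_continuous.comp continuous_fst).prodMk continuous_snd

theorem pt_cont_left (s : LongRay) : Continuous (fun x => pt x s) :=
  ang_continuous.prodMk continuous_const

theorem pt_cont_right (x : ℝ) : Continuous (fun s => pt x s) :=
  continuous_const.prodMk continuous_id

abbrev circ (α : LongRay) : Set (Sph × LongRay) := {p | p.2 = α}

def LocHor (α : LongRay) : Prop := ∀ θ : ℝ, ∀ᶠ x in 𝓝 θ, SL F (pt θ α) (pt x α)

variable {F}

theorem LocHor.isLeaf {α : LongRay} (h : LocHor F α) : F.IsLeaf (circ α) := by
  have hall : ∀ θ, F.leafRel (pt 0 α) (pt θ α) := by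
    have hcl : IsClopen {θ : ℝ | F.leafRel (pt 0 α) (pt θ α)} := by
      constructor
      · rw [← isOpen_compl_iff, isOpen_iff_mem_nhds]
        intro θ hθ
        filter_upwards [h θ] with x hx hx'
        exact hθ (Relation.EqvGen.trans _ _ _ hx' hx.symm.leafRel)
      · rw [isOpen_iff_mem_nhds]
        intro θ hθ
        filter_upwards [h θ] with x hx
        exact Relation.EqvGen.trans _ _ _ hθ hx.leafRel
    have : {θ : ℝ | F.leafRel (pt 0 α) (pt θ α)} = univ :=
      hcl.eq_univ ⟨0, Relation.EqvGen.refl _⟩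
    intro θ
    have h2 : θ ∈ {θ : ℝ | F.leafRel (pt 0 α) (pt θ α)} := this ▸ mem_univ θ
    exact h2
  have hsat : ∀ p q, p ∈ circ α → SL F p q → q ∈ circ α := by
    rintro p q hp ⟨i, hpi, hqi, hpq⟩
    set y := fY F i p with hy
    have hcl : IsClopen {t : ℝ | (fG F i t y).2 = α} := by
      constructor
      · exact isClosed_eq (continuous_snd.comp (fG_cont F i y)) continuous_const
      · rw [isOpen_iff_mem_nhds]
        intro t ht
        obtain ⟨θ, hθ⟩ := ang_surj (fG F i t y).1
        have hpt : pt θ α = fG F i t y := Prod.ext hθ ht.symm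
        have hU : ∀ᶠ x in 𝓝 θ, pt x α ∈ F.U i :=
          (pt_cont_left α).continuousAt ((F.isOpen i).mem_nhds (hpt ▸ fG_mem F i t y))
        obtain ⟨δ, hδ, hb⟩ := Metric.nhds_basis_closedBall.mem_iff.1
          ((h θ).and (hU.and (Metric.closedBall_mem_nhds θ one_pos)))
        rw [Real.closedBall_eq_Icc] at hb
        have hlev : ∀ x ∈ Icc (θ - δ) (θ + δ), fY F i (pt x α) = y := by
          intro x hx
          rw [← (hb hx).1.level (hpt ▸ fG_mem F i t y) (hb hx).2.1, hpt, fY_fG]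
        have hn := image_mem_nhds_of_inj (f := fun x => fT F i (pt x α)) hδ
          ((fT_cont F i).comp (pt_cont_left α).continuousOn (fun x hx => (hb hx).2.1))
          (fun x hx x' hx' he => by
            have := f_inj F (hb hx).2.1 (hb hx').2.1 he (by rw [hlev x hx, hlev x' hx'])
            have ha : ang x = ang x' := congrArg Prod.fst this
            have b1 : x ∈ Metric.closedBall θ 1 := (hb hx).2.2
            have b2 : x' ∈ Metric.closedBall θ 1 := (hb hx').2.2
            rw [Real.closedBall_eq_Icc] at b1 b2
            have := Real.pi_gt_three
            exact ang_inj ha (by linarith [b1.1, b2.2]) (by linarith [b1.2, b2.1]))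
        simp only [hpt, fT_fG] at hn
        refine mem_of_superset hn ?_
        rintro _ ⟨x, hx, rfl⟩
        change (fG F i (fT F i (pt x α)) y).2 = α
        rw [← hlev x hx, fG_eq F (hb hx).2.1]
    have hu : {t : ℝ | (fG F i t y).2 = α} = univ := by
      refine hcl.eq_univ ⟨fT F i p, ?_⟩
      change (fG F i (fT F i p) y).2 = α
      rw [hy, fG_eq F hpi]; exact hp
    have : fT F i q ∈ {t : ℝ | (fG F i t y).2 = α} := hu ▸ mem_univ _
    change (fG F i (fT F i q) y).2 = α at this
    rw [hpq, fG_eq F hqi] at this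
    exact this
  refine ⟨pt 0 α, ?_⟩
  ext p
  constructor
  · rintro rfl
    obtain ⟨θ, hθ⟩ := ang_surj p.1
    have : p = pt θ p.2 := Prod.ext hθ.symm rfl
    change F.leafRel _ p
    have h2 := hall θ
    rwa [← this] at h2
  · intro hp
    exact (leafRel_closed hsat hp).1 rfl

/-- On a horizontal circle leaf the level is constant on arcs inside a chart. -/
theorem level_const {α : LongRay} (hL : F.IsLeaf (circ α)) {i : F.ι} {a b : ℝ}
    (hU : ∀ x ∈ Icc a b, pt x α ∈ F.U i) {x x' : ℝ} (hx : x ∈ Icc a b) (hx' : x' ∈ Icc a b) :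
    fY F i (pt x α) = fY F i (pt x' α) := by
  have hps : PreconnectedSpace (Icc a b) := Subtype.preconnectedSpace isPreconnected_Icc
  have hloc : IsLocallyConstant (fun z : Icc a b => fY F i (pt z α)) := by
    rw [IsLocallyConstant.iff_eventually_eq]
    rintro ⟨θ, hθ⟩
    set y := fY F i (pt θ α) with hy
    have hθU := hU θ hθ
    have hmem : ∀ t, fG F i t y ∈ circ α := fun t =>
      leaf_SL hL (p := pt θ α) rfl ⟨i, hθU, fG_mem F i t y, by rw [fY_fG]⟩
    have hev := circle_domain (ρ := fun t => (fG F i t y).1)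
      (continuous_fst.comp (fG_cont F i y))
      (fun t t' h => by
        have : fG F i t y = fG F i t' y := Prod.ext h ((hmem t).trans (hmem t').symm)
        rw [← fT_fG F i t y, this, fT_fG])
      (t := fT F i (pt θ α)) (θ := θ) (by simp only [hy, fG_eq F hθU])
    have hev' := continuous_subtype_val.continuousAt (x := (⟨θ, hθ⟩ : Icc a b)) hev
    filter_upwards [hev'] with z hz
    obtain ⟨t, ht⟩ := hz
    have : fG F i t y = pt z α := Prod.ext ht (hmem t)
    rw [← this, fY_fG]
  exact hloc.apply_eq_of_preconnectedSpace ⟨x, hx⟩ ⟨x', hx'⟩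

theorem club_closed : IsClosed {α : LongRay | F.IsLeaf (circ α)} := by
  rw [isClosed_iff_clusterPt]
  intro α hα
  rw [← mem_closure_iff_clusterPt] at hα
  apply LocHor.isLeaf
  intro θ
  obtain ⟨i, hi⟩ := F.covers (pt θ α)
  have hn : ∀ᶠ q in 𝓝 (θ, α), pt q.1 q.2 ∈ F.U i :=
    pt_cont.continuousAt ((F.isOpen i).mem_nhds hi)
  rw [nhds_prod_eq] at hn
  obtain ⟨A, hA, B, hB, hAB⟩ := eventually_prod_iff.1 hn
  obtain ⟨δ, hδ, hb⟩ := Metric.nhds_basis_closedBall.mem_iff.1 hA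
  rw [Real.closedBall_eq_Icc] at hb
  filter_upwards [Icc_mem_nhds (show θ - δ < θ by linarith) (show θ < θ + δ by linarith)]
    with x hx
  have hθ : θ ∈ Icc (θ - δ) (θ + δ) := ⟨by linarith, by linarith⟩
  have hBα := hB.self_of_nhds
  refine ⟨i, hi, hAB (hb hx) hBα, ?_⟩
  by_contra hne
  have c1 : ∀ z ∈ Icc (θ - δ) (θ + δ), ContinuousAt (fun s => fY F i (pt z s)) α := by
    intro z hz
    have : ContinuousAt (fY F i) (pt z α) :=
      (fY_cont F i).continuousAt ((F.isOpen i).mem_nhds (hAB (hb hz) hBα))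
    exact ContinuousAt.comp (f := fun s => pt z s) this (pt_cont_right z).continuousAt
  have hev : ∀ᶠ s in 𝓝 α, fY F i (pt θ s) ≠ fY F i (pt x s) := 
    (ContinuousAt.ne_iff_eventually_ne (c1 θ hθ) (c1 x hx)).1 hne
  obtain ⟨s, ⟨hs1, hs2⟩, hs3⟩ := mem_closure_iff_nhds.1 hα _ (hev.and hB)
  exact hs1 (level_const hs3 (fun z hz => hAB (hb hz) hs2) hθ hx)

/-! ### The main dichotomy -/

variable (F) in
/-- `[a,b] × [β,α]` lies in a single chart, for every `α`. -/
def Good (a b : ℝ) (β : LongRay) : Prop :=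
  ∀ α, ∃ i, ∀ x ∈ Icc a b, ∀ s, β ≤ s → s ≤ α → pt x s ∈ F.U i

theorem Good.mono {a b : ℝ} {β β' : LongRay} (h : Good F a b β) (hb : β ≤ β') :
    Good F a b β' := fun α => by
  obtain ⟨i, hi⟩ := h α
  exact ⟨i, fun x hx s hs => hi x hx s (hb.trans hs)⟩

theorem exists_good (θ : ℝ) : ∃ a b : ℚ, (a : ℝ) < θ ∧ θ < b ∧ ∃ β, Good F a b β := by
  obtain ⟨k, γ, -, h⟩ := pressing (κ := ℚ × ℚ) (Classical.arbitrary LongRay)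
    (fun k l α => (k.1 : ℝ) < θ ∧ θ < k.2 ∧
      ∃ i, ∀ x ∈ Icc (k.1 : ℝ) k.2, ∀ s, l < s → s ≤ α → pt x s ∈ F.U i)
    (by
      intro α _
      obtain ⟨i, hi⟩ := F.covers (pt θ α)
      have hn : ∀ᶠ q in 𝓝 (θ, α), pt q.1 q.2 ∈ F.U i :=
        pt_cont.continuousAt ((F.isOpen i).mem_nhds hi)
      rw [nhds_prod_eq] at hn
      obtain ⟨A, hA, B, hB, hAB⟩ := eventually_prod_iff.1 hn
      obtain ⟨δ, hδ, hb⟩ := Metric.nhds_basis_closedBall.mem_iff.1 hA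
      rw [Real.closedBall_eq_Icc] at hb
      obtain ⟨a, ha1, ha2⟩ := exists_rat_btwn (show θ - δ < θ by linarith)
      obtain ⟨b, hb1, hb2⟩ := exists_rat_btwn (show θ < θ + δ by linarith)
      obtain ⟨l, hl, hl'⟩ := exists_Ioc_subset_of_mem_nhds hB (exists_lt α)
      refine ⟨(a, b), l, hl, ha2, hb1, i, fun x hx s hs1 hs2 => ?_⟩
      exact hAB (hb ⟨ha1.le.trans hx.1, hx.2.trans hb2.le⟩) (hl' ⟨hs1, hs2⟩))
    (by
      rintro k l l' α h1 h2 ⟨h3, h4, i, hi⟩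
      exact ⟨h3, h4, i, fun x hx s hs => hi x hx s (h1.trans_lt hs)⟩)
  obtain ⟨β, hβ⟩ := exists_gt γ
  obtain ⟨_, _, _, ha, hb, _⟩ := h γ
  refine ⟨k.1, k.2, ha, hb, β, fun α => ?_⟩
  obtain ⟨α', hα', _, _, _, i, hi⟩ := h α
  exact ⟨i, fun x hx s hs1 hs2 => hi x hx s (hβ.trans_le hs1) (hs2.trans hα'.le)⟩

variable (F) in
theorem exists_beta : ∃ β, ∀ a b : ℚ, (∃ β', Good F a b β') → Good F a b β := by
  classical
  have : ∀ k : ℚ × ℚ, ∃ β, (∃ β', Good F k.1 k.2 β') → Good F k.1 k.2 β := by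
    intro k
    by_cases h : ∃ β', Good F k.1 k.2 β'
    · obtain ⟨β, hβ⟩ := h; exact ⟨β, fun _ => hβ⟩
    · exact ⟨Classical.arbitrary _, fun h' => absurd h' h⟩
  choose d hd using this
  obtain ⟨b, -, hb⟩ := lr_bdd d (Classical.arbitrary _)
  exact ⟨b, fun x y h => (hd (x, y) h).mono (hb (x, y))⟩

variable (F) in
/-- angles along which the foliation is ultimately vertical -/
def EV : Set ℝ := {θ | ∃ γ, ∀ s t, γ ≤ s → γ ≤ t → SL F (pt θ s) (pt θ t)}

theorem mem_EV_of_trapped {a b : ℝ} {β γ : LongRay} (hg : Good F a b β) (hγ : β ≤ γ) {x : ℝ}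
    (hx : x ∈ Icc a b) (h : ∀ s, γ ≤ s → ∃ ξ ∈ Icc a b, SL F (pt ξ γ) (pt x s)) : x ∈ EV F := by
  obtain ⟨i0, hi0⟩ := hg γ
  have hi0' : ∀ ξ ∈ Icc a b, pt ξ γ ∈ F.U i0 := fun ξ hξ => hi0 ξ hξ γ hγ le_rfl
  have h' : ∀ s, ∃ ξ, γ ≤ s → ξ ∈ Icc a b ∧ SL F (pt ξ γ) (pt x s) := by
    intro s
    by_cases hs : γ ≤ s
    · obtain ⟨ξ, h1, h2⟩ := h s hs; exact ⟨ξ, fun _ => ⟨h1, h2⟩⟩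
    · exact ⟨0, fun h => absurd h hs⟩
  choose ξ hξ using h'
  have hcont : ContinuousOn (fun s => fY F i0 (pt (ξ s) γ)) (Ici γ) := by
    intro s0 hs0
    obtain ⟨α, hα⟩ := exists_gt s0
    obtain ⟨j, hj⟩ := hg α
    have hγα : γ ≤ α := (show γ ≤ s0 from hs0).trans hα.le
    have hjγ : ∀ ξ ∈ Icc a b, pt ξ γ ∈ F.U j := fun ξ hξ => hj ξ hξ γ hγ hγα
    obtain ⟨k, hk, hk'⟩ := factor_cont (isCompact_Icc (a := a) (b := b))
      (fun ξ => fY F j (pt ξ γ)) (fun ξ => fY F i0 (pt ξ γ))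
      ((fY_cont F j).comp (pt_cont_left γ).continuousOn hjγ)
      ((fY_cont F i0).comp (pt_cont_left γ).continuousOn hi0')
      (fun p hp q hq hpq => SL.level ⟨j, hjγ p hp, hjγ q hq, hpq⟩ (hi0' p hp) (hi0' q hq))
    have hxs : ∀ s ∈ Icc γ α, pt x s ∈ F.U j := fun s hs => hj x hx s (hγ.trans hs.1) hs.2
    have hlev : ∀ s ∈ Icc γ α, fY F j (pt (ξ s) γ) = fY F j (pt x s) := fun s hs =>
      (hξ s hs.1).2.level (hjγ _ (hξ s hs.1).1) (hxs s hs)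
    have c1 : ContinuousOn (fun s => k (fY F j (pt x s))) (Icc γ α) := by
      refine ContinuousOn.comp (g := k) hk
        ((fY_cont F j).comp (pt_cont_right x).continuousOn hxs) ?_
      intro s hs
      exact ⟨ξ s, (hξ s hs.1).1, hlev s hs⟩
    have c2 : ContinuousOn (fun s => fY F i0 (pt (ξ s) γ)) (Icc γ α) := by
      refine c1.congr fun s hs => ?_
      change _ = k (fY F j (pt x s))
      rw [← hlev s hs]
      exact (hk' (ξ s) (hξ s hs.1).1).symm
    refine (c2 s0 ⟨hs0, hα.le⟩).mono_of_mem_nhdsWithin ?_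
    rw [← Ici_inter_Iic]
    exact inter_mem self_mem_nhdsWithin (mem_nhdsWithin_of_mem_nhds (Iic_mem_nhds hα))
  obtain ⟨γ', hγ', hconst⟩ := eventually_const _ γ hcont
  refine ⟨γ', fun s t hs ht => ?_⟩
  have e := hconst s t hs ht
  have hs' := hγ'.trans hs
  have ht' := hγ'.trans ht
  obtain ⟨j, hj⟩ := hg (max s t)
  have us := hj x hx s (hγ.trans hs') (le_max_left _ _)
  have ut := hj x hx t (hγ.trans ht') (le_max_right _ _)
  have gs := hj (ξ s) (hξ s hs').1 γ hγ (hs'.trans (le_max_left _ _))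
  have gt := hj (ξ t) (hξ t ht').1 γ hγ (hs'.trans (le_max_left _ _))
  refine ⟨j, us, ut, ?_⟩
  rw [← (hξ s hs').2.level gs us, ← (hξ t ht').2.level gt ut]
  exact SL.level ⟨i0, hi0' _ (hξ s hs').1, hi0' _ (hξ t ht').1, e⟩ gs gt

theorem exists_EV {κ : Type*} [Countable κ] (a b u w : κ → ℝ) (β α₀ : LongRay)
    (hg : ∀ k, Good F (a k) (b k) β) (hau : ∀ k, a k ≤ u k) (hwb : ∀ k, w k ≤ b k)
    (h : ∀ α, α₀ < α → ∃ k, ∃ x ∈ Icc (u k) (w k), ∃ x' ∈ Icc (u k) (w k),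
      ¬ SL F (pt x α) (pt x' α)) :
    ∃ k, ∃ x ∈ Ioo (u k) (w k), x ∈ EV F := by
  obtain ⟨⟨k, x1, x2, x3⟩, γ, hγ, hP⟩ := pressing (κ := κ × ℚ × ℚ × ℚ) (max α₀ β)
    (fun K l α => (K.2.1 : ℝ) ∈ Ioo (u K.1) (w K.1) ∧ (K.2.2.1 : ℝ) ∈ Ioo (u K.1) (w K.1) ∧
      (K.2.2.2 : ℝ) ∈ Ioo (u K.1) (w K.1) ∧ ∃ i, ∃ c d : ℝ,
      (∀ x ∈ Icc (a K.1) (b K.1), ∀ s, β ≤ s → s ≤ α → pt x s ∈ F.U i) ∧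
      ∀ s, l < s → β ≤ s → s ≤ α → fY F i (pt K.2.1 s) < c ∧ c < fY F i (pt K.2.2.1 s) ∧
        fY F i (pt K.2.2.1 s) < d ∧ d < fY F i (pt K.2.2.2 s))
    (by
      intro α hα
      have hα0 := (le_max_left α₀ β).trans_lt hα
      have hαβ := (le_max_right α₀ β).trans_lt hα
      obtain ⟨k, x, hx, x', hx', hne⟩ := h α hα0
      obtain ⟨α', hα'⟩ := exists_gt α
      obtain ⟨i, hi⟩ := hg k α'
      have hsub : Icc (u k) (w k) ⊆ Icc (a k) (b k) := Icc_subset_Icc (hau k) (hwb k)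
      have hiα : ∀ z ∈ Icc (u k) (w k), pt z α ∈ F.U i := fun z hz =>
        hi z (hsub hz) α hαβ.le hα'.le
      set f : ℝ → ℝ := fun z => fY F i (pt z α) with hf
      have hfc : ContinuousOn f (Icc (u k) (w k)) :=
        (fY_cont F i).comp (pt_cont_left α).continuousOn hiα
      have hfne : f x ≠ f x' := fun he => hne ⟨i, hiα x hx, hiα x' hx', he⟩
      have hord : ∃ x ∈ Icc (u k) (w k), ∃ x' ∈ Icc (u k) (w k), f x < f x' := by
        rcases lt_or_gt_of_ne hfne with h | h
        · exact ⟨x, hx, x', hx', h⟩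
        · exact ⟨x', hx', x, hx, h⟩
      obtain ⟨x, hx, x', hx', hlt⟩ := hord
      have huw : u k < w k := by
        rcases (hx.1.trans hx.2).lt_or_eq with h | h
        · exact h
        · exfalso
          have e1 : x = x' := by linarith [hx.1, hx.2, hx'.1, hx'.2]
          rw [e1] at hlt; exact lt_irrefl _ hlt
      obtain ⟨c, hc1, hc2⟩ := exists_between hlt
      obtain ⟨d, hd1, hd2⟩ := exists_between hc2
      obtain ⟨m, hm1, hm2⟩ := exists_between hd1
      obtain ⟨z, hz, hzm⟩ := isPreconnected_Icc.intermediate_value hx hx' hfc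
        ⟨(hc1.trans hm1).le, (hm2.trans hd2).le⟩
      obtain ⟨q1, hq1, hq1'⟩ := exists_rat_mem huw hfc (isOpen_Iio (a := c)) hx hc1
      obtain ⟨q2, hq2, hq2'⟩ := exists_rat_mem huw hfc (isOpen_Ioo (a := c) (b := d)) hz
        (by rw [hzm]; exact ⟨hm1, hm2⟩)
      obtain ⟨q3, hq3, hq3'⟩ := exists_rat_mem huw hfc (isOpen_Ioi (a := d)) hx' hd2
      have c1 : ∀ z ∈ Ioo (u k) (w k), ContinuousAt (fun s => fY F i (pt z s)) α := by
        intro z hz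
        have : ContinuousAt (fY F i) (pt z α) :=
          (fY_cont F i).continuousAt ((F.isOpen i).mem_nhds (hiα z (Ioo_subset_Icc_self hz)))
        exact ContinuousAt.comp (f := fun s => pt z s) this (pt_cont_right z).continuousAt
      have ev1 := (c1 q1 hq1).eventually (isOpen_Iio.mem_nhds hq1')
      have ev2 := (c1 q2 hq2).eventually (isOpen_Ioo.mem_nhds hq2')
      have ev3 := (c1 q3 hq3).eventually (isOpen_Ioi.mem_nhds hq3')
      obtain ⟨l, hl, hl'⟩ := exists_Ioc_subset_of_mem_nhds (ev1.and (ev2.and ev3)) (exists_lt α)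
      refine ⟨(k, q1, q2, q3), l, hl, hq1, hq2, hq3, i, c, d, ?_, ?_⟩
      · intro x hx s h1 h2; exact hi x hx s h1 (h2.trans hα'.le)
      · intro s h1 _ h2
        have := hl' ⟨h1, h2⟩
        exact ⟨this.1, this.2.1.1, this.2.1.2, this.2.2⟩)
    (by
      rintro K l l' α h1 h2 ⟨a1, a2, a3, i, c, d, a4, a5⟩
      exact ⟨a1, a2, a3, i, c, d, a4, fun s hs => a5 s (h1.trans_lt hs)⟩)
  obtain ⟨γ', hγ'⟩ := exists_gt γ
  have hβγ : β ≤ γ' := ((le_max_right α₀ β).trans hγ).trans hγ'.le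
  obtain ⟨_, _, _, m1, m2, m3, _⟩ := hP γ
  simp only at m1 m2 m3 hP
  have hsub : Ioo (u k) (w k) ⊆ Icc (a k) (b k) := fun z hz =>
    ⟨(hau k).trans hz.1.le, hz.2.le.trans (hwb k)⟩
  refine ⟨k, x2, m2, mem_EV_of_trapped (hg k) hβγ (hsub m2) fun s hs => ?_⟩
  obtain ⟨α, hα, -, -, -, -, i, c, d, hU, hsep⟩ := hP s
  have hγα : γ' ≤ α := hs.trans hα.le
  have hc : ContinuousOn (fun z => fY F i (pt z γ')) (Icc (a k) (b k)) :=
    (fY_cont F i).comp (pt_cont_left γ').continuousOn (fun z hz => hU z hz γ' hβγ hγα)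
  have s1 := hsep γ' hγ' hβγ hγα
  have s2 := hsep s (hγ'.trans_le hs) (hβγ.trans hs) hα.le
  obtain ⟨ξ, hξ, hξ'⟩ := isPreconnected_Icc.intermediate_value (hsub m1) (hsub m3) hc
    (show fY F i (pt x2 s) ∈ _ from ⟨(s1.1.trans s2.2.1).le, (s2.2.2.1.trans s1.2.2.2).le⟩)
  exact ⟨ξ, hξ, i, hU ξ hξ γ' hβγ hγα, hU x2 (hsub m2) s (hβγ.trans hs) hα.le, hξ'⟩

/-- passing to the limit in a good box -/
theorem vertical_closure {a b : ℝ} {β γ : LongRay} (hg : Good F a b β) (hγ : β ≤ γ) {D : Set ℝ}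
    (hD : ∀ x ∈ D, x ∈ Icc a b → ∀ s t, γ ≤ s → γ ≤ t → SL F (pt x s) (pt x t)) {x : ℝ}
    (hx : x ∈ closure (D ∩ Icc a b)) :
    ∀ s t, γ ≤ s → γ ≤ t → SL F (pt x s) (pt x t) := by
  intro s t hs ht
  have hxm : x ∈ Icc a b := closure_minimal inter_subset_right isClosed_Icc hx
  obtain ⟨i, hi⟩ := hg (max s t)
  have us : ∀ z ∈ Icc a b, pt z s ∈ F.U i := fun z hz =>
    hi z hz s (hγ.trans hs) (le_max_left _ _)
  have ut : ∀ z ∈ Icc a b, pt z t ∈ F.U i := fun z hz =>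
    hi z hz t (hγ.trans ht) (le_max_right _ _)
  refine ⟨i, us x hxm, ut x hxm, ?_⟩
  have cs : ContinuousAt (fun z => fY F i (pt z s)) x :=
    ContinuousAt.comp (f := fun z => pt z s)
      ((fY_cont F i).continuousAt ((F.isOpen i).mem_nhds (us x hxm))) (pt_cont_left s).continuousAt
  have ct : ContinuousAt (fun z => fY F i (pt z t)) x :=
    ContinuousAt.comp (f := fun z => pt z t)
      ((fY_cont F i).continuousAt ((F.isOpen i).mem_nhds (ut x hxm))) (pt_cont_left t).continuousAt
  by_contra hne
  obtain ⟨z, hz1, hz2, hz3⟩ := mem_closure_iff_nhds.1 hx _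
    ((ContinuousAt.ne_iff_eventually_ne cs ct).1 hne)
  exact hz1 ((hD z hz2 hz3 s t hs ht).level (us z hz3) (ut z hz3))

theorem EV_closed {a b : ℝ} {β : LongRay} (hg : Good F a b β) {x : ℝ}
    (hx : x ∈ closure (EV F ∩ Icc a b)) : x ∈ EV F := by
  obtain ⟨z, hz, hzx⟩ := mem_closure_iff_seq_limit.1 hx
  choose g hgz using fun n => (hz n).1
  obtain ⟨γ, hγβ, hγ⟩ := lr_bdd g β
  refine ⟨γ, vertical_closure hg hγβ (D := range z) ?_ ?_⟩
  · rintro _ ⟨n, rfl⟩ _ s t hs ht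
    exact hgz n s t ((hγ n).trans hs) ((hγ n).trans ht)
  · exact mem_closure_of_tendsto hzx (Eventually.of_forall fun n => ⟨mem_range_self n, (hz n).2⟩)

/-- No horizontal arc crosses a vertical one. -/
theorem not_horizontal {a b : ℝ} {β : LongRay} (hg : Good F a b β) {u w x : ℝ} (hau : a ≤ u)
    (hwb : w ≤ b) (huw : u < w) (hx : x ∈ Icc u w) (hxE : x ∈ EV F) :
    ∃ α₀, ∀ α, α₀ < α → ∃ x ∈ Icc u w, ∃ x' ∈ Icc u w, ¬ SL F (pt x α) (pt x' α) := by
  obtain ⟨γ, hγ⟩ := hxE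
  refine ⟨max γ β, fun α hα => ?_⟩
  by_contra hcon
  push Not at hcon
  have hγα : max γ β ≤ α := hα.le
  obtain ⟨τ, hτ⟩ := exists_gt α
  set σ := max γ β with hσ
  obtain ⟨i, hi⟩ := hg τ
  have hsub : Icc u w ⊆ Icc a b := Icc_subset_Icc hau hwb
  have hv : ∀ s ∈ Icc σ τ, pt x s ∈ F.U i := fun s hs =>
    hi x (hsub hx) s ((le_max_right _ _).trans hs.1) hs.2
  have hh : ∀ z ∈ Icc u w, pt z α ∈ F.U i := fun z hz =>
    hi z (hsub hz) α ((le_max_right _ _).trans hγα) hτ.le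
  have hvY : ∀ s ∈ Icc σ τ, fY F i (pt x s) = fY F i (pt x α) := fun s hs =>
    (hγ s α ((le_max_left _ _).trans hs.1) ((le_max_left _ _).trans hγα)).level (hv s hs)
      (hv α ⟨hγα, hτ.le⟩)
  have hhY : ∀ z ∈ Icc u w, fY F i (pt z α) = fY F i (pt x α) := fun z hz =>
    (hcon z hz x hx).level (hh z hz) (hh x hx)
  have hvc : ContinuousOn (fun s => fT F i (pt x s)) (Icc σ τ) :=
    (fT_cont F i).comp (pt_cont_right x).continuousOn hv
  have hhc : ContinuousOn (fun z => fT F i (pt z α)) (Icc u w) :=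
    (fT_cont F i).comp (pt_cont_left α).continuousOn hh
  have s1 : Icc σ α ⊆ Icc σ τ := Icc_subset_Icc le_rfl hτ.le
  have s2 : Icc α τ ⊆ Icc σ τ := Icc_subset_Icc hγα le_rfl
  have hz : ∃ z ∈ Icc u w, z ≠ x ∧ -(2 * Real.pi) < z - x ∧ z - x < 2 * Real.pi := by
    have hpi := Real.pi_gt_three
    rcases hx.2.lt_or_eq with h | h
    · refine ⟨min w (x + 1), ⟨le_min huw.le (by linarith [hx.1]), min_le_left _ _⟩, ?_, ?_, ?_⟩
      · exact (lt_min h (by linarith)).ne'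
      · have := lt_min h (show x < x + 1 by linarith)
        linarith
      · have := min_le_right w (x + 1)
        linarith
    · have hux : u < x := h ▸ huw
      refine ⟨max u (x - 1), ⟨le_max_left _ _, max_le huw.le (by linarith [hx.2])⟩, ?_, ?_, ?_⟩
      · exact (max_lt hux (by linarith)).ne
      · have := le_max_right u (x - 1)
        linarith
      · have := max_lt hux (show x - 1 < x by linarith)
        linarith
  obtain ⟨z, hz, hzx, hz1, hz2⟩ := hz
  have mα : α ∈ Icc σ τ := ⟨hγα, hτ.le⟩
  have vinj : ∀ s ∈ Icc σ τ, ∀ t ∈ Icc σ τ, fT F i (pt x s) = fT F i (pt x t) → s = t := by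
    intro s hs t ht he
    exact congrArg Prod.snd (f_inj F (hv s hs) (hv t ht) he (by rw [hvY s hs, hvY t ht]))
  have hvcross : ∀ s ∈ Icc σ τ, ∀ z ∈ Icc u w, fT F i (pt x s) = fT F i (pt z α) → s = α := by
    intro s hs z hz he
    exact congrArg Prod.snd (f_inj F (hv s hs) (hh z hz) he (by rw [hvY s hs, hhY z hz]))
  refine no_triod (p := fT F i (pt x α))
    ((lr_isPreconnected_Icc σ α).image _ (hvc.mono s1))
    ((lr_isPreconnected_Icc α τ).image _ (hvc.mono s2))
    ((isPreconnected_Icc (a := u) (b := w)).image _ hhc)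
    ⟨α, ⟨hγα, le_rfl⟩, rfl⟩ ⟨α, ⟨le_rfl, hτ.le⟩, rfl⟩ ⟨x, hx, rfl⟩
    ⟨σ, ⟨le_rfl, hγα⟩, rfl⟩ ⟨τ, ⟨hτ.le, le_rfl⟩, rfl⟩ ⟨z, hz, rfl⟩ ?_ ?_ ?_ ?_ ?_ ?_
  · intro he
    exact hα.ne (vinj σ ⟨le_rfl, hγα.trans hτ.le⟩ α mα he)
  · intro he
    exact hτ.ne' (vinj τ ⟨hγα.trans hτ.le, le_rfl⟩ α mα he)
  · intro he
    have := congrArg Prod.fst (f_inj F (hh z hz) (hh x hx) he (hhY z hz))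
    exact hzx (ang_inj this hz1 hz2)
  · rintro _ ⟨s, hs, rfl⟩ ⟨t, ht, hst⟩
    have := vinj t (s2 ht) s (s1 hs) hst
    subst this
    have : t = α := le_antisymm hs.2 ht.1
    rw [this]
  · rintro _ ⟨s, hs, rfl⟩ ⟨z, hz, he⟩
    rw [hvcross s (s1 hs) z hz he.symm]
  · rintro _ ⟨s, hs, rfl⟩ ⟨z, hz, he⟩
    rw [hvcross s (s2 hs) z hz he.symm]

theorem EV_gap {a b : ℝ} {β : LongRay} (hg : Good F a b β) {u w x : ℝ} (hau : a ≤ u)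
    (hwb : w ≤ b) (huw : u < w) (hx : x ∈ Icc u w) (hxE : x ∈ EV F) :
    ∃ z ∈ Ioo u w, z ∈ EV F := by
  obtain ⟨α₀, h⟩ := not_horizontal hg hau hwb huw hx hxE
  obtain ⟨-, hz⟩ := exists_EV (κ := Unit) (fun _ => a) (fun _ => b) (fun _ => u) (fun _ => w) β α₀
    (fun _ => hg) (fun _ => hau) (fun _ => hwb) (fun α hα => ⟨(), h α hα⟩)
  exact hz

theorem EV_all {a b : ℝ} {β : LongRay} (hg : Good F a b β) {x : ℝ} (hx : x ∈ Icc a b)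
    (hxE : x ∈ EV F) : Icc a b ⊆ EV F := by
  intro w hw
  by_contra hwE
  have hcl : IsClosed (EV F ∩ Icc a b) := isClosed_of_closure_subset fun z hz =>
    ⟨EV_closed hg hz, closure_minimal inter_subset_right isClosed_Icc hz⟩
  rcases lt_trichotomy x w with h | h | h
  · have hK : IsCompact (EV F ∩ Icc a b ∩ Icc x w) := isCompact_Icc.inter_left hcl
    obtain ⟨m, hm, hmax⟩ := hK.exists_isGreatest ⟨x, ⟨hxE, hx⟩, le_rfl, h.le⟩
    have hmw : m < w := lt_of_le_of_ne hm.2.2 (fun e => hwE (e ▸ hm.1.1))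
    obtain ⟨z, hz, hzE⟩ := EV_gap hg hm.1.2.1 hw.2 hmw ⟨le_rfl, hmw.le⟩ hm.1.1
    have := hmax ⟨⟨hzE, hm.1.2.1.trans hz.1.le, hz.2.le.trans hw.2⟩, hm.2.1.trans hz.1.le, hz.2.le⟩
    exact absurd hz.1 (not_lt.2 this)
  · exact hwE (h ▸ hxE)
  · have hK : IsCompact (EV F ∩ Icc a b ∩ Icc w x) := isCompact_Icc.inter_left hcl
    obtain ⟨m, hm, hmin⟩ := hK.exists_isLeast ⟨x, ⟨hxE, hx⟩, h.le, le_rfl⟩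
    have hmw : w < m := lt_of_le_of_ne hm.2.1 (fun e => hwE (e ▸ hm.1.1))
    obtain ⟨z, hz, hzE⟩ := EV_gap hg hw.1 hm.1.2.2 hmw ⟨hmw.le, le_rfl⟩ hm.1.1
    have := hmin ⟨⟨hzE, hw.1.trans hz.1.le, hz.2.le.trans hm.1.2.2⟩, hz.1.le, hz.2.le.trans hm.2.2⟩
    exact absurd hz.2 (not_lt.2 this)

variable (F) in
theorem EV_dichotomy : EV F = ∅ ∨ EV F = univ := by
  rw [← isClopen_iff]
  constructor
  · rw [← isOpen_compl_iff, isOpen_iff_mem_nhds]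
    intro θ hθ
    obtain ⟨a, b, ha, hb, β, hg⟩ := exists_good (F := F) θ
    filter_upwards [Icc_mem_nhds ha hb] with x hx hxE
    exact hθ (EV_all hg hx hxE ⟨ha.le, hb.le⟩)
  · rw [isOpen_iff_mem_nhds]
    intro θ hθ
    obtain ⟨a, b, ha, hb, β, hg⟩ := exists_good (F := F) θ
    filter_upwards [Icc_mem_nhds ha hb] with x hx
    exact EV_all hg ⟨ha.le, hb.le⟩ hθ hx

theorem vertical_of_EV (h : EV F = univ) :
    ∃ γ : LongRay, ∀ θ s t, γ ≤ s → γ ≤ t → SL F (pt θ s) (pt θ t) := by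
  have h' : ∀ q : ℚ, (q : ℝ) ∈ EV F := fun q => h ▸ mem_univ _
  choose g hgq using h'
  obtain ⟨β, hβ⟩ := exists_beta F
  obtain ⟨γ, hγβ, hγ⟩ := lr_bdd g β
  refine ⟨γ, fun θ => ?_⟩
  obtain ⟨a, b, ha, hb, hg⟩ := exists_good (F := F) θ
  refine vertical_closure (hβ a b hg) hγβ (D := range ((↑) : ℚ → ℝ)) ?_ ?_
  · rintro _ ⟨q, rfl⟩ _ s t hs ht
    exact hgq q s t ((hγ q).trans hs) ((hγ q).trans ht)
  · rw [mem_closure_iff]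
    intro O hO hθ
    obtain ⟨_, hq, ⟨q, rfl⟩⟩ := (Rat.denseRange_cast (𝕜 := ℝ)).inter_open_nonempty
      (O ∩ Ioo (a : ℝ) b) (hO.inter isOpen_Ioo) ⟨θ, hθ, ha, hb⟩
    exact ⟨q, hq.1, mem_range_self q, Ioo_subset_Icc_self hq.2⟩

theorem unbounded_of_EV (h : EV F = ∅) (δ : LongRay) :
    ∃ α, F.IsLeaf (circ α) ∧ δ ≤ α := by
  by_contra hcon
  push Not at hcon
  obtain ⟨β, hβ⟩ := exists_beta F
  obtain ⟨k, x, -, hx⟩ := exists_EV (F := F)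
    (κ := {k : ℚ × ℚ // ∃ β', Good F k.1 k.2 β'}) (fun k => k.1.1) (fun k => k.1.2)
    (fun k => k.1.1) (fun k => k.1.2) β δ (fun k => hβ _ _ k.2) (fun _ => le_rfl)
    (fun _ => le_rfl) (by
      intro α hα
      by_contra hno
      push Not at hno
      refine absurd hα.le (not_le.2 (hcon α (LocHor.isLeaf fun θ => ?_)))
      obtain ⟨a, b, ha, hb, hg⟩ := exists_good (F := F) θ
      filter_upwards [Icc_mem_nhds ha hb] with x hx
      exact hno ⟨(a, b), hg⟩ θ ⟨ha.le, hb.le⟩ x hx)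
  rw [h] at hx
  exact hx

end main

/-- A dimension-one foliation on `𝕊¹ × 𝕃₊` satisfies exactly one of:
(i) the set of `α` such that `𝕊¹ × {α}` is a leaf is closed and unbounded in `𝕃₊`;
(ii) the foliation is ultimately vertical. -/
theorem statement1
    (F : Foliation ((Metric.sphere (0 : EuclideanSpace ℝ (Fin 2)) 1) × LongRay) 1 1) :
    Xor'
      (ClubInLongRay {α : LongRay |
        F.IsLeaf {p : (Metric.sphere (0 : EuclideanSpace ℝ (Fin 2)) 1) × LongRay | p.2 = α}})
      (∃ α : LongRay, ∀ z : Metric.sphere (0 : EuclideanSpace ℝ (Fin 2)) 1,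
        ∃ L, F.IsLeaf L ∧
          {p : (Metric.sphere (0 : EuclideanSpace ℝ (Fin 2)) 1) × LongRay |
            p.1 = z ∧ α < p.2} ⊆ L) := by
  have hex : ¬ (ClubInLongRay {α : LongRay | F.IsLeaf (circ α)} ∧
      ∃ α : LongRay, ∀ z : Sph, ∃ L, F.IsLeaf L ∧
        {p : Sph × LongRay | p.1 = z ∧ α < p.2} ⊆ L) := by
    rintro ⟨⟨-, hunb⟩, α, hα⟩
    obtain ⟨β, hβ⟩ := exists_gt α
    obtain ⟨η, hη, hβη⟩ := hunb β
    obtain ⟨τ, hτ⟩ := exists_gt η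
    obtain ⟨L, hL, hsub⟩ := hα (ang 0)
    have hαη : α < η := hβ.trans_le hβη
    have m1 : pt 0 η ∈ L := hsub ⟨rfl, hαη⟩
    have m2 : pt 0 τ ∈ L := hsub ⟨rfl, hαη.trans hτ⟩
    have : pt 0 τ ∈ circ η := leaf_mem hη (p := pt 0 η) rfl (leaf_leafRel hL m1 m2)
    exact hτ.ne' this
  rcases EV_dichotomy F with h | h
  · have hclub : ClubInLongRay {α : LongRay | F.IsLeaf (circ α)} :=
      ⟨club_closed, fun β => unbounded_of_EV h β⟩
    exact Or.inl ⟨hclub, fun h2 => hex ⟨hclub, h2⟩⟩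
  · have hv : ∃ α : LongRay, ∀ z : Sph, ∃ L, F.IsLeaf L ∧
        {p : Sph × LongRay | p.1 = z ∧ α < p.2} ⊆ L := by
      obtain ⟨γ, hγ⟩ := vertical_of_EV h
      refine ⟨γ, fun z => ?_⟩
      obtain ⟨θ, rfl⟩ := ang_surj z
      refine ⟨_, ⟨pt θ γ, rfl⟩, ?_⟩
      rintro ⟨z, s⟩ ⟨rfl, hs⟩
      exact (hγ θ γ s le_rfl (le_of_lt hs)).leafRel
    exact Or.inr ⟨hv, fun h1 => hex ⟨h1, hv⟩⟩
end
end

section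
/- Let M be an m-manifold, N a connected n-manifold, and ℱ a foliation of dimension n on the product (m+n)-manifold M × N. Suppose there is a dense subset D ⊆ M such that for each d ∈ D the set {d} × N is a leaf of ℱ. Then for every x ∈ M the set {x} × N is a leaf of ℱ, i.e. ℱ is the trivial product foliation with leaves {x} × N. -/
noncomputable section

open Set Topology Filter

universe u

/-- Lagrange interpolation for `t ↦ det (1 + t A)`. -/
lemma aux_det_interp (n : ℕ) (v : Fin (n+1) → ℝ) (hv : Function.Injective v) :
    ∃ c : Fin (n+1) → ℝ, (∑ i, c i = 1) ∧
      ∀ A : EuclideanSpace ℝ (Fin n) →L[ℝ] EuclideanSpace ℝ (Fin n),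
        (1 + A).det = ∑ i, c i * (1 + v i • A).det := by
  refine ⟨fun i => (Lagrange.basis Finset.univ v i).eval 1, ?_, ?_⟩
  · have h := Lagrange.sum_basis (s := Finset.univ) (v := v) hv.injOn ⟨0, Finset.mem_univ _⟩
    have h2 := congrArg (Polynomial.eval (1:ℝ)) h
    simpa [Polynomial.eval_finsetSum] using h2
  · intro A
    let b := (EuclideanSpace.basisFun (Fin n) ℝ).toBasis
    let Mx := LinearMap.toMatrix b b A.toLinearMap
    let P : Polynomial ℝ := ((Polynomial.X : Polynomial ℝ) • Mx.map Polynomial.C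
      + (1 : Matrix (Fin n) (Fin n) ℝ).map Polynomial.C).det
    have hP : ∀ t : ℝ, P.eval t = (1 + t • A).det := by
      intro t
      have h1 : (1 + t • A).det = LinearMap.det
        ((1 + t • A : EuclideanSpace ℝ (Fin n) →L[ℝ] EuclideanSpace ℝ (Fin n)).toLinearMap) := rfl
      rw [h1, ← LinearMap.det_toMatrix b]
      have h2 : LinearMap.toMatrix b b
          ((1 + t • A : EuclideanSpace ℝ (Fin n) →L[ℝ] EuclideanSpace ℝ (Fin n)).toLinearMap)
          = t • Mx + 1 := by
        have : ((1 + t • A : EuclideanSpace ℝ (Fin n) →L[ℝ]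
            EuclideanSpace ℝ (Fin n)).toLinearMap)
          = t • A.toLinearMap + LinearMap.id := by
          apply LinearMap.ext
          intro x
          simp [add_comm]
        rw [this, map_add, map_smul, LinearMap.toMatrix_id]
      rw [h2]
      have h3 : P.eval t = Polynomial.evalRingHom t P := rfl
      rw [h3, RingHom.map_det]
      congr 1
      ext i j
      simp [Matrix.one_apply]
      split_ifs <;> simp [mul_comm]
    have hdeg : P.degree < (Finset.univ : Finset (Fin (n+1))).card := by
      have := Polynomial.natDegree_det_X_add_C_le Mx (1 : Matrix (Fin n) (Fin n) ℝ)
      refine lt_of_le_of_lt Polynomial.degree_le_natDegree ?_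
      simp only [Fintype.card_fin, Finset.card_univ] at this ⊢
      exact_mod_cast Nat.lt_succ_of_le this
    have h4 := Lagrange.eq_interpolate (s := Finset.univ) (v := v) hv.injOn hdeg
    have h5 := congrArg (Polynomial.eval (1:ℝ)) h4
    rw [hP, Lagrange.interpolate_apply, Polynomial.eval_finsetSum, one_smul] at h5
    rw [h5]
    refine Finset.sum_congr rfl fun i _ => ?_
    rw [Polynomial.eval_mul, Polynomial.eval_C, hP, mul_comm]

/-- The map `id + t u` for a small Lipschitz `u` vanishing outside the ball. -/
lemma aux_bij {E : Type*} [NormedAddCommGroup E] [NormedSpace ℝ E] [CompleteSpace E]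
    (u : E → E) (K : NNReal) (hu : LipschitzWith K u) (t : ℝ) (ht0 : 0 < t) (htK : t * K < 1) :
    Function.Bijective (fun x => x + t • u x) := by
  constructor
  · intro x y hxy
    have h1 : x - y = t • (u y - u x) := by
      have : x + t • u x = y + t • u y := hxy
      rw [smul_sub, sub_eq_sub_iff_add_eq_add, this, add_comm]
    have h2 : ‖x - y‖ ≤ t * (K * ‖x - y‖) := by
      calc ‖x - y‖ = ‖t • (u y - u x)‖ := by rw [← h1]
        _ = t * ‖u y - u x‖ := by rw [norm_smul, Real.norm_of_nonneg ht0.le]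
        _ ≤ t * (K * ‖y - x‖) := by gcongr; exact hu.norm_sub_le y x
        _ = t * (K * ‖x - y‖) := by rw [norm_sub_rev]
    have h3 : ‖x - y‖ = 0 := by
      have := norm_nonneg (x - y)
      nlinarith
    exact sub_eq_zero.1 (norm_eq_zero.1 h3)
  · intro y
    have hc : ContractingWith (t.toNNReal * K) (fun x => y - t • u x) := by
      constructor
      · rw [← NNReal.coe_lt_coe]
        simpa [Real.coe_toNNReal _ ht0.le] using htK
      · apply LipschitzWith.of_dist_le_mul
        intro a b
        rw [dist_eq_norm, dist_eq_norm]
        have : y - t • u a - (y - t • u b) = t • (u b - u a) := by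
          rw [smul_sub]; abel
        rw [this, norm_smul, Real.norm_of_nonneg ht0.le]
        simp only [NNReal.coe_mul, Real.coe_toNNReal _ ht0.le]
        rw [mul_assoc]
        gcongr
        rw [norm_sub_rev a b]
        exact hu.norm_sub_le b a
    refine ⟨ContractingWith.fixedPoint _ hc, ?_⟩
    have := hc.fixedPoint_isFixedPt
    have h2 : y - t • u (ContractingWith.fixedPoint _ hc) = ContractingWith.fixedPoint _ hc := this
    have h3 := sub_eq_iff_eq_add.1 h2
    exact h3.symm

/-- Extension by zero of a map vanishing on the unit sphere is Lipschitz. -/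
lemma aux_lip {E : Type*} [NormedAddCommGroup E] [NormedSpace ℝ E]
    (u : E → E) (K : NNReal) (hu : LipschitzOnWith K u (Metric.closedBall 0 1))
    (h0 : ∀ x, ‖x‖ = 1 → u x = 0) :
    LipschitzWith K (fun x => @ite _ (‖x‖ ≤ 1) (Classical.dec _) (u x) 0) := by
  have key : ∀ x y : E, ‖x‖ ≤ 1 → ¬ ‖y‖ ≤ 1 → ‖u x‖ ≤ K * ‖x - y‖ := by
    intro x y hx hy
    have hc : ContinuousOn (fun s : ℝ => ‖x + s • (y - x)‖) (Icc 0 1) := by fun_prop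
    have hm := intermediate_value_Icc (zero_le_one) hc
    have h1 : (1:ℝ) ∈ Icc ‖x + (0:ℝ) • (y - x)‖ ‖x + (1:ℝ) • (y - x)‖ := by
      constructor
      · simpa using hx
      · simpa using (not_le.1 hy).le
    obtain ⟨s, hs, hs1⟩ := hm h1
    have hz := hu.norm_sub_le (x := x) (y := x + s • (y - x)) (by simpa using hx)
      (by simpa using le_of_eq hs1)
    rw [h0 _ hs1, sub_zero] at hz
    refine hz.trans ?_
    gcongr
    rw [show x - (x + s • (y - x)) = s • (x - y) by rw [smul_sub, smul_sub]; abel, norm_smul,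
      Real.norm_of_nonneg hs.1]
    have := norm_nonneg (x - y)
    nlinarith [hs.2]
  apply LipschitzWith.of_dist_le_mul
  intro x y
  rw [dist_eq_norm, dist_eq_norm]
  by_cases hx : ‖x‖ ≤ 1 <;> by_cases hy : ‖y‖ ≤ 1
  · simp only [hx, hy, if_true]
    exact hu.norm_sub_le (by simpa using hx) (by simpa using hy)
  · simp only [hx, hy, if_true, if_false, sub_zero]
    exact key x y hx hy
  · simp only [hx, hy, if_true, if_false, zero_sub, norm_neg]
    rw [norm_sub_rev]
    exact key y x hy hx
  · simp only [hx, hy, if_false, sub_zero, norm_zero]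
    positivity

/-- No `C¹` retraction of the ball onto the sphere (Milnor-Rogers argument). -/
lemma aux_no_retraction (n : ℕ) (r : EuclideanSpace ℝ (Fin n) → EuclideanSpace ℝ (Fin n))
    (hr : ContDiff ℝ 1 r) (h1 : ∀ x, ‖x‖ ≤ 1 → ‖r x‖ = 1) (h2 : ∀ x, ‖x‖ = 1 → r x = x) :
    False := by
  let E := EuclideanSpace ℝ (Fin n)
  let u : E → E := fun x => r x - x
  have hu : ContDiff ℝ 1 u := hr.sub contDiff_id
  obtain ⟨K, hK⟩ := hu.contDiffOn.exists_lipschitzOnWith (s := Metric.closedBall (0:E) 1)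
    one_ne_zero (convex_closedBall _ _) (isCompact_closedBall _ _)
  have hL := aux_lip u K hK (fun x hx => by simp [u, h2 x hx])
  let A : E → E →L[ℝ] E := fun x => fderiv ℝ u x
  have hA : Continuous A := hu.continuous_fderiv one_ne_zero
  obtain ⟨C, hC⟩ := (isCompact_closedBall (0:E) 1).exists_bound_of_continuousOn hA.continuousOn
  -- positivity of the determinant near the identity
  have hdet : ∀ᶠ T : E →L[ℝ] E in 𝓝 1, 0 < T.det := by
    apply (ContinuousLinearMap.continuous_det (𝕜 := ℝ) (E := E)).continuousAt.eventually
    apply lt_mem_nhds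
    have : (1 : E →L[ℝ] E).det = 1 := by
      change LinearMap.det (LinearMap.id : E →ₗ[ℝ] E) = 1
      exact LinearMap.det_id
    change 0 < (1 : E →L[ℝ] E).det
    rw [this]; exact one_pos
  obtain ⟨δ, hδ, hδ2⟩ := Metric.eventually_nhds_iff.1 hdet
  obtain ⟨ε, hε, hε1, hεK, hεC⟩ : ∃ ε : ℝ, 0 < ε ∧ ε < 1 ∧ ε * K < 1 ∧ ε * C < δ := by
    have e1 : ∀ᶠ ε : ℝ in 𝓝[>] 0, ε < 1 :=
      nhdsWithin_le_nhds (gt_mem_nhds one_pos)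
    have e2 : ∀ᶠ ε : ℝ in 𝓝[>] 0, ε * K < 1 := by
      apply nhdsWithin_le_nhds
      have : ContinuousAt (fun ε : ℝ => ε * K) 0 := by fun_prop
      exact this.eventually (gt_mem_nhds (by simp))
    have e3 : ∀ᶠ ε : ℝ in 𝓝[>] 0, ε * C < δ := by
      apply nhdsWithin_le_nhds
      have : ContinuousAt (fun ε : ℝ => ε * C) 0 := by fun_prop
      exact this.eventually (gt_mem_nhds (by simpa using hδ))
    have e0 : ∀ᶠ ε : ℝ in 𝓝[>] 0, 0 < ε := eventually_mem_nhdsWithin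
    exact (e0.and (e1.and (e2.and e3))).exists
  have hC0 : 0 ≤ C := (norm_nonneg _).trans (hC 0 (by simp))
  -- the integral for small `t`
  have hint : ∀ t : ℝ, MeasureTheory.IntegrableOn (fun x => (1 + t • A x).det)
      (Metric.ball (0:E) 1) := by
    intro t
    refine MeasureTheory.IntegrableOn.mono_set ?_ Metric.ball_subset_closedBall
    apply ContinuousOn.integrableOn_compact (isCompact_closedBall _ _)
    apply Continuous.continuousOn
    exact ContinuousLinearMap.continuous_det.comp (by fun_prop)
  have hsmall : ∀ t : ℝ, 0 < t → t ≤ ε → ∫ x in Metric.ball (0:E) 1, (1 + t • A x).det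
      = MeasureTheory.volume.real (Metric.ball (0:E) 1) := by
    intro t ht htε
    have htK : t * K < 1 := lt_of_le_of_lt (by gcongr) hεK
    have htC : t * C < δ := lt_of_le_of_lt (by gcongr) hεC
    have hbij := aux_bij _ K hL t ht htK
    set U : E → E := fun x => @ite _ (‖x‖ ≤ 1) (Classical.dec _) (u x) 0 with hU
    have hUin : ∀ x, ‖x‖ ≤ 1 → U x = u x := fun x hx => by simp [hU, hx]
    have hUout : ∀ x, 1 ≤ ‖x‖ → U x = 0 := by
      intro x hx
      rcases hx.eq_or_lt with h | h
      · rw [hUin x h.ge]; simp [u, h2 x h.symm]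
      · simp [hU, not_le.2 h]
    have himage : (fun x => x + t • u x) '' Metric.ball (0:E) 1 = Metric.ball 0 1 := by
      ext y
      simp only [mem_image, Metric.mem_ball, dist_zero_right]
      constructor
      · rintro ⟨x, hx, rfl⟩
        have : x + t • u x = (1 - t) • x + t • r x := by
          simp only [u, smul_sub, sub_smul, one_smul]; abel
        rw [this]
        calc _ ≤ ‖(1 - t) • x‖ + ‖t • r x‖ := norm_add_le _ _
          _ = (1 - t) * ‖x‖ + t * 1 := by
            rw [norm_smul, norm_smul, h1 x hx.le, Real.norm_of_nonneg ht.le,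
              Real.norm_of_nonneg (by linarith)]
          _ < 1 := by nlinarith
      · intro hy
        obtain ⟨x, hx⟩ := hbij.2 y
        have hx' : x + t • U x = y := hx
        have hxl : ‖x‖ < 1 := by
          by_contra hcon
          rw [hUout x (not_lt.1 hcon), smul_zero, add_zero] at hx'
          exact hcon (hx' ▸ hy)
        refine ⟨x, hxl, ?_⟩
        rw [← hUin x hxl.le]; exact hx'
    have hinj : InjOn (fun x => x + t • u x) (Metric.ball (0:E) 1) := by
      intro x hx y hy hxy
      apply hbij.1
      simp only [Metric.mem_ball, dist_zero_right] at hx hy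
      change x + t • U x = y + t • U y
      rw [hUin x hx.le, hUin y hy.le]; exact hxy
    have hder : ∀ x ∈ Metric.ball (0:E) 1, HasFDerivWithinAt (fun x => x + t • u x)
        (1 + t • A x) (Metric.ball (0:E) 1) x := by
      intro x _
      have hd : HasFDerivAt u (A x) x := (hu.differentiable one_ne_zero x).hasFDerivAt
      exact ((hasFDerivAt_id x).add (hd.const_smul t)).hasFDerivWithinAt
    have hcv := MeasureTheory.integral_image_eq_integral_abs_det_fderiv_smul
      MeasureTheory.volume Metric.isOpen_ball.measurableSet hder hinj (fun _ => (1:ℝ))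
    rw [himage] at hcv
    simp only [smul_eq_mul, mul_one, MeasureTheory.integral_const,
      MeasureTheory.measureReal_restrict_apply_univ] at hcv
    rw [hcv]
    apply MeasureTheory.setIntegral_congr_fun Metric.isOpen_ball.measurableSet
    intro x hx
    have hpos : 0 < (1 + t • A x).det := by
      apply hδ2
      rw [dist_eq_norm, add_sub_cancel_left, norm_smul, Real.norm_of_nonneg ht.le]
      refine lt_of_le_of_lt ?_ htC
      gcongr
      exact hC x (Metric.ball_subset_closedBall hx)
    exact (abs_of_pos hpos).symm
  -- interpolation
  let v : Fin (n+1) → ℝ := fun i => ε / ((i:ℕ) + 1)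
  have hv : Function.Injective v := by
    intro i j hij
    have hi : (0:ℝ) < (i:ℕ) + 1 := by positivity
    have hj : (0:ℝ) < (j:ℕ) + 1 := by positivity
    have : ε / ((i:ℕ) + 1) = ε / ((j:ℕ) + 1) := hij
    rw [div_eq_div_iff hi.ne' hj.ne'] at this
    have h3 := mul_left_cancel₀ hε.ne' this
    have h4 : ((i:ℕ):ℝ) = (j:ℕ) := by linarith
    exact Fin.ext (by exact_mod_cast h4)
  obtain ⟨c, hc1, hc⟩ := aux_det_interp n v hv
  have hfin : ∫ x in Metric.ball (0:E) 1, (1 + A x).det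
      = MeasureTheory.volume.real (Metric.ball (0:E) 1) := by
    calc ∫ x in Metric.ball (0:E) 1, (1 + A x).det
        = ∫ x in Metric.ball (0:E) 1, ∑ i, c i * (1 + v i • A x).det := by
          congr 1; funext x; exact hc (A x)
      _ = ∑ i, ∫ x in Metric.ball (0:E) 1, c i * (1 + v i • A x).det := by
          apply MeasureTheory.integral_finsetSum
          intro i _
          exact (hint (v i)).const_mul (c i)
      _ = ∑ i, c i * MeasureTheory.volume.real (Metric.ball (0:E) 1) := by
          refine Finset.sum_congr rfl fun i _ => ?_
          rw [MeasureTheory.integral_const_mul, hsmall (v i) (by positivity)]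
          apply div_le_self hε.le
          have : (0:ℝ) ≤ (i:ℕ) := by positivity
          linarith
      _ = _ := by rw [← Finset.sum_mul, hc1, one_mul]
  have hzero : ∫ x in Metric.ball (0:E) 1, (1 + A x).det = 0 := by
    rw [MeasureTheory.setIntegral_congr_fun (g := fun _ => (0:ℝ))
      Metric.isOpen_ball.measurableSet]
    · simp
    intro x hx
    by_contra hne
    have hne' : (1 + A x).det ≠ 0 := hne
    have hrd : HasFDerivAt r (1 + A x) x := by
      have hd : HasFDerivAt u (A x) x := (hu.differentiable one_ne_zero x).hasFDerivAt
      have := (hasFDerivAt_id x).add hd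
      refine this.congr_of_eventuallyEq (Eventually.of_forall fun y => ?_)
      simp [u]
    have hsq : (fun y => ‖r y‖ ^ 2) =ᶠ[𝓝 x] fun _ => (1:ℝ) := by
      filter_upwards [Metric.isOpen_ball.mem_nhds hx] with y hy
      rw [h1 y (by simpa using (Metric.mem_ball.1 hy).le)]; norm_num
    have hd1 := hrd.norm_sq
    have hd2 : HasFDerivAt (fun y => ‖r y‖ ^ 2) (0 : E →L[ℝ] ℝ) x :=
      (hasFDerivAt_const (1:ℝ) x).congr_of_eventuallyEq hsq
    have heq := hd1.unique hd2
    let e := ContinuousLinearMap.toContinuousLinearEquivOfDetNeZero (1 + A x) hne'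
    have hw : (1 + A x) (e.symm (r x)) = r x := by
      have := e.apply_symm_apply (r x)
      exact this
    have hz := congrArg (fun T : E →L[ℝ] ℝ => T (e.symm (r x))) heq
    simp only [smul_apply, ContinuousLinearMap.comp_apply, hw] at hz
    have hn := h1 x (by simpa using (Metric.mem_ball.1 hx).le)
    simp [hn] at hz
  rw [hzero] at hfin
  have hp : 0 < MeasureTheory.volume.real (Metric.ball (0:E) 1) := by
    apply ENNReal.toReal_pos
    · exact (Metric.measure_ball_pos _ _ one_pos).ne'
    · exact (MeasureTheory.measure_ball_lt_top).ne
  linarith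

/-- Tietze extension of a function continuous on a closed set. -/
lemma aux_tietze (n : ℕ) (S : Set (EuclideanSpace ℝ (Fin n))) (hS : IsClosed S)
    (f : EuclideanSpace ℝ (Fin n) → EuclideanSpace ℝ (Fin n)) (hf : ContinuousOn f S) :
    ∃ g : EuclideanSpace ℝ (Fin n) → EuclideanSpace ℝ (Fin n), Continuous g ∧ ∀ x ∈ S, g x = f x := by
  have : TietzeExtension.{0, 0} (EuclideanSpace ℝ (Fin n)) := TietzeExtension.of_tvs ℝ
  obtain ⟨g, hg⟩ := ContinuousMap.exists_restrict_eq hS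
    (⟨S.domRestrict f, continuousOn_iff_continuous_domRestrict.1 hf⟩ :
      C(S, EuclideanSpace ℝ (Fin n)))
  refine ⟨g, g.continuous, fun x hx => ?_⟩
  exact congrArg (fun h : C(S, EuclideanSpace ℝ (Fin n)) => h ⟨x, hx⟩) hg

/-- A lower bound for the norm of a nonvanishing continuous map on a compact set. -/
lemma aux_lower {E : Type*} [NormedAddCommGroup E] (S : Set E) (hS : IsCompact S) (g : E → E)
    (hg : ContinuousOn g S) (h0 : ∀ x ∈ S, g x ≠ 0) : ∃ δ > 0, ∀ x ∈ S, δ ≤ ‖g x‖ := by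
  rcases S.eq_empty_or_nonempty with rfl | hne
  · exact ⟨1, one_pos, by simp⟩
  · obtain ⟨x, hx, hmin⟩ := hS.exists_isMinOn hne hg.norm
    exact ⟨‖g x‖, norm_pos_iff.2 (h0 x hx), fun y hy => hmin hy⟩

/-- A form of Brouwer's theorem: maps close to the identity on the unit ball have a zero. -/
lemma aux_zero (n : ℕ) (g : EuclideanSpace ℝ (Fin n) → EuclideanSpace ℝ (Fin n))
    (hg : ContinuousOn g (Metric.closedBall 0 1)) (hc : ∀ x, ‖x‖ ≤ 1 → ‖g x - x‖ ≤ 1/2) :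
    ∃ x, ‖x‖ ≤ 1 ∧ g x = 0 := by
  by_contra hno
  push Not at hno
  obtain ⟨δ, hδ, hδg⟩ := aux_lower (Metric.closedBall 0 1) (isCompact_closedBall _ _) g hg
    (fun x hx => hno x (by simpa using hx))
  obtain ⟨G, hG, hGg⟩ := aux_tietze n _ Metric.isClosed_closedBall g hg
  have hm : 0 < min δ (1/4) := lt_min hδ (by norm_num)
  obtain ⟨p, hp, hpG, -⟩ := hG.exists_contDiff_approx 1 (ε := fun _ => min δ (1/4))
    continuous_const (fun _ => hm)
  have hpg : ∀ x, ‖x‖ ≤ 1 → ‖p x - g x‖ < min δ (1/4) := by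
    intro x hx
    have := hpG x
    rwa [dist_eq_norm, hGg x (by simpa using hx)] at this
  have hp0 : ∀ x, ‖x‖ ≤ 1 → p x ≠ 0 := by
    intro x hx h0
    have h1 := (hpg x hx).trans_le (min_le_left _ _)
    rw [h0, zero_sub, norm_neg] at h1
    exact absurd (hδg x (by simpa using hx)) (not_le.2 h1)
  have hpx : ∀ x, ‖x‖ ≤ 1 → ‖p x - x‖ ≤ 3/4 := by
    intro x hx
    have h1 := (hpg x hx).trans_le (min_le_right _ _)
    have h2 := hc x hx
    have h3 : p x - x = (p x - g x) + (g x - x) := by abel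
    rw [h3]
    linarith [norm_add_le (p x - g x) (g x - x)]
  let χ : ContDiffBump (0 : EuclideanSpace ℝ (Fin n)) := ⟨4/5, 1, by norm_num, by norm_num⟩
  let q : EuclideanSpace ℝ (Fin n) → EuclideanSpace ℝ (Fin n) := fun x => x + χ x • (p x - x)
  have hq : ContDiff ℝ 1 q := by
    have : ContDiff ℝ 1 (χ : EuclideanSpace ℝ (Fin n) → ℝ) := χ.contDiff
    exact contDiff_id.add (this.smul (hp.sub contDiff_id))
  have hout : ∀ x, 1 ≤ ‖x‖ → q x = x := by
    intro x hx
    have : χ x = 0 := χ.zero_of_le_dist (by simpa [χ] using hx)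
    simp [q, this]
  have hq0 : ∀ x, q x ≠ 0 := by
    intro x hx0
    by_cases h1 : ‖x‖ ≤ 1
    · by_cases h2 : ‖x‖ ≤ 4/5
      · have : χ x = 1 := χ.one_of_mem_closedBall (by simpa [χ] using h2)
        simp only [q, this, one_smul, add_sub_cancel] at hx0
        exact hp0 x h1 hx0
      · have h3 : ‖x‖ = ‖χ x • (p x - x)‖ := by
          rw [← norm_neg x]; congr 1
          exact neg_eq_of_add_eq_zero_right hx0
        rw [norm_smul, Real.norm_of_nonneg χ.nonneg] at h3
        have h4 := hpx x h1
        have h5 : χ x ≤ 1 := χ.le_one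
        have h6 : 0 ≤ χ x := χ.nonneg
        nlinarith [norm_nonneg (p x - x)]
    · rw [hout x (not_le.1 h1).le] at hx0
      simp [hx0] at h1
  apply aux_no_retraction n (fun x => ‖q x‖⁻¹ • q x)
  · exact ((hq.norm ℝ hq0).inv (fun x => norm_ne_zero_iff.2 (hq0 x))).smul hq
  · intro x _
    rw [norm_smul, norm_inv, norm_norm]
    exact inv_mul_cancel₀ (norm_ne_zero_iff.2 (hq0 x))
  · intro x hx
    simp only [hout x hx.ge, hx, inv_one, one_smul]

/-- Invariance of domain, in the form needed here (following Tao's presentation of Kulpa's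
argument). -/
lemma aux_inv_domain (n : ℕ) (f : EuclideanSpace ℝ (Fin n) → EuclideanSpace ℝ (Fin n))
    (hf : Continuous f) (hinj : Function.Injective f) : range f ∈ 𝓝 (f 0) := by
  let E := EuclideanSpace ℝ (Fin n)
  by_contra hnot
  let B : Set E := Metric.closedBall 0 1
  have hB : IsCompact B := isCompact_closedBall _ _
  let S : Set E := f '' B
  have hScpt : IsCompact S := hB.image hf
  have hSnot : S ∉ 𝓝 (f 0) := fun h => hnot (mem_of_superset h (image_subset_range _ _))
  -- the inverse of `f` on `S`
  obtain ⟨G, hG, hGf⟩ : ∃ G : E → E, Continuous G ∧ ∀ x ∈ B, G (f x) = x := by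
    have hcont : ContinuousOn (Function.invFun f) S := by
      have hemb : IsEmbedding (B.domRestrict f) := by
        have : CompactSpace B := isCompact_iff_compactSpace.1 hB
        refine (Continuous.isClosedEmbedding ?_ ?_).isEmbedding
        · exact hf.comp continuous_subtype_val
        · exact fun a b hab => Subtype.ext (hinj hab)
      rw [continuousOn_iff_isClosed]
      intro t ht
      refine ⟨f '' (t ∩ B), ((hB.inter_left ht).image hf).isClosed, ?_⟩
      ext y
      constructor
      · rintro ⟨hy, x, hx, rfl⟩
        have hy' : Function.invFun f (f x) ∈ t := hy
        rw [Function.leftInverse_invFun hinj x] at hy'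
        exact ⟨⟨x, ⟨hy', hx⟩, rfl⟩, ⟨x, hx, rfl⟩⟩
      · rintro ⟨⟨x, hx, rfl⟩, hS⟩
        refine ⟨?_, hS⟩
        change Function.invFun f (f x) ∈ t
        rw [Function.leftInverse_invFun hinj x]
        exact hx.1
    obtain ⟨G, hG, h⟩ := aux_tietze n S hScpt.isClosed _ hcont
    refine ⟨G, hG, fun x hx => ?_⟩
    rw [h (f x) ⟨x, hx, rfl⟩]
    exact Function.leftInverse_invFun hinj x
  have hG0 : G (f 0) = 0 := hGf 0 (by simp [B])
  obtain ⟨ε, hε, hεG⟩ : ∃ ε > 0, ∀ y, ‖y - f 0‖ ≤ 2 * ε → ‖G y‖ ≤ 1/10 := by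
    have h1 : ∀ᶠ y in 𝓝 (f 0), ‖G y‖ < 1/10 := by
      exact (isOpen_lt hG.norm continuous_const).mem_nhds (by simp [hG0])
    obtain ⟨η, hη, h2⟩ := Metric.eventually_nhds_iff.1 h1
    refine ⟨η/3, by positivity, fun y hy => (h2 ?_).le⟩
    rw [dist_eq_norm]; linarith
  obtain ⟨c, hcS, hcε⟩ : ∃ c, c ∉ S ∧ ‖c - f 0‖ < ε := by
    by_contra hcon
    push Not at hcon
    apply hSnot
    filter_upwards [Metric.ball_mem_nhds (f 0) hε] with y hy
    by_contra hyS
    have := hcon y hyS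
    rw [Metric.mem_ball, dist_eq_norm] at hy
    linarith
  let S1 : Set E := S ∩ {y | ε ≤ ‖y - c‖}
  have hS1 : IsCompact S1 := hScpt.inter_right
    (isClosed_le continuous_const (by fun_prop))
  obtain ⟨δ, hδ, hδG⟩ := aux_lower S1 hS1 G hG.continuousOn (by
    rintro y ⟨⟨x, hx, rfl⟩, hy⟩ h0
    rw [hGf x hx] at h0
    subst h0
    have hy' : ε ≤ ‖f 0 - c‖ := hy
    rw [norm_sub_rev] at hy'
    linarith)
  have hm : 0 < min (δ/2) (1/10) := lt_min (by positivity) (by norm_num)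
  obtain ⟨P, hP, hPG, -⟩ := hG.exists_contDiff_approx 1 (ε := fun _ => min (δ/2) (1/10))
    continuous_const (fun _ => hm)
  obtain ⟨w, hw, hwS⟩ : ∃ w : E, ‖w‖ < min (δ/2) (1/10) ∧ w ∉ P '' Metric.sphere c ε := by
    have hnull : MeasureTheory.volume (P '' Metric.sphere c ε) = 0 :=
      MeasureTheory.addHaar_image_eq_zero_of_differentiableOn_of_addHaar_eq_zero _
        (hP.differentiable one_ne_zero).differentiableOn
        (MeasureTheory.Measure.addHaar_sphere_of_ne_zero _ _ hε.ne')
    by_contra hcon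
    push Not at hcon
    have hsub : Metric.ball (0:E) (min (δ/2) (1/10)) ⊆ P '' Metric.sphere c ε := by
      intro w hw
      exact hcon w (by simpa using hw)
    have h1 := MeasureTheory.measure_mono_null hsub hnull
    exact (Metric.measure_ball_pos MeasureTheory.volume (0:E) hm).ne' h1
  let Q : E → E := fun y => P y - w
  have hQG : ∀ y, ‖Q y - G y‖ < min δ (1/5) := by
    intro y
    have h1 := hPG y
    rw [dist_eq_norm] at h1
    have h2 : Q y - G y = (P y - G y) - w := by simp only [Q]; abel
    rw [h2]
    have h3 := norm_sub_le (P y - G y) w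
    have a1 := min_le_left (δ/2) (1/10:ℝ)
    have a2 := min_le_right (δ/2) (1/10:ℝ)
    apply lt_min <;> linarith
  let Φ : E → E := fun y => c + max (ε / ‖y - c‖) 1 • (y - c)
  have hyc : ∀ y ∈ S, 0 < ‖y - c‖ := by
    intro y hy
    rw [norm_pos_iff, sub_ne_zero]
    rintro rfl
    exact hcS hy
  have hΦ1 : ∀ y ∈ S, ε ≤ ‖y - c‖ → Φ y = y := by
    intro y hy h
    have : ε / ‖y - c‖ ≤ 1 := (div_le_one (hyc y hy)).2 h
    simp [Φ, max_eq_right this]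
  have hΦ2 : ∀ y ∈ S, ‖y - c‖ < ε → ‖Φ y - c‖ = ε := by
    intro y hy h
    have h1 : 1 ≤ ε / ‖y - c‖ := (one_le_div (hyc y hy)).2 h.le
    simp only [Φ, max_eq_left h1, add_sub_cancel_left, norm_smul]
    rw [Real.norm_of_nonneg (by positivity), div_mul_cancel₀ _ (hyc y hy).ne']
  have hΦc : ContinuousOn Φ S := by
    have hdiv : ContinuousOn (fun y : E => ε / ‖y - c‖) S :=
      ContinuousOn.div continuousOn_const (by fun_prop) (fun y hy => (hyc y hy).ne')
    have hmax : ContinuousOn (fun y : E => max (ε / ‖y - c‖) 1) S :=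
      ContinuousOn.sup hdiv continuousOn_const
    have hid : ContinuousOn (fun y : E => y - c) S := by fun_prop
    exact continuousOn_const.add (hmax.smul hid)
  obtain ⟨x, hx, hx0⟩ := aux_zero n (fun x => Q (Φ (f x))) (by
      have hQc : Continuous Q := hP.continuous.sub continuous_const
      exact hQc.comp_continuousOn (hΦc.comp hf.continuousOn (mapsTo_image f B))) (by
      intro x hx
      have hxB : x ∈ B := by simpa [B] using hx
      have hfS : f x ∈ S := ⟨x, hxB, rfl⟩
      have hq := (hQG (Φ (f x))).trans_le (min_le_right _ _)
      rcases le_or_gt ε ‖f x - c‖ with h | h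
      · simp only [hΦ1 _ hfS h] at hq ⊢
        rw [hGf x hxB] at hq
        linarith
      · have h1 : ‖G (Φ (f x))‖ ≤ 1/10 := by
          apply hεG
          have h2 := hΦ2 _ hfS h
          have h3 : Φ (f x) - f 0 = (Φ (f x) - c) + (c - f 0) := by abel
          rw [h3]
          linarith [norm_add_le (Φ (f x) - c) (c - f 0)]
        have h4 : ‖x‖ ≤ 1/10 := by
          rw [← hGf x hxB]
          apply hεG
          have h3 : f x - f 0 = (f x - c) + (c - f 0) := by abel
          rw [h3]
          linarith [norm_add_le (f x - c) (c - f 0)]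
        have h5 : Q (Φ (f x)) - x = (Q (Φ (f x)) - G (Φ (f x))) + (G (Φ (f x)) - x) := by abel
        change ‖Q (Φ (f x)) - x‖ ≤ 1/2
        rw [h5]
        have h6 := norm_add_le (Q (Φ (f x)) - G (Φ (f x))) (G (Φ (f x)) - x)
        have h7 := norm_sub_le (G (Φ (f x))) x
        linarith)
  have hxB : x ∈ B := by simpa [B] using hx
  have hfS : f x ∈ S := ⟨x, hxB, rfl⟩
  have hxzero : Q (Φ (f x)) = 0 := hx0
  rcases le_or_gt ε ‖f x - c‖ with h | h
  · rw [hΦ1 _ hfS h] at hxzero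
    have h1 := hδG (f x) ⟨hfS, h⟩
    have h2 := (hQG (f x)).trans_le (min_le_left _ _)
    rw [hxzero, zero_sub, norm_neg] at h2
    linarith
  · apply hwS
    refine ⟨Φ (f x), ?_, ?_⟩
    · rw [Metric.mem_sphere, dist_eq_norm]; exact hΦ2 _ hfS h
    · exact (sub_eq_zero.1 hxzero)

/-- Local form of invariance of domain for maps between `Fin n → ℝ` and a space locally
homeomorphic to it. -/
lemma aux_inv_domain_manifold (n : ℕ) {N : Type} [TopologicalSpace N] (hN : IsTopManifold N n)
    (k : (Fin n → ℝ) → N) (hk : Continuous k) (hinj : Function.Injective k) (a : Fin n → ℝ) :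
    range k ∈ 𝓝 (k a) := by
  obtain ⟨V, hyV, hV, ⟨ψ⟩⟩ := hN.2.2 (k a)
  let e : EuclideanSpace ℝ (Fin n) ≃ₜ (Fin n → ℝ) :=
    (EuclideanSpace.equiv (Fin n) ℝ).toHomeomorph
  let k' : EuclideanSpace ℝ (Fin n) → N := k ∘ e
  have hk' : Continuous k' := hk.comp e.continuous
  have hka : k' (e.symm a) = k a := by simp [k']
  obtain ⟨r, hr, hrV⟩ := Metric.mem_nhds_iff.1
    ((hV.preimage hk').mem_nhds (show e.symm a ∈ k' ⁻¹' V by simpa [hka] using hyV))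
  let b := OpenPartialHomeomorph.univBall (e.symm a) r
  have hb : ∀ v, k' (b v) ∈ V := by
    intro v
    apply hrV
    have h1 := b.map_source (x := v) (by simp [b])
    rwa [OpenPartialHomeomorph.univBall_target _ hr] at h1
  let f : EuclideanSpace ℝ (Fin n) → EuclideanSpace ℝ (Fin n) :=
    fun v => e.symm (ψ ⟨k' (b v), hb v⟩)
  have hbc : Continuous b := OpenPartialHomeomorph.continuous_univBall _ _
  have hfc : Continuous f :=
    e.symm.continuous.comp (ψ.continuous.comp ((hk'.comp hbc).subtype_mk hb))
  have hfi : Function.Injective f := by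
    intro v w hvw
    have h1 := ψ.injective (e.symm.injective hvw)
    have h2 := e.injective (hinj (congrArg Subtype.val h1))
    exact b.injOn (by simp [b]) (by simp [b]) h2
  have hrange := aux_inv_domain n f hfc hfi
  have hb0 : k' (b 0) = k a := by
    simp only [b, OpenPartialHomeomorph.univBall_apply_zero, hka]
  have hpre : ∀ᶠ y : V in 𝓝 ⟨k a, hyV⟩, e.symm (ψ y) ∈ range f := by
    have hc : ContinuousAt (fun y : V => e.symm (ψ y)) ⟨k a, hyV⟩ :=
      (e.symm.continuous.comp ψ.continuous).continuousAt
    apply hc.eventually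
    have : e.symm (ψ ⟨k a, hyV⟩) = f 0 := by
      simp only [f, hb0]
    change ∀ᶠ y in 𝓝 (e.symm (ψ ⟨k a, hyV⟩)), y ∈ range f
    rw [this]; exact hrange
  have hsub : {y : V | y.1 ∈ range k} ∈ 𝓝 (⟨k a, hyV⟩ : V) := by
    filter_upwards [hpre] with y hy
    obtain ⟨v, hv⟩ := hy
    have h1 := ψ.injective (e.symm.injective hv)
    exact ⟨e (b v), congrArg Subtype.val h1⟩
  have h3 := hV.isOpenMap_subtype_val.image_mem_nhds hsub
  refine mem_of_superset h3 ?_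
  rintro _ ⟨y, hy, rfl⟩
  exact hy

theorem statement9 (m n : ℕ) (M N : Type) [TopologicalSpace M] [TopologicalSpace N]
    (hM : IsTopManifold M m) (hN : IsTopManifold N n) (hconn : ConnectedSpace N)
    (F : Foliation (M × N) n m) (D : Set M) (hD : Dense D)
    (hleaf : ∀ d ∈ D, F.IsLeaf {z : M × N | z.1 = d}) :
    ∀ x : M, F.IsLeaf {z : M × N | z.1 = x} := by
  have : T2Space M := hM.2.1
  let s : ∀ i, (Fin n → ℝ) × (Fin m → ℝ) → M × N := fun i p => ((F.chart i).symm p).1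
  have hs : ∀ i, Continuous (s i) := fun i =>
    continuous_subtype_val.comp (F.chart i).symm.continuous
  have hso : ∀ i, IsOpenMap (s i) := fun i =>
    (F.isOpen i).isOpenMap_subtype_val.comp (F.chart i).symm.isOpenMap
  have hsinj : ∀ i, Function.Injective (s i) := fun i =>
    Subtype.val_injective.comp (F.chart i).symm.injective
  have hfib : ∀ i c, F.plaqueFibre i c = range (fun a => s i (a, c)) := by
    intro i c
    ext w
    constructor
    · rintro ⟨hw, hw2⟩
      refine ⟨(F.chart i ⟨w, hw⟩).1, ?_⟩
      have : ((F.chart i ⟨w, hw⟩).1, c) = F.chart i ⟨w, hw⟩ := by rw [← hw2]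
      simp only [s, this, Homeomorph.symm_apply_apply]
    · rintro ⟨a, rfl⟩
      refine ⟨((F.chart i).symm (a, c)).2, ?_⟩
      simp [s]
  have hsame : ∀ i a b c, F.samePlaque (s i (a, c)) (s i (b, c)) := by
    intro i a b c
    have hpc : IsPreconnected (F.plaqueFibre i c) := by
      rw [hfib]
      exact isPreconnected_range ((hs i).comp (by fun_prop))
    have ha : s i (a, c) ∈ F.plaqueFibre i c := by rw [hfib]; exact ⟨a, rfl⟩
    have hb : s i (b, c) ∈ F.plaqueFibre i c := by rw [hfib]; exact ⟨b, rfl⟩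
    refine ⟨_, ⟨i, c, s i (a, c), ha, rfl⟩, mem_connectedComponentIn ha, ?_⟩
    rw [hpc.connectedComponentIn ha]; exact hb
  -- the first coordinate is constant along plaques
  have hconst : ∀ i a b c, (s i (a, c)).1 = (s i (b, c)).1 := by
    intro i a b c
    have hdense : Dense ((fun p => (s i p).1) ⁻¹' D) :=
      hD.preimage (isOpenMap_fst.comp (hso i))
    have heq : (fun p => (s i p).1) = fun p => (s i (b, p.2)).1 := by
      refine Continuous.ext_on hdense (continuous_fst.comp (hs i))
        (continuous_fst.comp ((hs i).comp (by fun_prop))) ?_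
      rintro ⟨a', c'⟩ hp
      have hp' : (s i (a', c')).1 ∈ D := hp
      obtain ⟨z, hz⟩ := hleaf _ hp'
      have h1 : s i (a', c') ∈ {w | F.leafRel z w} := by rw [← hz]; rfl
      have h2 : s i (b, c') ∈ {w | F.leafRel z w} :=
        Relation.EqvGen.trans _ _ _ h1 (Relation.EqvGen.rel _ _ (hsame i a' b c'))
      rw [← hz] at h2
      exact Eq.symm h2
    exact congrFun heq (a, c)
  have hplaque : ∀ z w, F.samePlaque z w → z.1 = w.1 := by
    rintro z w ⟨P, ⟨i, c, z0, hz0, rfl⟩, hz, hw⟩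
    have hz' := connectedComponentIn_subset _ _ hz
    have hw' := connectedComponentIn_subset _ _ hw
    rw [hfib] at hz' hw'
    obtain ⟨a, rfl⟩ := hz'
    obtain ⟨b, rfl⟩ := hw'
    exact hconst i a b c
  have hrel : ∀ z w, F.leafRel z w → z.1 = w.1 := by
    intro z w h
    induction h with
    | rel _ _ h => exact hplaque _ _ h
    | refl _ => rfl
    | symm _ _ _ ih => exact ih.symm
    | trans _ _ _ _ _ ih1 ih2 => exact ih1.trans ih2
  intro x
  have hloc : ∀ y : N, ∀ᶠ y' in 𝓝 y, F.leafRel (x, y) (x, y') := by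
    intro y
    obtain ⟨i, hi⟩ := F.covers (x, y)
    obtain ⟨⟨a, c⟩, hac⟩ : ∃ p, s i p = (x, y) := ⟨F.chart i ⟨(x, y), hi⟩, by simp [s]⟩
    let k : (Fin n → ℝ) → N := fun v => (s i (v, c)).2
    have hk1 : ∀ v, s i (v, c) = (x, k v) := by
      intro v
      have h1 : (s i (v, c)).1 = x := by rw [hconst i v a c, hac]
      exact Prod.ext h1 rfl
    have hkc : Continuous k := continuous_snd.comp ((hs i).comp (by fun_prop))
    have hki : Function.Injective k := by
      intro v w hvw
      have h1 : s i (v, c) = s i (w, c) := by rw [hk1, hk1, hvw]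
      exact congrArg Prod.fst (hsinj i h1)
    have hka : k a = y := by simp only [k, hac]
    have hn := aux_inv_domain_manifold n hN k hkc hki a
    rw [hka] at hn
    filter_upwards [hn] with y' hy'
    obtain ⟨v, rfl⟩ := hy'
    rw [← hac, ← hk1]
    exact Relation.EqvGen.rel _ _ (hsame i a v c)
  obtain ⟨y0⟩ := hN.1
  refine ⟨(x, y0), ?_⟩
  let A : Set N := {y | F.leafRel (x, y0) (x, y)}
  have hA : IsClopen A := by
    constructor
    · rw [← isOpen_compl_iff, isOpen_iff_mem_nhds]
      intro y hy
      filter_upwards [hloc y] with y' hy' hcon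
      exact hy (Relation.EqvGen.trans _ _ _ hcon (Relation.EqvGen.symm _ _ hy'))
    · rw [isOpen_iff_mem_nhds]
      intro y hy
      filter_upwards [hloc y] with y' hy'
      exact Relation.EqvGen.trans _ _ _ hy hy'
  have hAu : A = univ := hA.eq_univ ⟨y0, Relation.EqvGen.refl _⟩
  ext ⟨x', y⟩
  constructor
  · intro h
    have hx : x' = x := h
    subst hx
    have : y ∈ A := by rw [hAu]; trivial
    exact this
  · intro h
    exact (hrel _ _ h).symm
end
end
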